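/- arXiv:2310.17337 — 4 statements merged into one kernel-verified Lean document; each statement's English description precedes it below -/
import Mathlib

section
/- If G is a connected graph that is not isomorphic to the 4-cycle C_4 and G has m edges, then the C_4-isolation number of G satisfies ι(G, C_4) ≤ (m + 1)/6. -/
/-!
Take a counterexample `G` with the fewest edges `m`. Choosing a set `D₀` of vertices and passing to
a subgraph `G'` which keeps all `4`-cycles not yet hit by `N[D₀]`, the theorem can be applied to
each component of `G'` except the components isomorphic to `C₄`. Every component `c` thus costs `6`
times the number of vertices chosen in it, which is at most `e(c) + φ(c)`, where `φ = 2` for a `C₄`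
and `φ = 1` for another component that still has a `4`-cycle to be hit; if nothing is left to be
hit, `φ = 0`, or even `φ = -4` when `c` has a `4`-cycle (`phi`, `combine`). By minimality
`m + 2 ≤ 6 |D₀| + e(G') + ∑ φ` whenever `G'` has fewer edges than `G` (`MinCounter.ineq`).

*Every edge lies in a `4`-cycle* (`MinCounter.inC4`). Deleting an edge that does not, with
`D₀ = ∅`, shows that it is a bridge with a `C₄` on one side (`MinCounter.pend`). If such a `C₄`
hangs at `v`, take `D₀ = {v}` and delete the edges at `v`. The hanging `C₄` accounts for its joining
edge and a refund of `4`; further hanging cycles need nothing; and any other component is joined to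
`v` by two edges, as these lie in `4`-cycles, which pays for its `φ ≤ 2`. This contradicts
minimality (`MinCounter.no_pend`).

*Bounding degrees*. Now take `D₀ = {v}` and delete all edges meeting `N[v]`. A component with a
`4`-cycle receives at least two edges from `N[v]`, so its load (the number of these edges) is at
least `φ`; minimality becomes `d(v) + ∑ (load - φ) ≤ 4`, with a further surplus if `v` lies in a
triangle (`MinCounter.charge`, `MinCounter.deg_load`). Hence `d(v) ≤ 4`. A vertex `h` with
`N(h) ⊆ N(v)` is an isolated component of load `d(h)` with `φ ≤ 0`, so `d(h) = d(v) = 2`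
(`MinCounter.subset`). Equality `d(v) = 4` forces such a configuration
(`MinCounter.deg_le_three`). With all degrees at most `3`, the same kind of argument improves
`φ ≤ load` to `2 φ ≤ load` (`MinCounter.two_phi_le`), and then the degrees in `N[v]` have sum at most
`8`, which excludes `d(v) = 3`. So `G` is connected with all degrees `2` and contains a `4`-cycle:
it is `C₄`, a contradiction (`not_minCounter`).
-/

open SimpleGraph

/-- `H` has a copy in `G`, i.e. `H` is isomorphic to a (not necessarily induced)
subgraph of `G`. -/
def HasCopy {W V : Type*} (H : SimpleGraph W) (G : SimpleGraph V) : Prop :=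
  ∃ f : H →g G, Function.Injective f

/-- The closed neighbourhood `N[D]` of a set of vertices `D` in `G`. -/
def closedNbhd {V : Type*} (G : SimpleGraph V) (D : Set V) : Set V :=
  D ∪ {v | ∃ u ∈ D, G.Adj u v}

/-- `D` is an `H`-isolating set of `G`: the subgraph of `G` induced on the complement
of `N[D]` contains no copy of `H`. -/
def IsIsolating {V W : Type*} (G : SimpleGraph V) (H : SimpleGraph W) (D : Set V) : Prop :=
  ¬ HasCopy H (G.induce (closedNbhd G D)ᶜ)

/-- The `H`-isolation number of `G`: the minimum cardinality of an `H`-isolating set. -/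
noncomputable def isolNum {V W : Type*} (G : SimpleGraph V) (H : SimpleGraph W) : ℕ :=
  sInf {n | ∃ D : Set V, IsIsolating G H D ∧ D.ncard = n}

/-- `cons(T, C_k)`: from `T` and `|V(T)|` pairwise disjoint copies of the cycle `C_k`,
join each vertex of `T` to one vertex of its own copy of `C_k` by a single edge. -/
def consGraph {α : Type*} (T : SimpleGraph α) (k : ℕ) :
    SimpleGraph (α ⊕ α × Fin k) :=
  SimpleGraph.fromRel (fun x y =>
    match x, y with
    | Sum.inl a, Sum.inl b => T.Adj a b
    | Sum.inl a, Sum.inr p => a = p.1 ∧ p.2.val = 0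
    | Sum.inr p, Sum.inr q => p.1 = q.1 ∧ (cycleGraph k).Adj p.2 q.2
    | _, _ => False)

/-- `G ∈ 𝒢ₖ`: `G` is isomorphic to `cons(T, C_k)` for some tree `T`. -/
def MemG {V : Type*} (G : SimpleGraph V) (k : ℕ) : Prop :=
  ∃ (n : ℕ) (T : SimpleGraph (Fin n)), T.IsTree ∧ Nonempty (G ≃g consGraph T k)

/-- The diamond graph `K₄⁻`, obtained from `K₄` by deleting one edge. -/
def diamondGraph : SimpleGraph (Fin 4) :=
  (completeGraph (Fin 4)).deleteEdges {s(0, 1)}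

/-- `C₄⁺`: a `4`-cycle with a pendant edge attached to one of its vertices. -/
def c4plus : SimpleGraph (Fin 5) :=
  SimpleGraph.fromEdgeSet {s(0, 1), s(1, 2), s(2, 3), s(3, 0), s(0, 4)}

universe u

/-! ### `4`-cycles and components -/

/-- The vertices `a, b, c, d` form, in this cyclic order, a (not necessarily induced)
`4`-cycle of `G`. -/
def C4 {V : Type u} (G : SimpleGraph V) (a b c d : V) : Prop :=
  G.Adj a b ∧ G.Adj b c ∧ G.Adj c d ∧ G.Adj d a ∧ a ≠ c ∧ b ≠ d

/-- One of the vertices `a, b, c, d` lies in the closed neighbourhood of `D`. -/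
def Hits {V : Type u} (G : SimpleGraph V) (D : Finset V) (a b c d : V) : Prop :=
  ∃ x, (x = a ∨ x = b ∨ x = c ∨ x = d) ∧ ∃ u ∈ D, u = x ∨ G.Adj u x

/-- The conclusion of the theorem for `G`, with an explicit isolating set. -/
def Good {V : Type u} (G : SimpleGraph V) : Prop :=
  ∃ D : Finset V, (∀ a b c d, C4 G a b c d → Hits G D a b c d) ∧
    6 * D.card ≤ G.edgeSet.ncard + 1

theorem C4.rot {V : Type u} {G : SimpleGraph V} {a b c d : V} (h : C4 G a b c d) :
    C4 G b c d a := by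
  obtain ⟨h1, h2, h3, h4, h5, h6⟩ := h
  exact ⟨h2, h3, h4, h1, h6, h5.symm⟩

theorem C4.mono {V : Type u} {G G' : SimpleGraph V} (hle : G' ≤ G) {a b c d : V}
    (h : C4 G' a b c d) : C4 G a b c d :=
  ⟨hle h.1, hle h.2.1, hle h.2.2.1, hle h.2.2.2.1, h.2.2.2.2.1, h.2.2.2.2.2⟩

theorem four_le_of_C4 {V : Type u} [Finite V] {G : SimpleGraph V} {a b c d : V}
    (h : C4 G a b c d) : 4 ≤ G.edgeSet.ncard := by
  classical
  obtain ⟨h1, h2, h3, h4, h5, h6⟩ := h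
  have hs : ((({s(a, b), s(b, c), s(c, d), s(d, a)} : Finset (Sym2 V)) : Set (Sym2 V))) ⊆
      G.edgeSet := by
    intro e he
    simp only [Finset.coe_insert, Finset.coe_singleton, Set.mem_insert_iff,
      Set.mem_singleton_iff] at he
    rcases he with rfl | rfl | rfl | rfl <;> simpa
  have hc : ({s(a, b), s(b, c), s(c, d), s(d, a)} : Finset (Sym2 V)).card = 4 := by
    have := h1.ne
    have := h2.ne
    have := h3.ne
    have := h4.ne
    rw [Finset.card_insert_of_notMem, Finset.card_insert_of_notMem,
      Finset.card_insert_of_notMem, Finset.card_singleton] <;>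
    simp only [Finset.mem_insert, Finset.mem_singleton, Sym2.eq_iff] <;> grind
  have := Set.ncard_le_ncard hs (Set.toFinite _)
  rw [Set.ncard_coe_finset, hc] at this
  exact this

theorem mk_eq_of_adj {V : Type u} {G : SimpleGraph V} {x y : V} (h : G.Adj x y) :
    G.connectedComponentMk x = G.connectedComponentMk y :=
  SimpleGraph.ConnectedComponent.sound h.reachable

/-- A set closed under adjacency contains the component of each of its vertices. -/
theorem mem_of_closed {V : Type u} {G : SimpleGraph V} (T : Set V)
    (hT : ∀ x ∈ T, ∀ y, G.Adj x y → y ∈ T) {x y : V} (hx : x ∈ T) (h : G.Reachable x y) :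
    y ∈ T := by
  obtain ⟨p⟩ := h
  induction p with
  | nil => exact hx
  | cons hadj _ ih => exact ih (hT _ hx _ hadj)

/-- Explicit form of a component isomorphic to the `4`-cycle, read from one of its vertices. -/
theorem comp_C4 {V : Type u} {G : SimpleGraph V} {c : G.ConnectedComponent}
    (hc : Nonempty (c.toSimpleGraph ≃g cycleGraph 4)) {h : V}
    (hh : G.connectedComponentMk h = c) :
    ∃ a b d, C4 G h a b d ∧
      (∀ x, G.connectedComponentMk x = c → x = h ∨ x = a ∨ x = b ∨ x = d) ∧
      (∀ x, G.Adj h x → x = a ∨ x = d) ∧ (∀ x, G.Adj a x → x = h ∨ x = b) ∧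
      (∀ x, G.Adj b x → x = a ∨ x = d) ∧ (∀ x, G.Adj d x → x = h ∨ x = b) := by
  obtain ⟨f⟩ := hc
  set i := f ⟨h, hh⟩ with hi
  let g : Fin 4 → V := fun j => (f.symm (i + j)).1
  have hgc : ∀ j, G.connectedComponentMk (g j) = c := fun j => (f.symm (i + j)).2
  have hg0 : g 0 = h := by simp [g, hi]
  have hinj : ∀ j k, g j = g k → j = k := by
    intro j k hjk
    have := f.symm.injective (Subtype.ext hjk)
    exact add_left_cancel this
  have hadj : ∀ j k, G.Adj (g j) (g k) ↔ (cycleGraph 4).Adj j k := by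
    intro j k
    have h1 : G.Adj (g j) (g k) ↔ c.toSimpleGraph.Adj (f.symm (i + j)) (f.symm (i + k)) :=
      Iff.rfl
    rw [h1, f.symm.map_adj_iff, cycleGraph_adj, cycleGraph_adj]
    simp
  have hsurj : ∀ x, G.connectedComponentMk x = c → ∃ j, x = g j := by
    intro x hx
    exact ⟨f ⟨x, hx⟩ - i, by simp [g]⟩
  have hnb : ∀ j x, G.Adj (g j) x → ∃ k, x = g k ∧ (cycleGraph 4).Adj j k := by
    intro j x hx
    obtain ⟨k, rfl⟩ := hsurj x ((mk_eq_of_adj hx).symm.trans (hgc j))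
    exact ⟨k, rfl, (hadj _ _).1 hx⟩
  have hcases : ∀ j k : Fin 4, (cycleGraph 4).Adj j k →
    k = j + 1 ∨ k = j + 3 := by decide
  rw [← hg0]
  refine ⟨g 1, g 2, g 3, ⟨(hadj _ _).2 (by decide), (hadj _ _).2 (by decide),
    (hadj _ _).2 (by decide), (hadj _ _).2 (by decide), fun h => ?_, fun h => ?_⟩,
    fun x hx => ?_, fun x hx => ?_, fun x hx => ?_, fun x hx => ?_, fun x hx => ?_⟩
  · exact absurd (hinj _ _ h) (by decide)
  · exact absurd (hinj _ _ h) (by decide)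
  · obtain ⟨j, rfl⟩ := hsurj x hx
    fin_cases j <;> simp
  all_goals
    obtain ⟨k, rfl, hk⟩ := hnb _ _ hx
    rcases hcases _ _ hk with rfl | rfl <;> simp

/-- The components of `G` have disjoint edge sets. (In fact equality holds; only this bound is
needed.) -/
theorem sum_edges_comp {V : Type u} [Fintype V] (G : SimpleGraph V)
    [Fintype G.ConnectedComponent] :
    ∑ c : G.ConnectedComponent, c.toSimpleGraph.edgeSet.ncard ≤ G.edgeSet.ncard := by
  classical
  have h1 : ∑ c : G.ConnectedComponent, c.toSimpleGraph.edgeSet.ncard =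
      Nat.card (Σ c : G.ConnectedComponent, c.toSimpleGraph.edgeSet) := by
    rw [Nat.card_sigma]
    rfl
  rw [h1]
  refine Nat.card_le_card_of_injective
    (fun p => (⟨p.2.1.map Subtype.val, ?_⟩ : G.edgeSet)) ?_
  · obtain ⟨c, ⟨e, he⟩⟩ := p
    induction e with
    | h x y => exact he
  · rintro ⟨c, ⟨e, he⟩⟩ ⟨c', ⟨e', he'⟩⟩ h
    have h : e.map Subtype.val = e'.map Subtype.val := congrArg Subtype.val h
    have hcc : c = c' := by
      induction e with
      | h x y =>
        have hx : x.1 ∈ Sym2.map Subtype.val (s(x, y) : Sym2 ↥c) := by simp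
        rw [h, Sym2.mem_map] at hx
        obtain ⟨z, -, hz⟩ := hx
        have h2 := x.2
        have h3 := z.2
        rw [hz] at h3
        exact (show G.connectedComponentMk x.1 = c from h2).symm.trans h3
    subst hcc
    have := Sym2.map.injective Subtype.val_injective h
    subst this
    rfl

/-! ### Solving the components separately -/

open Classical in
/-- The charge of a component `c` of `G'` once the vertices of `D` have been chosen: what has to
be added to the number of edges of `c` to pay, at rate `6`, for the vertices that `c` still
needs.  It is `2` for a `4`-cycle, `1` for another component with a `4`-cycle not yet hit by
`N_G[D]`, and a refund (`0`, or `-4` when there is a `4`-cycle at all) if nothing is needed. -/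
noncomputable def phi {V : Type u} (G G' : SimpleGraph V) (D : Finset V)
    (c : G'.ConnectedComponent) : ℤ :=
  if ∃ x y z t, G'.connectedComponentMk x = c ∧ C4 G' x y z t ∧ ¬ Hits G D x y z t then
    if Nonempty (c.toSimpleGraph ≃g cycleGraph 4) then 2 else 1
  else if ∃ x y z t, G'.connectedComponentMk x = c ∧ C4 G' x y z t then -4 else 0

theorem phi_le_two {V : Type u} (G G' : SimpleGraph V) (D : Finset V)
    (c : G'.ConnectedComponent) : phi G G' D c ≤ 2 := by
  unfold phi; split_ifs <;> norm_num

theorem phi_two_iso {V : Type u} {G G' : SimpleGraph V} {D : Finset V}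
    {c : G'.ConnectedComponent} (h : 2 ≤ phi G G' D c) :
    Nonempty (c.toSimpleGraph ≃g cycleGraph 4) := by
  unfold phi at h; split_ifs at h with h1 h2
  · exact h2
  all_goals norm_num at h

theorem phi_pos {V : Type u} {G G' : SimpleGraph V} {D : Finset V}
    {c : G'.ConnectedComponent} (h : 1 ≤ phi G G' D c) :
    ∃ x y z t, G'.connectedComponentMk x = c ∧ C4 G' x y z t ∧ ¬ Hits G D x y z t := by
  unfold phi at h; split_ifs at h with h1 h2
  · exact h1
  · exact h1
  all_goals norm_num at h

theorem phi_neg {V : Type u} {G G' : SimpleGraph V} {D : Finset V}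
    {c : G'.ConnectedComponent}
    (h : ∀ x y z t, G'.connectedComponentMk x = c → C4 G' x y z t → Hits G D x y z t)
    (h' : ∃ x y z t, G'.connectedComponentMk x = c ∧ C4 G' x y z t) :
    phi G G' D c = -4 := by
  unfold phi
  rw [if_neg, if_pos h']
  rintro ⟨x, y, z, t, h1, h2, h3⟩
  exact h3 (h x y z t h1 h2)

/-- A `4`-cycle of `G` lies inside one component and is a `4`-cycle of it. -/
theorem C4.toComp {V : Type u} {G : SimpleGraph V} {c : G.ConnectedComponent} {x y z t : V}
    (h : C4 G x y z t) (hx : G.connectedComponentMk x = c) :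
    ∃ (hx : x ∈ c) (hy : y ∈ c) (hz : z ∈ c) (ht : t ∈ c),
      C4 c.toSimpleGraph ⟨x, hx⟩ ⟨y, hy⟩ ⟨z, hz⟩ ⟨t, ht⟩ := by
  have hy := (mk_eq_of_adj h.1).symm.trans hx
  have hz := (mk_eq_of_adj h.2.1).symm.trans hy
  have ht := (mk_eq_of_adj h.2.2.1).symm.trans hz
  refine ⟨hx, hy, hz, ht, h.1, h.2.1, h.2.2.1, h.2.2.2.1, fun he => ?_, fun he => ?_⟩
  · exact h.2.2.2.2.1 (congrArg Subtype.val he)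
  · exact h.2.2.2.2.2 (congrArg Subtype.val he)

/-- Four distinct vertices among four exhaust them. -/
theorem C4.mem_of_four {V : Type u} {G : SimpleGraph V} {x y z t h a b d : V}
    (hC : C4 G x y z t) (hx : x = h ∨ x = a ∨ x = b ∨ x = d)
    (hy : y = h ∨ y = a ∨ y = b ∨ y = d) (hz : z = h ∨ z = a ∨ z = b ∨ z = d)
    (ht : t = h ∨ t = a ∨ t = b ∨ t = d) : h = x ∨ h = y ∨ h = z ∨ h = t := by
  obtain ⟨h1, h2, h3, h4, h5, h6⟩ := hC
  have := h1.ne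
  have := h2.ne
  have := h3.ne
  have := h4.ne
  grind

theorem C4.same_comp {V : Type u} {G : SimpleGraph V} {c : G.ConnectedComponent} {x y z t : V}
    (h : C4 G x y z t) (hx : G.connectedComponentMk x = c) :
    G.connectedComponentMk y = c ∧ G.connectedComponentMk z = c ∧
      G.connectedComponentMk t = c := by
  obtain ⟨_, hy, hz, ht, _⟩ := h.toComp hx
  exact ⟨hy, hz, ht⟩

/-- Induction step: choose `D₀`, pass to a subgraph `G'` that keeps all `4`-cycles not hit by
`D₀`, and solve each component of `G'` separately. -/
theorem combine {V : Type u} [Fintype V] {G G' : SimpleGraph V} [Fintype G'.ConnectedComponent]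
    (hle : G' ≤ G) (D₀ : Finset V)
    (IH : ∀ c : G'.ConnectedComponent, ¬ Nonempty (c.toSimpleGraph ≃g cycleGraph 4) →
      Good c.toSimpleGraph)
    (hC : ∀ a b c d, C4 G a b c d → Hits G D₀ a b c d ∨ C4 G' a b c d) :
    ∃ D : Finset V, (∀ a b c d, C4 G a b c d → Hits G D a b c d) ∧
      (6 * D.card : ℤ) ≤ 6 * D₀.card + G'.edgeSet.ncard + ∑ c, phi G G' D₀ c := by
  classical
  have key : ∀ c : G'.ConnectedComponent, ∃ D : Finset V,
      (6 * D.card : ℤ) ≤ c.toSimpleGraph.edgeSet.ncard + phi G G' D₀ c ∧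
      ∀ x y z t, G'.connectedComponentMk x = c → C4 G' x y z t →
        Hits G D₀ x y z t ∨ Hits G D x y z t := by
    intro c
    by_cases h1 : ∃ x y z t, G'.connectedComponentMk x = c ∧ C4 G' x y z t ∧
      ¬ Hits G D₀ x y z t
    · by_cases h2 : Nonempty (c.toSimpleGraph ≃g cycleGraph 4)
      · obtain ⟨x, y, z, t, hx, hxC, hnh⟩ := h1
        have hphi : phi G G' D₀ c = 2 := by
          unfold phi
          rw [if_pos, if_pos h2]
          exact ⟨x, y, z, t, hx, hxC, hnh⟩
        obtain ⟨_, _, _, _, hC4⟩ := hxC.toComp hx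
        have h4 := four_le_of_C4 hC4
        refine ⟨{x}, by rw [hphi]; simp; omega, fun p q r s hp hpC => Or.inr ?_⟩
        obtain ⟨a, b, d, -, hall, -⟩ := comp_C4 h2 hx
        obtain ⟨hq, hr, hs⟩ := hpC.same_comp hp
        exact ⟨x, hpC.mem_of_four (hall _ hp) (hall _ hq) (hall _ hr) (hall _ hs), x,
          by simp, Or.inl rfl⟩
      · have hphi : phi G G' D₀ c = 1 := by
          unfold phi
          rw [if_pos h1, if_neg h2]
        obtain ⟨D, hD, hcard⟩ := IH c h2
        refine ⟨D.map (Function.Embedding.subtype _), by rw [hphi]; simp; omega,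
          fun p q r s hp hpC => Or.inr ?_⟩
        obtain ⟨_, _, _, _, hC4⟩ := hpC.toComp hp
        obtain ⟨x, hx, u, hu, hux⟩ := hD _ _ _ _ hC4
        refine ⟨x.1, ?_, u.1, ?_, ?_⟩
        · rcases hx with rfl | rfl | rfl | rfl <;> simp
        · simpa using hu
        · rcases hux with rfl | hux
          · exact Or.inl rfl
          · exact Or.inr (hle hux)
    · refine ⟨∅, ?_, fun p q r s hp hpC => Or.inl ?_⟩
      · by_cases h2 : ∃ x y z t, G'.connectedComponentMk x = c ∧ C4 G' x y z t
        · have hphi : phi G G' D₀ c = -4 := by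
            unfold phi
            rw [if_neg h1, if_pos h2]
          obtain ⟨x, y, z, t, hx, hxC⟩ := h2
          obtain ⟨_, _, _, _, hC4⟩ := hxC.toComp hx
          have h4 := four_le_of_C4 hC4
          rw [hphi]; simp; omega
        · have hphi : phi G G' D₀ c = 0 := by
            unfold phi
            rw [if_neg h1, if_neg h2]
          rw [hphi]; simp
      · by_contra h
        exact h1 ⟨p, q, r, s, hp, hpC, h⟩
  choose D hD1 hD2 using key
  refine ⟨D₀ ∪ Finset.univ.biUnion D, fun p q r s hp => ?_, ?_⟩
  · rcases hC p q r s hp with ⟨x, hx, u, hu, hux⟩ | h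
    · exact ⟨x, hx, u, by simp [hu], hux⟩
    · rcases hD2 _ p q r s rfl h with ⟨x, hx, u, hu, hux⟩ | ⟨x, hx, u, hu, hux⟩
      · exact ⟨x, hx, u, by simp [hu], hux⟩
      · exact ⟨x, hx, u, by simp only [Finset.mem_union, Finset.mem_biUnion]; grind, hux⟩
  · have h1 := Finset.card_union_le D₀ (Finset.univ.biUnion D)
    have h2 := Finset.card_biUnion_le (s := Finset.univ) (t := D)
    have h3 := Finset.sum_le_sum (fun c (_ : c ∈ Finset.univ) => hD1 c)
    rw [← Finset.mul_sum, Finset.sum_add_distrib] at h3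
    have h4 := sum_edges_comp G'
    zify at h1 h2 h4
    linarith

/-! ### Minimal counterexamples and bridges -/

/-- A counterexample to the theorem with the fewest edges. -/
structure MinCounter {V : Type u} (G : SimpleGraph V) : Prop where
  conn : G.Connected
  ne : ¬ Nonempty (G ≃g cycleGraph 4)
  bad : ¬ Good G
  min : ∀ (W : Type u) [Fintype W] (H : SimpleGraph W), H.Connected →
    H.edgeSet.ncard < G.edgeSet.ncard → ¬ Nonempty (H ≃g cycleGraph 4) → Good H

theorem edges_comp_le {V : Type u} [Fintype V] (G : SimpleGraph V) (c : G.ConnectedComponent) :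
    c.toSimpleGraph.edgeSet.ncard ≤ G.edgeSet.ncard := by
  classical
  have := Fintype.ofFinite G.ConnectedComponent
  exact (Finset.single_le_sum (f := fun c : G.ConnectedComponent =>
    c.toSimpleGraph.edgeSet.ncard) (fun _ _ => Nat.zero_le _) (Finset.mem_univ c)).trans
      (sum_edges_comp G)

/-- `combine` applied in a minimal counterexample: as `G` is not `Good`, whatever is chosen costs at
least `e(G) + 2`. -/
theorem MinCounter.ineq {V : Type u} [Fintype V] {G G' : SimpleGraph V}
    [Fintype G'.ConnectedComponent] (h : MinCounter G)
    (hle : G' ≤ G) (hlt : G'.edgeSet.ncard < G.edgeSet.ncard) (D₀ : Finset V)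
    (hC : ∀ a b c d, C4 G a b c d → Hits G D₀ a b c d ∨ C4 G' a b c d) :
    (G.edgeSet.ncard : ℤ) + 2 ≤
      6 * D₀.card + G'.edgeSet.ncard + ∑ c, phi G G' D₀ c := by
  classical
  obtain ⟨D, hD, hcard⟩ := combine hle D₀ (fun c hc =>
    h.min _ _ c.connected_toSimpleGraph ((edges_comp_le G' c).trans_lt hlt) hc) hC
  by_contra hlt'
  exact h.bad ⟨D, hD, by omega⟩

/-- `vw` is a bridge whose `w`-side is a `4`-cycle. -/
def Pend {V : Type u} (G : SimpleGraph V) (v w : V) : Prop :=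
  ∃ a b d, C4 G w a b d ∧ v ≠ a ∧ v ≠ b ∧ v ≠ d ∧
    (∀ x, G.Adj w x → x = a ∨ x = d ∨ x = v) ∧ (∀ x, G.Adj a x → x = w ∨ x = b) ∧
    (∀ x, G.Adj b x → x = a ∨ x = d) ∧ (∀ x, G.Adj d x → x = w ∨ x = b)

/-- If deleting the bridge `uv` leaves a `4`-cycle on the side of `u`, then this `4`-cycle hangs
at `v`. -/
theorem pend_of_iso {V : Type u} {G : SimpleGraph V} {u v : V}
    (hiso : Nonempty (((G.deleteEdges {s(u, v)}).connectedComponentMk u).toSimpleGraph ≃g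
      cycleGraph 4))
    (hne : (G.deleteEdges {s(u, v)}).connectedComponentMk u ≠
      (G.deleteEdges {s(u, v)}).connectedComponentMk v) : Pend G v u := by
  set G' := G.deleteEdges {s(u, v)} with hG'
  have hadj : ∀ x y, G'.Adj x y ↔ G.Adj x y ∧ s(x, y) ≠ s(u, v) := by
    intro x y
    simp [hG', deleteEdges_adj]
  obtain ⟨a, b, d, hC, -, h1, h2, h3, h4⟩ := comp_C4 hiso rfl
  obtain ⟨ha, hb, hd⟩ := hC.same_comp rfl
  have hva : v ≠ a := by rintro rfl; exact hne ha.symm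
  have hvb : v ≠ b := by rintro rfl; exact hne hb.symm
  have hvd : v ≠ d := by rintro rfl; exact hne hd.symm
  have hau : u ≠ a := hC.1.ne
  have hdu : d ≠ u := hC.2.2.2.1.ne
  have hbu : u ≠ b := hC.2.2.2.2.1
  refine ⟨a, b, d, hC.mono (deleteEdges_le _), hva, hvb, hvd, fun x hx => ?_, fun x hx => ?_,
    fun x hx => ?_, fun x hx => ?_⟩
  · by_cases hxv : x = v
    · exact Or.inr (Or.inr hxv)
    · have := h1 x ((hadj _ _).2 ⟨hx, by simp; grind⟩)
      tauto
  · exact h2 x ((hadj _ _).2 ⟨hx, by simp; grind⟩)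
  · exact h3 x ((hadj _ _).2 ⟨hx, by simp; grind⟩)
  · exact h4 x ((hadj _ _).2 ⟨hx, by simp; grind⟩)

/-- Deleting an edge that lies in no `4`-cycle costs nothing; minimality then forces the edge to
be a bridge with a `4`-cycle on one side. -/
theorem MinCounter.pend {V : Type u} [Fintype V] {G : SimpleGraph V} (h : MinCounter G)
    {u v : V} (huv : G.Adj u v) (hn : ∀ x y, ¬ C4 G u v x y) : Pend G v u ∨ Pend G u v := by
  classical
  set G' := G.deleteEdges {s(u, v)} with hG'
  have := Fintype.ofFinite G'.ConnectedComponent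
  have hadj : ∀ x y, G'.Adj x y ↔ G.Adj x y ∧ s(x, y) ≠ s(u, v) := by
    intro x y
    simp [hG', deleteEdges_adj]
  have hn' : ∀ a b c d, C4 G a b c d → s(a, b) ≠ s(u, v) := by
    intro a b c d hC heq
    rw [Sym2.eq_iff] at heq
    rcases heq with ⟨rfl, rfl⟩ | ⟨rfl, rfl⟩
    · exact hn _ _ hC
    · obtain ⟨h1, h2, h3, h4, h5, h6⟩ := hC
      exact hn _ _ ⟨h1.symm, h4.symm, h3.symm, h2.symm, h6, h5⟩
  have hcard : G'.edgeSet.ncard + 1 = G.edgeSet.ncard := by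
    have : G'.edgeSet = G.edgeSet \ {s(u, v)} := by simp [hG']
    rw [this]
    exact Set.ncard_sdiff_singleton_add_one huv (Set.toFinite _)
  have hin := h.ineq (G' := G') (deleteEdges_le _) (by omega) ∅ (by
    intro a b c d hC
    refine Or.inr ⟨(hadj _ _).2 ⟨hC.1, hn' _ _ _ _ hC⟩,
      (hadj _ _).2 ⟨hC.2.1, hn' _ _ _ _ hC.rot⟩,
      (hadj _ _).2 ⟨hC.2.2.1, hn' _ _ _ _ hC.rot.rot⟩,
      (hadj _ _).2 ⟨hC.2.2.2.1, hn' _ _ _ _ hC.rot.rot.rot⟩, hC.2.2.2.2⟩)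
  have hcomp : ∀ c : G'.ConnectedComponent,
      c = G'.connectedComponentMk u ∨ c = G'.connectedComponentMk v := by
    intro c
    induction c using SimpleGraph.ConnectedComponent.ind with
    | h x =>
      refine mem_of_closed (G := G) {x | G'.connectedComponentMk x = G'.connectedComponentMk u ∨
        G'.connectedComponentMk x = G'.connectedComponentMk v} ?_ (Or.inl rfl)
        (h.conn.preconnected u x)
      intro x hx y hxy
      by_cases he : s(x, y) = s(u, v)
      · rw [Sym2.eq_iff] at he
        rcases he with ⟨rfl, rfl⟩ | ⟨rfl, rfl⟩
        · exact Or.inr rfl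
        · exact Or.inl rfl
      · have := mk_eq_of_adj ((hadj _ _).2 ⟨hxy, he⟩)
        simp only [Set.mem_ofPred_eq] at hx ⊢
        rwa [← this]
  have hu2 := phi_le_two G G' ∅ (G'.connectedComponentMk u)
  have hv2 := phi_le_two G G' ∅ (G'.connectedComponentMk v)
  have huniv : (Finset.univ : Finset G'.ConnectedComponent) =
      {G'.connectedComponentMk u, G'.connectedComponentMk v} := by
    ext c
    simpa using hcomp c
  simp only [Finset.card_empty] at hin
  rw [huniv] at hin
  have hne : G'.connectedComponentMk u ≠ G'.connectedComponentMk v := by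
    intro heq
    rw [heq] at hin
    simp at hin
    omega
  rw [Finset.sum_pair hne] at hin
  by_cases hu : 2 ≤ phi G G' ∅ (G'.connectedComponentMk u)
  · exact Or.inl (pend_of_iso (phi_two_iso hu) hne)
  · have hv : 2 ≤ phi G G' ∅ (G'.connectedComponentMk v) := by omega
    have hv := phi_two_iso hv
    right
    have hsw : G' = G.deleteEdges {s(v, u)} := by rw [hG', Sym2.eq_swap]
    clear_value G'
    subst hsw
    exact pend_of_iso hv hne.symm

/-! ### Deleting vertices and counting edges -/

/-- `G` with all edges at vertices of `S` removed. -/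
def del {V : Type u} (G : SimpleGraph V) (S : Finset V) : SimpleGraph V where
  Adj x y := G.Adj x y ∧ x ∉ S ∧ y ∉ S
  symm := ⟨fun _ _ h => ⟨h.1.symm, h.2.2, h.2.1⟩⟩
  loopless := ⟨fun _ h => h.1.ne rfl⟩

open Classical in
/-- The number of neighbours of `u` in `S`; `lnk G Finset.univ u` is the degree of `u`. -/
noncomputable def lnk {V : Type u} (G : SimpleGraph V) (S : Finset V) (u : V) : ℕ :=
  (S.filter (G.Adj u)).card

open Classical in
/-- The number of edges from the component `c` of `del G S` to `S`. -/
noncomputable def load {V : Type u} [Fintype V] (G : SimpleGraph V) (S : Finset V)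
    (c : (del G S).ConnectedComponent) : ℕ :=
  ∑ u with (del G S).connectedComponentMk u = c, if u ∈ S then 0 else lnk G S u

theorem del_le {V : Type u} (G : SimpleGraph V) (S : Finset V) : del G S ≤ G :=
  fun _ _ h => h.1

theorem le_lnk {V : Type u} {G : SimpleGraph V} {S : Finset V} {u : V} (T : Finset V)
    (hT : ∀ x ∈ T, x ∈ S ∧ G.Adj u x) : T.card ≤ lnk G S u := by
  classical
  exact Finset.card_le_card fun x hx => by simpa using hT x hx

theorem two_edges {V : Type u} [Fintype V] (G : SimpleGraph V) :
    2 * G.edgeSet.ncard = ∑ u, lnk G Finset.univ u := by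
  classical
  have h := G.sum_degrees_eq_twice_card_edges
  rw [Set.ncard_eq_toFinset_card', ← SimpleGraph.edgeFinset, ← h]
  refine Finset.sum_congr rfl fun u _ => ?_
  rw [lnk, ← SimpleGraph.card_neighborFinset_eq_degree]
  congr 1
  ext x
  simp

/-- Double counting of the pairs consisting of a vertex of `S` and a neighbour of it. -/
theorem sum_lnk {V : Type u} [Fintype V] (G : SimpleGraph V) (S : Finset V) :
    ∑ u, lnk G S u = ∑ s ∈ S, lnk G Finset.univ s := by
  classical
  have := Finset.sum_card_bipartiteAbove_eq_sum_card_bipartiteBelow (s := Finset.univ) (t := S)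
    (G.Adj)
  simp only [Finset.bipartiteAbove, Finset.bipartiteBelow] at this
  unfold lnk
  rw [this]
  refine Finset.sum_congr rfl fun u _ => ?_
  simp only [G.adj_comm]

theorem sum_ite_add {V : Type u} [Fintype V] (S : Finset V) [DecidablePred (· ∈ S)]
    (f : V → ℕ) :
    ∑ u, f u = ∑ u, (if u ∈ S then 0 else f u) + ∑ u ∈ S, f u := by
  classical
  have h : ∑ u ∈ S, f u = ∑ u, (if u ∈ S then f u else 0) := by
    rw [← Finset.sum_filter]; congr 1; ext; simp
  rw [h, ← Finset.sum_add_distrib]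
  refine Finset.sum_congr rfl fun u _ => ?_
  split_ifs <;> simp

/-- The edges of `G` split into those avoiding `S` and those meeting `S`; everything is counted
twice, once from each end. -/
theorem edges_del {V : Type u} [Fintype V] (G : SimpleGraph V) (S : Finset V)
    [DecidablePred (· ∈ S)] :
    2 * G.edgeSet.ncard = 2 * (del G S).edgeSet.ncard +
      ∑ u, (if u ∈ S then 0 else lnk G S u) + ∑ u ∈ S, lnk G Finset.univ u := by
  classical
  rw [two_edges, two_edges, sum_ite_add S]
  congr 1
  rw [← Finset.sum_add_distrib]
  refine Finset.sum_congr rfl fun u _ => ?_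
  split_ifs with hu
  · symm
    simp [lnk, del, hu]
  · unfold lnk
    rw [← Finset.card_union_of_disjoint]
    · congr 1
      ext x
      simp [del, hu]
      tauto
    · rw [Finset.disjoint_left]
      intro x
      simp only [Finset.mem_filter]
      rintro ⟨-, hx⟩ ⟨hxS, -⟩
      exact hx.2.2 hxS

theorem sum_load {V : Type u} [Fintype V] (G : SimpleGraph V) (S : Finset V)
    [DecidablePred (· ∈ S)] [Fintype (del G S).ConnectedComponent] :
    ∑ c, load G S c = ∑ u, (if u ∈ S then 0 else lnk G S u) := by
  classical
  unfold load
  rw [← Finset.sum_fiberwise Finset.univ (del G S).connectedComponentMk]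
  refine Finset.sum_congr rfl fun c _ => ?_
  refine Finset.sum_congr (by ext; simp) fun u _ => ?_
  split_ifs <;> rfl

/-- The ends in `S` of edges of `G`, split according to whether the other end lies outside or
inside `S`. -/
theorem load_add {V : Type u} [Fintype V] (G : SimpleGraph V) (S : Finset V)
    [Fintype (del G S).ConnectedComponent] :
    ∑ c, load G S c + ∑ u ∈ S, lnk G S u = ∑ u ∈ S, lnk G Finset.univ u := by
  classical
  rw [sum_load, ← sum_lnk, sum_ite_add S (lnk G S)]

/-- The inequality satisfied by a minimal counterexample when `v` is chosen and a part `S` of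
`N[v]` is deleted. -/
theorem MinCounter.charge {V : Type u} [Fintype V] {G : SimpleGraph V} (h : MinCounter G)
    {v : V} {S : Finset V} [Fintype (del G S).ConnectedComponent] (hv : v ∈ S)
    (hS : ∀ x ∈ S, v = x ∨ G.Adj v x) (hd : 0 < lnk G Finset.univ v) :
    (2 * ∑ c, load G S c + ∑ u ∈ S, lnk G S u : ℤ) ≤ 8 + 2 * ∑ c, phi G (del G S) {v} c := by
  classical
  have h1 := edges_del G S
  have h2 := load_add G S
  rw [← sum_load] at h1
  have h3 := Finset.single_le_sum (f := fun u => lnk G Finset.univ u)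
    (fun _ _ => Nat.zero_le _) hv
  have h4 := h.ineq (del_le G S) (by omega) {v} (by
    intro a b c d hC
    by_cases hit : Hits G {v} a b c d
    · exact Or.inl hit
    · have key : ∀ x, (x = a ∨ x = b ∨ x = c ∨ x = d) → x ∉ S := fun x hx hxS =>
        hit ⟨x, hx, v, by simp, hS x hxS⟩
      have ha := key a (by simp)
      have hb := key b (by simp)
      have hc := key c (by simp)
      have hd := key d (by simp)
      obtain ⟨e1, e2, e3, e4, e5⟩ := hC
      exact Or.inr ⟨⟨e1, ha, hb⟩, ⟨e2, hb, hc⟩, ⟨e3, hc, hd⟩, ⟨e4, hd, ha⟩, e5⟩)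
  simp only [Finset.card_singleton] at h4
  zify at h1 h2
  push_cast at h4 ⊢
  linarith

/-- The vertices of `S` are isolated in `del G S`. -/
theorem del_isolated {V : Type u} {G : SimpleGraph V} {S : Finset V} {s x : V} (hs : s ∈ S)
    (h : (del G S).connectedComponentMk x = (del G S).connectedComponentMk s) : x = s :=
  mem_of_closed {s} (fun a ha y hay => by
    rw [Set.mem_singleton_iff] at ha
    subst ha
    exact absurd hs hay.2.1) rfl (SimpleGraph.ConnectedComponent.exact h).symm

theorem C4.notMem_del {V : Type u} {G : SimpleGraph V} {S : Finset V} {x y z t : V}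
    (hC : C4 (del G S) x y z t) {w : V}
    (hw : (del G S).connectedComponentMk w = (del G S).connectedComponentMk x) : w ∉ S := by
  intro hwS
  have := del_isolated hwS hw.symm
  subst this
  exact hC.1.2.1 hwS

/-- In a connected graph `G`, an edge leaves every component of `G'` that is not everything. -/
theorem exists_cross {V : Type u} {G G' : SimpleGraph V} (hG : G.Connected)
    {c : G'.ConnectedComponent} {x y : V} (hx : G'.connectedComponentMk x = c)
    (hy : G'.connectedComponentMk y ≠ c) :
    ∃ p q, G.Adj p q ∧ G'.connectedComponentMk p = c ∧ G'.connectedComponentMk q ≠ c := by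
  by_contra! hcon
  exact hy (mem_of_closed (G := G) {z | G'.connectedComponentMk z = c}
    (fun a ha b hab => hcon a b hab ha) hx (hG.preconnected x y))

/-- Several vertices of a component together bound its load from below. -/
theorem le_load {V : Type u} [Fintype V] {G : SimpleGraph V} {S : Finset V}
    {c : (del G S).ConnectedComponent} (T : Finset V)
    (hT : ∀ x ∈ T, (del G S).connectedComponentMk x = c ∧ x ∉ S) :
    ∑ x ∈ T, lnk G S x ≤ load G S c := by
  classical
  unfold load
  calc ∑ x ∈ T, lnk G S x = ∑ x ∈ T, if x ∈ S then 0 else lnk G S x :=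
        Finset.sum_congr rfl fun x hx => by rw [if_neg (hT x hx).2]
    _ ≤ _ := by
      refine (Finset.sum_le_sum_of_subset (t := Finset.univ.filter fun u =>
        (del G S).connectedComponentMk u = c) fun x hx => by simpa using (hT x hx).1).trans ?_
      refine le_of_eq (Finset.sum_congr (by ext; simp) fun u _ => ?_)
      split_ifs <;> rfl

/-! ### Every edge lies in a `4`-cycle -/

/-- After deleting `v`, the cycle hanging at `v` through `w` is a whole component, and all its
`4`-cycles use `w`, a neighbour of `v`. -/
theorem Pend.hits {V : Type u} {G : SimpleGraph V} {v w p q r s : V} (hP : Pend G v w)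
    (hvw : G.Adj v w) (hC : C4 (del G {v}) p q r s)
    (hp : (del G {v}).connectedComponentMk p = (del G {v}).connectedComponentMk w) :
    Hits G {v} p q r s := by
  obtain ⟨a, b, d, -, -, -, -, h1, h2, h3, h4⟩ := hP
  have key : ∀ x, (del G {v}).connectedComponentMk x = (del G {v}).connectedComponentMk w →
      x = w ∨ x = a ∨ x = b ∨ x = d := by
    intro x hx
    refine mem_of_closed {x | x = w ∨ x = a ∨ x = b ∨ x = d} ?_ (Or.inl rfl)
      (SimpleGraph.ConnectedComponent.exact hx).symm
    rintro z hz y ⟨hzy, -, hy⟩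
    simp only [Finset.mem_singleton] at hy
    rcases hz with rfl | rfl | rfl | rfl
    · rcases h1 y hzy with h | h | h
      · exact Or.inr (Or.inl h)
      · exact Or.inr (Or.inr (Or.inr h))
      · exact absurd h hy
    · rcases h2 y hzy with h | h
      · exact Or.inl h
      · exact Or.inr (Or.inr (Or.inl h))
    · rcases h3 y hzy with h | h
      · exact Or.inr (Or.inl h)
      · exact Or.inr (Or.inr (Or.inr h))
    · rcases h4 y hzy with h | h
      · exact Or.inl h
      · exact Or.inr (Or.inr (Or.inl h))
  obtain ⟨hq, hr, hs⟩ := hC.same_comp hp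
  exact ⟨w, hC.mem_of_four (key _ hp) (key _ hq) (key _ hr) (key _ hs), v, by simp, Or.inr hvw⟩

/-- If `4`-cycles hang on bridges at `v`, then choosing `v` and deleting it pays for itself: the
edges of one hanging cycle are all saved, and every component not hanging on a bridge is joined to
`v` by two edges of a `4`-cycle. -/
theorem MinCounter.no_pend {V : Type u} [Fintype V] {G : SimpleGraph V} (h : MinCounter G)
    {u v : V} (hvu : G.Adj v u) (hn : ∀ x y, ¬ C4 G v u x y) (hP : Pend G v u) : False := by
  classical
  have hw : ∀ w, G.Adj v w → (∃ x y, C4 G v w x y) ∨ Pend G v w := by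
    intro w hvw
    by_cases hC : ∃ x y, C4 G v w x y
    · exact Or.inl hC
    push Not at hC
    rcases h.pend hvw hC with hP' | hP'
    · obtain ⟨a, b, d, hab, -, -, -, h1, -, -, -⟩ := hP'
      rcases h1 u hvu with rfl | rfl | rfl
      · exact absurd hab (hn _ _)
      · obtain ⟨e1, e2, e3, e4, e5, e6⟩ := hab
        exact absurd ⟨e4.symm, e3.symm, e2.symm, e1.symm, e5, e6.symm⟩ (hn b a)
      · exact Or.inr hP
    · exact Or.inr hP'
  have := Fintype.ofFinite (del G {v}).ConnectedComponent
  have hch := h.charge (v := v) (S := {v}) (by simp) (by simp)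
    (le_lnk (T := {u}) (by simpa using hvu))
  have hadjdel : ∀ x y, G.Adj x y → x ≠ v → y ≠ v →
      (del G {v}).connectedComponentMk x = (del G {v}).connectedComponentMk y :=
    fun x y hxy hx hy => mk_eq_of_adj (G := del G {v}) ⟨hxy, by simpa using hx, by simpa using hy⟩
  have hlnk : ∀ x, G.Adj v x → 1 ≤ lnk G {v} x := fun x hx =>
    le_lnk (T := {v}) (by simpa using hx.symm)
  set c₀ := (del G {v}).connectedComponentMk u with hc₀
  have hle : ∀ c, phi G (del G {v}) {v} c + (if c = c₀ then 5 else 0) ≤ load G {v} c := by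
    intro c
    split_ifs with hc
    · have h1 : phi G (del G {v}) {v} c = -4 := by
        obtain ⟨a, b, d, hab, h1, h2, h3, -⟩ := id hP
        have hu := hvu.ne
        refine phi_neg (fun x y z t hx hxC => hP.hits hvu hxC (hx.trans hc)) ⟨u, a, b, d, hc.symm,
          ⟨hab.1, ?_, ?_⟩, ⟨hab.2.1, ?_, ?_⟩, ⟨hab.2.2.1, ?_, ?_⟩, ⟨hab.2.2.2.1, ?_, ?_⟩,
          hab.2.2.2.2⟩ <;> simp only [Finset.mem_singleton] <;> exact Ne.symm ‹_›
      have h2 := le_load (c := c) {u} (by simp [hc, hvu.ne', hc₀])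
      have h3 := hlnk u hvu
      simp only [Finset.sum_singleton] at h2
      omega
    · by_cases hpos : 1 ≤ phi G (del G {v}) {v} c
      · obtain ⟨x, y, z, t, hx, hxC, hit⟩ := phi_pos hpos
        have hvc : (del G {v}).connectedComponentMk v ≠ c := fun hv =>
          hxC.notMem_del (hv.trans hx.symm) (by simp)
        obtain ⟨p, q, hpq, hp, hq⟩ := exists_cross h.conn hx hvc
        have hpv : p ≠ v := by rintro rfl; exact hvc hp
        have hqv : q = v := by
          by_contra hqv
          exact hq ((hadjdel _ _ hpq hpv hqv).symm.trans hp)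
        subst hqv
        rcases hw p hpq.symm with ⟨x', y', e1, e2, e3, e4, e5, e6⟩ | hP'
        · have hx' : (del G {q}).connectedComponentMk x' = c :=
            (hadjdel _ _ e2 hpv e5.symm).symm.trans hp
          have hy' : (del G {q}).connectedComponentMk y' = c :=
            (hadjdel _ _ e3 e5.symm e4.ne).symm.trans hx'
          have h2 := le_load (c := c) {p, y'} (by simp [hp, hy', hpv, e4.ne])
          rw [Finset.sum_pair e6] at h2
          have h3 := hlnk p e1
          have h4 := hlnk y' e4.symm
          have := phi_le_two G (del G {q}) {q} c
          omega
        · exact absurd (hP'.hits hpq.symm hxC (hx.trans hp.symm)) hit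
      · omega
  have hsum := Finset.sum_le_sum (fun c (_ : c ∈ Finset.univ) => hle c)
  rw [Finset.sum_add_distrib, Finset.sum_ite_eq' Finset.univ c₀] at hsum
  simp only [Finset.mem_univ, if_true] at hsum
  have : (0 : ℤ) ≤ ∑ u ∈ {v}, (lnk G {v} u : ℤ) := Finset.sum_nonneg fun _ _ => by positivity
  push_cast at hch
  linarith

/-- An edge in no `4`-cycle would carry a hanging `4`-cycle by `MinCounter.pend`, which
`MinCounter.no_pend` excludes. -/
theorem MinCounter.inC4 {V : Type u} [Fintype V] {G : SimpleGraph V} (h : MinCounter G)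
    {u v : V} (huv : G.Adj u v) : ∃ x y, C4 G u v x y := by
  by_contra! hcon
  have hcon' : ∀ x y, ¬ C4 G v u x y := by
    rintro x y ⟨e1, e2, e3, e4, e5, e6⟩
    exact hcon y x ⟨huv, e4.symm, e3.symm, e2.symm, e6, e5⟩
  rcases h.pend huv hcon with hP | hP
  · exact h.no_pend huv.symm hcon' hP
  · exact h.no_pend huv hcon hP

theorem MinCounter.exists_C4 {V : Type u} {G : SimpleGraph V} (h : MinCounter G) :
    ∃ x y z t, C4 G x y z t := by
  by_contra! hcon
  exact h.bad ⟨∅, fun a b c d hC => absurd hC (hcon a b c d), by simp⟩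

theorem MinCounter.exists_adj {V : Type u} {G : SimpleGraph V} (h : MinCounter G)
    (v : V) : ∃ w, G.Adj v w := by
  obtain ⟨x, y, z, t, hC⟩ := h.exists_C4
  by_contra! hcon
  have : x = v := mem_of_closed {v} (fun a ha b hab => by
    rw [Set.mem_singleton_iff] at ha
    subst ha
    exact absurd hab (hcon b)) rfl (h.conn.preconnected v x)
  subst this
  exact hcon y hC.1

theorem MinCounter.two_le_deg {V : Type u} [Fintype V] {G : SimpleGraph V} (h : MinCounter G)
    (v : V) : 2 ≤ lnk G Finset.univ v := by
  classical
  obtain ⟨w, hw⟩ := h.exists_adj v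
  obtain ⟨x, y, hC⟩ := h.inC4 hw
  have := le_lnk (G := G) (S := Finset.univ) (u := v) {w, y} (by simp [hw, hC.2.2.2.1.symm])
  rwa [Finset.card_pair hC.2.2.2.2.2] at this

/-! ### Deleting a closed neighbourhood -/

open Classical in
/-- The closed neighbourhood of a vertex. -/
noncomputable def clN {V : Type u} [Fintype V] (G : SimpleGraph V) (v : V) : Finset V :=
  Finset.univ.filter fun x => v = x ∨ G.Adj v x

theorem mem_clN {V : Type u} [Fintype V] {G : SimpleGraph V} {v x : V} :
    x ∈ clN G v ↔ v = x ∨ G.Adj v x := by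
  simp [clN]

/-- A `4`-cycle that survives the deletion of `N[v]` lies in a component joined to `N[v]` by at least
two edges, since an edge joining them lies in a `4`-cycle of `G`. -/
theorem MinCounter.two_le_load {V : Type u} [Fintype V] {G : SimpleGraph V} (h : MinCounter G)
    {v x y z t : V} (hC : C4 (del G (clN G v)) x y z t) :
    2 ≤ load G (clN G v) ((del G (clN G v)).connectedComponentMk x) := by
  classical
  set S := clN G v
  have hvS : v ∈ S := by simp [S, mem_clN]
  obtain ⟨p, q, hpq, hp, hq⟩ := exists_cross h.conn (G' := del G S) rfl (y := v)
    (fun hv => hC.notMem_del hv hvS)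
  have hpS : p ∉ S := hC.notMem_del hp
  have hqS : q ∈ S := by
    by_contra hqS
    exact hq ((mk_eq_of_adj (G := del G S) ⟨hpq, hpS, hqS⟩).symm.trans hp)
  obtain ⟨a, b, e1, e2, e3, e4, e5, e6⟩ := h.inC4 hpq
  have hl1 : 1 ≤ lnk G S p := le_lnk (T := {q}) (by simp [hqS, hpq])
  -- The `4`-cycle `p q a b` meets the component in `p` and has a second edge leaving it.
  by_cases hb : b ∈ S
  · have h1 : 2 ≤ lnk G S p := by
      have := le_lnk (G := G) (S := S) (u := p) {q, b} (by simp [hpq, e4.symm, hqS, hb])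
      rwa [Finset.card_pair e6] at this
    have h2 := le_load (S := S) {p} (by simpa using ⟨hp, hpS⟩)
    simp only [Finset.sum_singleton] at h2
    omega
  · have hbc := (mk_eq_of_adj (G := del G S) ⟨e4, hb, hpS⟩).trans hp
    by_cases ha : a ∈ S
    · have h1 : 1 ≤ lnk G S b := le_lnk (T := {a}) (by simp [ha, e3.symm])
      have h2 := le_load (S := S) {p, b} (by
        simp only [Finset.mem_insert, Finset.mem_singleton]
        rintro z (rfl | rfl)
        · exact ⟨hp, hpS⟩
        · exact ⟨hbc, hb⟩)
      rw [Finset.sum_pair e4.ne'] at h2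
      omega
    · have hac := (mk_eq_of_adj (G := del G S) ⟨e3, ha, hb⟩).trans hbc
      have h1 : 1 ≤ lnk G S a := le_lnk (T := {q}) (by simp [hqS, e2.symm])
      have h2 := le_load (S := S) {p, a} (by
        simp only [Finset.mem_insert, Finset.mem_singleton]
        rintro z (rfl | rfl)
        · exact ⟨hp, hpS⟩
        · exact ⟨hac, ha⟩)
      rw [Finset.sum_pair e5] at h2
      omega

theorem MinCounter.phi_le_load {V : Type u} [Fintype V] {G : SimpleGraph V} (h : MinCounter G)
    {v : V} (c : (del G (clN G v)).ConnectedComponent) :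
    phi G (del G (clN G v)) {v} c ≤ load G (clN G v) c := by
  by_cases hpos : 1 ≤ phi G (del G (clN G v)) {v} c
  · obtain ⟨x, y, z, t, hx, hxC, -⟩ := phi_pos hpos
    have h1 := h.two_le_load hxC
    rw [hx] at h1
    have := phi_le_two G (del G (clN G v)) {v} c
    omega
  · omega

/-- The edges at `v` are counted from both ends; `e` is a surplus at one neighbour `p`. -/
theorem sum_lnk_clN {V : Type u} [Fintype V] {G : SimpleGraph V} {v p : V} {e : ℕ}
    (hp : G.Adj v p) (he : 1 + e ≤ lnk G (clN G v) p) :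
    2 * lnk G Finset.univ v + e ≤ ∑ u ∈ clN G v, lnk G (clN G v) u := by
  classical
  have hv : v ∈ clN G v := by simp [mem_clN]
  have hd : lnk G (clN G v) v = lnk G Finset.univ v := by
    unfold lnk
    congr 1
    ext x
    simp only [Finset.mem_filter, mem_clN, Finset.mem_univ, true_and]
    tauto
  have hc : ((clN G v).erase v).card = lnk G Finset.univ v := by
    unfold lnk
    congr 1
    ext x
    simp only [Finset.mem_erase, mem_clN, Finset.mem_filter, Finset.mem_univ, true_and]
    constructor
    · rintro ⟨h1, rfl | h2⟩
      · exact absurd rfl h1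
      · exact h2
    · exact fun h => ⟨h.ne', Or.inr h⟩
  rw [← Finset.add_sum_erase _ _ hv, hd]
  have h1 : ∑ x ∈ (clN G v).erase v, (1 + if x = p then e else 0) ≤
      ∑ x ∈ (clN G v).erase v, lnk G (clN G v) x := by
    refine Finset.sum_le_sum fun x hx => ?_
    split_ifs with hxp
    · rwa [hxp]
    · refine le_lnk (T := {v}) ?_
      simp only [Finset.mem_erase, mem_clN] at hx
      simp only [Finset.mem_singleton, forall_eq, mem_clN, true_or, true_and]
      rcases hx with ⟨h1, rfl | h2⟩
      · exact absurd rfl h1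
      · exact h2.symm
  rw [Finset.sum_add_distrib, Finset.sum_ite_eq', if_pos] at h1
  · simp only [Finset.sum_const, smul_eq_mul, mul_one, hc] at h1
    omega
  · simp [mem_clN, hp, hp.ne.symm]

/-- `MinCounter.charge` for `S = N[v]`. -/
theorem MinCounter.charge' {V : Type u} [Fintype V] {G : SimpleGraph V} (h : MinCounter G)
    (v : V) [Fintype (del G (clN G v)).ConnectedComponent] :
    (2 * ∑ c, load G (clN G v) c + ∑ u ∈ clN G v, lnk G (clN G v) u : ℤ) ≤
      8 + 2 * ∑ c, phi G (del G (clN G v)) {v} c := by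
  have := h.two_le_deg v
  exact h.charge (by simp [mem_clN]) (fun x hx => mem_clN.1 hx) (by omega)

/-- The basic inequality at `v`, keeping the surplus `load - phi` of one component only. -/
theorem MinCounter.deg_load {V : Type u} [Fintype V] {G : SimpleGraph V} (h : MinCounter G)
    {v p : V} {e : ℕ} (hp : G.Adj v p) (he : 1 + e ≤ lnk G (clN G v) p)
    (c : (del G (clN G v)).ConnectedComponent) :
    (2 * lnk G Finset.univ v + e + 2 * load G (clN G v) c : ℤ) ≤
      8 + 2 * phi G (del G (clN G v)) {v} c := by
  classical
  have := Fintype.ofFinite (del G (clN G v)).ConnectedComponent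
  have h1 := h.charge' v
  have h2 := sum_lnk_clN hp he
  zify at h2
  have h3 : (0 : ℤ) ≤ ∑ c', (load G (clN G v) c' - phi G (del G (clN G v)) {v} c' -
      if c' = c then (load G (clN G v) c - phi G (del G (clN G v)) {v} c : ℤ) else 0) := by
    refine Finset.sum_nonneg fun c' _ => ?_
    split_ifs with hc
    · subst hc; simp
    · have := h.phi_le_load c'
      omega
  rw [Finset.sum_sub_distrib, Finset.sum_sub_distrib, Finset.sum_ite_eq' Finset.univ c] at h3
  simp only [Finset.mem_univ, if_true] at h3
  push_cast at h1
  linarith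

/-- `MinCounter.deg_load` without a surplus edge, halved. -/
theorem MinCounter.deg_load' {V : Type u} [Fintype V] {G : SimpleGraph V} (h : MinCounter G)
    (v : V) (c : (del G (clN G v)).ConnectedComponent) :
    (lnk G Finset.univ v + load G (clN G v) c : ℤ) ≤
      4 + phi G (del G (clN G v)) {v} c := by
  obtain ⟨p, hp⟩ := h.exists_adj v
  have := h.deg_load (e := 0) hp (le_lnk (T := {v}) (by simp [mem_clN, hp.symm])) c
  push_cast at this
  linarith

/-! ### Degree bounds -/

theorem MinCounter.deg_le_four {V : Type u} [Fintype V] {G : SimpleGraph V} (h : MinCounter G)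
    (v : V) : lnk G Finset.univ v ≤ 4 := by
  have h1 := h.deg_load' v ((del G (clN G v)).connectedComponentMk v)
  have h2 := h.phi_le_load ((del G (clN G v)).connectedComponentMk v)
  omega

/-- If the neighbourhood of `h` lies in that of `v`, then deleting `N[v]` isolates `h`, so the
edges at `h` are a pure surplus. -/
theorem MinCounter.subset {V : Type u} [Fintype V] {G : SimpleGraph V} (hG : MinCounter G)
    {v h : V} (hne : h ≠ v) (hsub : ∀ x, G.Adj h x → G.Adj v x) :
    lnk G Finset.univ v ≤ 2 ∧ lnk G Finset.univ h ≤ 2 := by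
  classical
  have hhS : h ∉ clN G v := by
    rw [mem_clN]
    rintro (rfl | hvh)
    · exact hne rfl
    · exact (hsub v hvh.symm).ne rfl
  have hiso : ∀ x, (del G (clN G v)).connectedComponentMk x =
      (del G (clN G v)).connectedComponentMk h →
      x = h := fun x hx => mem_of_closed {h} (fun a ha y hay => by
    rw [Set.mem_singleton_iff] at ha
    subst ha
    exact absurd (mem_clN.2 (Or.inr (hsub y hay.1))) hay.2.2) rfl
      (SimpleGraph.ConnectedComponent.exact hx).symm
  have h1 : phi G (del G (clN G v)) {v} ((del G (clN G v)).connectedComponentMk h) ≤ 0 := by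
    by_contra hpos
    obtain ⟨x, y, z, t, hx, hxC, -⟩ := phi_pos (not_le.1 hpos)
    have hx' := hiso x hx
    subst hx'
    exact hxC.1.2.2 (mem_clN.2 (Or.inr (hsub y hxC.1.1)))
  have h2 := le_load (S := clN G v) (c := (del G (clN G v)).connectedComponentMk h) {h}
    (by simpa using hhS)
  simp only [Finset.sum_singleton] at h2
  have h3 : lnk G Finset.univ h ≤ lnk G (clN G v) h :=
    le_lnk (Finset.univ.filter (G.Adj h)) (by
      intro x hx
      have hx : G.Adj h x := by simpa using hx
      exact ⟨mem_clN.2 (Or.inr (hsub x hx)), hx⟩)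
  have h4 := hG.deg_load' v ((del G (clN G v)).connectedComponentMk h)
  have h5 := hG.two_le_deg v
  have h6 := hG.two_le_deg h
  omega

theorem three_le_lnk {V : Type u} [Fintype V] {G : SimpleGraph V} {u a b c : V}
    (ha : G.Adj u a) (hb : G.Adj u b) (hc : G.Adj u c) (hab : a ≠ b) (hac : a ≠ c)
    (hbc : b ≠ c) : 3 ≤ lnk G Finset.univ u := by
  classical
  have := le_lnk (G := G) (S := Finset.univ) (u := u) {a, b, c} (by simp [ha, hb, hc])
  rwa [Finset.card_insert_of_notMem (by simp [hab, hac]), Finset.card_pair hbc] at this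

theorem adj_of_deg_three {V : Type u} [Fintype V] {G : SimpleGraph V} {u a b c y : V}
    (hd : lnk G Finset.univ u ≤ 3)
    (ha : G.Adj u a) (hb : G.Adj u b) (hc : G.Adj u c) (hab : a ≠ b) (hac : a ≠ c)
    (hbc : b ≠ c) (hy : G.Adj u y) : y = a ∨ y = b ∨ y = c := by
  classical
  by_contra! hcon
  have := le_lnk (G := G) (S := Finset.univ) (u := u) {y, a, b, c} (by simp [ha, hb, hc, hy])
  rw [Finset.card_insert_of_notMem (by simp [hcon]),
    Finset.card_insert_of_notMem (by simp [hab, hac]), Finset.card_pair hbc] at this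
  omega

/-- At a vertex `v` of degree `4` the basic inequality is tight, so a `4`-cycle `v w x y` sends `x`
to a component with `load = phi = 2`, that is, to a `4`-cycle all of whose edges to `N[v]` are at
`x`. The vertex `b` opposite to `x` then contradicts `MinCounter.subset`. -/
theorem MinCounter.deg_le_three {V : Type u} [Fintype V] {G : SimpleGraph V}
    (h : MinCounter G) (v : V) : lnk G Finset.univ v ≤ 3 := by
  classical
  by_contra hd
  obtain ⟨w, hvw⟩ := h.exists_adj v
  obtain ⟨x, y, e1, e2, e3, e4, e5, e6⟩ := h.inC4 hvw
  have hvS : v ∈ clN G v := mem_clN.2 (Or.inl rfl)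
  have hwS : w ∈ clN G v := mem_clN.2 (Or.inr hvw)
  have hyS : y ∈ clN G v := mem_clN.2 (Or.inr e4.symm)
  -- A triangle at `v` would already be a surplus.
  have hxS : x ∉ clN G v := by
    intro hxS
    rcases mem_clN.1 hxS with hvx | hvx
    · exact e5 hvx
    · have h1 := le_lnk (G := G) (S := clN G v) (u := w) {v, x} (by simp [hvS, hxS, e1.symm, e2])
      rw [Finset.card_pair e5] at h1
      have h2 := h.deg_load (e := 1) hvw h1 ((del G (clN G v)).connectedComponentMk v)
      have h3 := h.phi_le_load ((del G (clN G v)).connectedComponentMk v)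
      omega
  have h1 := le_lnk (G := G) (S := clN G v) (u := x) {w, y} (by simp [hwS, hyS, e2.symm, e3])
  rw [Finset.card_pair e6] at h1
  have h2 := le_load (S := clN G v) (c := (del G (clN G v)).connectedComponentMk x) {x}
    (by simpa using hxS)
  simp only [Finset.sum_singleton] at h2
  have h3 := h.deg_load' v ((del G (clN G v)).connectedComponentMk x)
  have h4 := phi_le_two G (del G (clN G v)) {v} ((del G (clN G v)).connectedComponentMk x)
  obtain ⟨a, b, d, hC, -, -, -, hb, -⟩ :=
    comp_C4 (phi_two_iso (G := G) (G' := del G (clN G v)) (D := {v})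
      (c := (del G (clN G v)).connectedComponentMk x) (by omega)) (h := x) rfl
  have hbS : b ∉ clN G v := hC.2.1.2.2
  have h5 := le_load (S := clN G v) {x, b} (by
    simp only [Finset.mem_insert, Finset.mem_singleton]
    rintro z (rfl | rfl)
    · exact ⟨rfl, hxS⟩
    · exact ⟨(hC.same_comp rfl).2.1, hbS⟩)
  rw [Finset.sum_pair hC.2.2.2.2.1] at h5
  have hb0 : lnk G (clN G v) b = 0 := by omega
  have hsub : ∀ z, G.Adj b z → G.Adj x z := by
    intro z hbz
    by_cases hz : z ∈ clN G v
    · have := le_lnk (G := G) (S := clN G v) (u := b) {z} (by simp [hbz, hz])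
      simp [hb0] at this
    · rcases hb z ⟨hbz, hbS, hz⟩ with rfl | rfl
      · exact hC.1.1
      · exact hC.2.2.2.1.1.symm
  have h6 := (h.subset hC.2.2.2.2.1.symm hsub).1
  have h7 := three_le_lnk (G := G) (u := x) (a := a) (b := d) (c := w) hC.1.1
    hC.2.2.2.1.1.symm e2.symm hC.2.2.2.2.2 (by rintro rfl; exact hC.1.2.2 hwS)
    (by rintro rfl; exact hC.2.2.2.1.2.1 hwS)
  omega

/-- Two vertices `h`, `b` with the same neighbourhood `{a, d}` leave no room for a third edge at
`a`: a `4`-cycle through such an edge `aw` passes through `d`, so that `N(a) ⊆ N(d)` while `a` has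
degree `3`, contrary to `MinCounter.subset`. -/
theorem MinCounter.twin {V : Type u} [Fintype V] {G : SimpleGraph V} (hG : MinCounter G)
    {h a b d w : V} (h1 : ∀ x, G.Adj h x → x = a ∨ x = d) (h2 : ∀ x, G.Adj b x → x = a ∨ x = d)
    (hah : G.Adj a h) (hab : G.Adj a b) (hdh : G.Adj d h) (hdb : G.Adj d b) (had : a ≠ d)
    (hhb : h ≠ b) (haw : G.Adj a w) (hwh : w ≠ h) (hwb : w ≠ b) : False := by
  obtain ⟨x, y, e1, e2, e3, e4, e5, e6⟩ := hG.inC4 haw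
  have hN : ∀ z, G.Adj a z → z = h ∨ z = b ∨ z = w := fun z hz =>
    adj_of_deg_three (hG.deg_le_three a) hah hab haw hhb hwh.symm hwb.symm hz
  have hx : x = d := by
    rcases hN y e4.symm with rfl | rfl | rfl
    · exact (h1 x e3.symm).resolve_left e5.symm
    · exact (h2 x e3.symm).resolve_left e5.symm
    · exact absurd rfl e6
  subst hx
  have h3 := (hG.subset (v := x) (h := a) had (fun z hz => by
    rcases hN z hz with rfl | rfl | rfl
    · exact hdh
    · exact hdb
    · exact e2.symm)).1
  have h4 := three_le_lnk hdh hdb e2.symm hhb hwh.symm hwb.symm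
  omega

/-- With degrees at most `3`, a component with `phi = 2` has load at least `4`. Otherwise a vertex
`h` of this `4`-cycle sends no edge out of it; then `h` and its opposite vertex are twins, and the
edges leaving the component contradict `MinCounter.twin`. -/
theorem MinCounter.two_phi_le {V : Type u} [Fintype V] {G : SimpleGraph V} (hG : MinCounter G)
    {v : V} (c : (del G (clN G v)).ConnectedComponent) :
    2 * phi G (del G (clN G v)) {v} c ≤ load G (clN G v) c := by
  classical
  by_contra hlt
  have hvS : v ∈ clN G v := mem_clN.2 (Or.inl rfl)
  obtain ⟨x, y, z, t, hx, hxC, -⟩ := phi_pos (show 1 ≤ phi G (del G (clN G v)) {v} c by omega)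
  have h1 := hG.two_le_load hxC
  rw [hx] at h1
  have h2 := phi_le_two G (del G (clN G v)) {v} c
  have hiso := phi_two_iso (show 2 ≤ phi G (del G (clN G v)) {v} c by omega)
  have hcS : ∀ u, (del G (clN G v)).connectedComponentMk u = c → u ∉ clN G v := fun u hu =>
    hxC.notMem_del (hu.trans hx.symm)
  -- At most three edges leave the component, so one of its vertices has none.
  obtain ⟨h, hh, hh0⟩ : ∃ h, (del G (clN G v)).connectedComponentMk h = c ∧
      lnk G (clN G v) h = 0 := by
    by_contra! hcon
    obtain ⟨hy, hz, ht⟩ := hxC.same_comp hx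
    have h3 := le_load (S := clN G v) (c := c) {x, y, z, t} (by
      simp only [Finset.mem_insert, Finset.mem_singleton]
      rintro u (rfl | rfl | rfl | rfl) <;> exact ⟨‹_›, hcS _ ‹_›⟩)
    obtain ⟨e1, e2, e3, e4, e5, e6⟩ := hxC
    rw [Finset.sum_insert (by simp [e1.ne, e5, e4.ne']), Finset.sum_insert (by simp [e2.ne, e6]),
      Finset.sum_pair e3.ne] at h3
    have := hcon x hx
    have := hcon y hy
    have := hcon z hz
    have := hcon t ht
    omega
  obtain ⟨a, b, d, hC, hall, n1, -, n3, -⟩ := comp_C4 hiso hh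
  obtain ⟨hca, hcb, hcd⟩ := hC.same_comp hh
  have hhb : h ≠ b := hC.2.2.2.2.1
  have had : a ≠ d := hC.2.2.2.2.2
  have hN1 : ∀ x, G.Adj h x → x = a ∨ x = d := by
    intro z hz
    by_cases hzS : z ∈ clN G v
    · have := le_lnk (G := G) (S := clN G v) (u := h) {z} (by simp [hz, hzS])
      simp [hh0] at this
    · exact n1 z ⟨hz, hcS h hh, hzS⟩
  have hab : G.Adj a b := hC.2.1.1
  have hdb : G.Adj d b := hC.2.2.1.1.symm
  have hah : G.Adj a h := hC.1.1.symm
  have hdh : G.Adj d h := hC.2.2.2.1.1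
  have hdeg := (hG.subset (v := b) (h := h) hhb (fun z hz => by
    rcases hN1 z hz with rfl | rfl
    · exact hab.symm
    · exact hdb.symm)).1
  have hN2 : ∀ x, G.Adj b x → x = a ∨ x = d := by
    intro z hz
    by_contra! hcon
    have := three_le_lnk hab.symm hdb.symm hz had hcon.1.symm hcon.2.symm
    omega
  obtain ⟨p, q, hpq, hp, hq⟩ := exists_cross hG.conn hh (y := v) (fun hv => hcS v hv hvS)
  have hqh : q ≠ h := by rintro rfl; exact hq hh
  have hqb : q ≠ b := by rintro rfl; exact hq hcb
  rcases hall p hp with rfl | rfl | rfl | rfl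
  · rcases hN1 q hpq with rfl | rfl
    · exact hq hca
    · exact hq hcd
  · exact hG.twin hN1 hN2 hah hab hdh hdb had hhb hpq hqh hqb
  · rcases hN2 q hpq with rfl | rfl
    · exact hq hca
    · exact hq hcd
  · exact hG.twin (fun x hx => (hN1 x hx).symm) (fun x hx => (hN2 x hx).symm) hdh hdb hah hab
      had.symm hhb hpq hqh hqb

/-- By `MinCounter.two_phi_le` and the basic inequality the degrees in `N[v]` add up to at most `8`,
whereas a vertex of degree `3` and its neighbours give at least `3 + 3 * 2`. -/
theorem MinCounter.deg_le_two {V : Type u} [Fintype V] {G : SimpleGraph V} (h : MinCounter G)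
    (v : V) : lnk G Finset.univ v ≤ 2 := by
  classical
  by_contra hd
  have := Fintype.ofFinite (del G (clN G v)).ConnectedComponent
  have h1 := h.charge' v
  have h2 := load_add G (clN G v)
  have h3 := Finset.sum_le_sum (fun c (_ : c ∈ Finset.univ) => h.two_phi_le (v := v) c)
  rw [← Finset.mul_sum] at h3
  have hvS : v ∈ clN G v := mem_clN.2 (Or.inl rfl)
  have h4 : 9 ≤ ∑ u ∈ clN G v, lnk G Finset.univ u := by
    rw [← Finset.add_sum_erase _ _ hvS]
    have hc : lnk G Finset.univ v ≤ ((clN G v).erase v).card := by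
      refine Finset.card_le_card fun x hx => ?_
      have hx : G.Adj v x := by simpa using hx
      simp [mem_clN, hx, hx.ne']
    have h5 := Finset.card_nsmul_le_sum ((clN G v).erase v) (fun u => lnk G Finset.univ u) 2
      (fun u _ => h.two_le_deg u)
    simp only [smul_eq_mul] at h5
    omega
  zify at h2 h4
  push_cast at h1
  linarith

/-! ### Conclusion -/

/-- With all degrees at most `2`, a `4`-cycle of the connected graph `G` is all of `G`. -/
theorem not_minCounter {V : Type u} [Fintype V] {G : SimpleGraph V} (h : MinCounter G) :
    False := by
  obtain ⟨x, y, z, t, e1, e2, e3, e4, e5, e6⟩ := h.exists_C4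
  have key : ∀ u a b w, G.Adj u a → G.Adj u b → a ≠ b → G.Adj u w → w = a ∨ w = b := by
    intro u a b w ha hb hab hw
    by_contra! hcon
    have := three_le_lnk ha hb hw hab hcon.1.symm hcon.2.symm
    have := h.deg_le_two u
    omega
  have nx := fun w => key x y t w e1 e4.symm e6
  have ny := fun w => key y x z w e1.symm e2 e5
  have nz := fun w => key z y t w e2.symm e3 e6
  have nt := fun w => key t x z w e4 e3.symm e5
  have hall : ∀ u, u = x ∨ u = y ∨ u = z ∨ u = t := fun u =>
    mem_of_closed {u | u = x ∨ u = y ∨ u = z ∨ u = t} (by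
      simp only [Set.mem_ofPred_eq]
      rintro p (rfl | rfl | rfl | rfl) q hq
      · have := nx q hq; tauto
      · have := ny q hq; tauto
      · have := nz q hq; tauto
      · have := nt q hq; tauto) (Or.inl rfl) (h.conn.preconnected x u)
  have h1 : ¬ G.Adj x z := fun hxz => by
    rcases nx z hxz with rfl | rfl
    · exact e2.ne rfl
    · exact e3.ne rfl
  have h2 : ¬ G.Adj y t := fun hyt => by
    rcases ny t hyt with rfl | rfl
    · exact e4.ne rfl
    · exact e3.ne rfl
  let f : Fin 4 → V := ![x, y, z, t]
  have hinj : Function.Injective f := by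
    intro i j hij
    have := e1.ne
    have := e2.ne
    have := e3.ne
    have := e4.ne
    fin_cases i <;> fin_cases j <;> simp [f] at hij ⊢ <;> grind
  have hsurj : Function.Surjective f := by
    intro u
    rcases hall u with rfl | rfl | rfl | rfl
    exacts [⟨0, rfl⟩, ⟨1, rfl⟩, ⟨2, rfl⟩, ⟨3, rfl⟩]
  have hbij : Function.Bijective f := ⟨hinj, hsurj⟩
  refine h.ne ⟨(SimpleGraph.Iso.symm ⟨Equiv.ofBijective f hbij, ?_⟩)⟩
  intro i j
  have h1' : ¬ G.Adj z x := fun h => h1 h.symm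
  have h2' : ¬ G.Adj t y := fun h => h2 h.symm
  change G.Adj (f i) (f j) ↔ _
  fin_cases i <;> fin_cases j <;>
    simp [f, cycleGraph_adj, e1, e2, e3, e4, e1.symm, e2.symm, e3.symm, e4.symm, h1, h2, h1', h2']
      <;> decide

theorem good_of_connected (n : ℕ) : ∀ (V : Type u) [Fintype V] (G : SimpleGraph V),
    G.Connected → G.edgeSet.ncard = n → ¬ Nonempty (G ≃g cycleGraph 4) → Good G := by
  induction n using Nat.strong_induction_on with
  | _ n ih =>
    intro V _ G hconn hn hne
    by_contra hbad
    refine not_minCounter (G := G) ⟨hconn, hne, hbad, fun W _ H hH hlt hHne => ?_⟩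
    exact ih _ (hn ▸ hlt) W H hH rfl hHne

theorem isolNum_le {V : Type u} {G : SimpleGraph V} {D : Finset V}
    (hD : ∀ a b c d, C4 G a b c d → Hits G D a b c d) :
    isolNum G (cycleGraph 4) ≤ D.card := by
  refine Nat.sInf_le ⟨D, ?_, Set.ncard_coe_finset D⟩
  rintro ⟨f, hf⟩
  have hadj : ∀ i j, (cycleGraph 4).Adj i j → G.Adj (f i).1 (f j).1 := fun i j hij =>
    f.map_adj hij
  have hne : ∀ i j, i ≠ j → (f i).1 ≠ (f j).1 := fun i j hij he =>
    hij (hf (Subtype.ext he))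
  obtain ⟨x, hx, u, hu, hux⟩ := hD (f 0).1 (f 1).1 (f 2).1 (f 3).1
    ⟨hadj _ _ (by decide), hadj _ _ (by decide), hadj _ _ (by decide), hadj _ _ (by decide),
      hne _ _ (by decide), hne _ _ (by decide)⟩
  have hxD : x ∈ closedNbhd G (D : Set V) := by
    rcases hux with rfl | hux
    · exact Or.inl hu
    · exact Or.inr ⟨u, hu, hux⟩
  rcases hx with rfl | rfl | rfl | rfl
  exacts [(f 0).2 hxD, (f 1).2 hxD, (f 2).2 hxD, (f 3).2 hxD]

theorem stmt0 {V : Type*} [Fintype V] (G : SimpleGraph V) [DecidableRel G.Adj]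
    (hconn : G.Connected) (hne : ¬ Nonempty (G ≃g cycleGraph 4)) (m : ℕ)
    (hm : m = G.edgeFinset.card) :
    (isolNum G (cycleGraph 4) : ℚ) ≤ (m + 1) / 6 := by
  obtain ⟨D, hD, hcard⟩ := good_of_connected _ V G hconn rfl hne
  have h1 := isolNum_le hD
  have h2 : G.edgeSet.ncard = m := by
    rw [hm, SimpleGraph.edgeFinset, Set.ncard_eq_toFinset_card']
  rw [h2] at hcard
  have h3 : 6 * isolNum G (cycleGraph 4) ≤ m + 1 := by omega
  rw [le_div_iff₀ (by norm_num)]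
  have h4 : ((6 * isolNum G (cycleGraph 4) : ℕ) : ℚ) ≤ ((m + 1 : ℕ) : ℚ) := by exact_mod_cast h3
  push_cast at h4
  linarith
end

section
/- Let G be a connected graph with m edges that is not isomorphic to C_4. Then ι(G, C_4) = (m + 1)/6 if and only if G is isomorphic to K_4^- or G ∈ 𝒢_4, i.e., G is isomorphic to cons(T, C_4) for some tree T. -/
/-!
Write `m(A)` for the number of edges inside a vertex set `A`, and call a set `D` *killing* for `A`
if every 4-cycle in `A` meets `N[D]`. The theorem follows from a dichotomy for connected vertex sets
`W` which do not induce `C₄`: either some killing set has `6|D| ≤ m(W)`, which is `Str`, or `W` is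
tight, i.e. induces the diamond or `cons(T, C₄)` (`dichotomy`). Tight graphs have killing sets with
`6|D| ≤ m(W) + 1`, so `6 ι ≤ m + 1` always, with strict inequality outside the tight families.
Conversely the 4-cycle parts of `cons(T, C₄)` lie in `|V(T)| = (m + 1) / 6` disjoint blocks, each of
which must contain a vertex of any isolating set (`card_le_isolNum`).

The dichotomy is proved by strong induction on `W`.

* *A bridge with neither side a `C₄`.* Killing sets of the two sides are united, and the bridge
  itself supplies one edge. This gives `Str` unless both sides are tight. A tight graph has an
  optimal killing set through any prescribed vertex (`IsCons.exists_mem`), and deleting any vertex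
  outside the tree saves one element of a killing set (`IsCons.erase`). Hence `Str` holds unless
  the bridge joins tree vertices of two graphs `cons(T, C₄)`, and then `W` is such a graph again
  (`bridge`).

* *An induced 4-cycle `Q` with one or two outgoing edges.* Pick an outer neighbour `x` of `Q` into
  `D`, and delete `Q` and `x`; the components of the rest are treated inductively
  (`reduction_Q`). The exception is `W = Q ∪ {x}` with one edge from `x` to `Q`, which is
  `cons(K₁, C₄)`.

* *No bridge, and at least three edges leaving every induced 4-cycle* (`two_connected_case`).
  Pick a vertex `v` into `D`, and delete a set `Y`. A component `c` of `W \ Y` sending `e ≥ 2` edges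
  to `Y` (`e ≥ 3` if it is a `C₄`) has at least `e / 3` edges more than its killing set
  needs (`comp_gain`), so it suffices that `m(Y) + ⌈e(W \ Y, Y) / 3⌉ ≥ 6` (`reduction`). For a
  vertex `v` of degree at least four, `Y = N[v]` works because all degrees are at least two.
  In a subcubic graph, a 4-cycle with a chord is the closed neighbourhood `N[v] = Y` of an
  end `v` of the chord, and here the diamond is the only exception. For an induced 4-cycle `Q`,
  one takes `Y = Q` and `v ∈ Q` with a neighbour outside `Q`. If exactly three edges leave `Q`, a
  component inducing `C₄` receives them all and so is met by `N[v]`; then every component has a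
  surplus of at least `e / 2`, which suffices.
-/

open SimpleGraph

namespace C4Iso

set_option linter.unusedSectionVars false
set_option linter.unusedVariables false
set_option linter.unusedSimpArgs false

section Core

/-! ### Counting edges between sets, 4-cycles and killing sets -/

variable {V : Type*} [DecidableEq V] (G : SimpleGraph V)

open Classical in
/-- The number of ordered pairs `(a, b) ∈ A × B` with `a` adjacent to `b`. Hence `pe G A A` is twice
the number of edges inside `A`, and for disjoint `A`, `B` it is the number of edges between them. -/
noncomputable def pe (A B : Finset V) : ℕ :=
  ((A ×ˢ B).filter (fun x => G.Adj x.1 x.2)).card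

/-- `a, b, c, d` are the consecutive vertices of a (not necessarily induced) 4-cycle. -/
def Cyc (a b c d : V) : Prop :=
  G.Adj a b ∧ G.Adj b c ∧ G.Adj c d ∧ G.Adj d a ∧ a ≠ c ∧ b ≠ d

/-- `u` lies in the closed neighbourhood of `D`. -/
def Dom (D : Finset V) (u : V) : Prop := ∃ x ∈ D, x = u ∨ G.Adj x u

/-- Every 4-cycle inside `A` meets the closed neighbourhood of `D`. The set `D` need not lie inside
`A`, so that killing sets of parts of a graph may be united freely. -/
def Kills (A D : Finset V) : Prop :=
  ∀ a ∈ A, ∀ b ∈ A, ∀ c ∈ A, ∀ d ∈ A, Cyc G a b c d →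
    Dom G D a ∨ Dom G D b ∨ Dom G D c ∨ Dom G D d

/-- `A` induces a connected subgraph, expressed through cuts. -/
def Conn (A : Finset V) : Prop :=
  A.Nonempty ∧ ∀ B ⊆ A, B.Nonempty → B ≠ A → pe G B (A \ B) ≠ 0

/-- `A` induces a copy of `C₄`. -/
def IsC4 (A : Finset V) : Prop :=
  ∃ a b c d, A = {a, b, c, d} ∧ Cyc G a b c d ∧ ¬ G.Adj a c ∧ ¬ G.Adj b d

/-- `A` induces a copy of the diamond. -/
def IsDia (A : Finset V) : Prop :=
  ∃ a b c d, A = {a, b, c, d} ∧ Cyc G a b c d ∧ G.Adj a c ∧ ¬ G.Adj b d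

/-- `IsCons G A R`: `A` induces `cons(T, C₄)` for a tree `T` with vertex set `R`. Such graphs are
built from 4-cycles with a pendant vertex (the case `|R| = 1`) by joining two of them by a single
edge between tree vertices. -/
inductive IsCons : Finset V → Finset V → Prop
  | base {r a b c d : V} (hc : Cyc G a b c d) (h1 : ¬ G.Adj a c) (h2 : ¬ G.Adj b d)
      (hra : G.Adj r a) (hrb : ¬ G.Adj r b) (hrc : ¬ G.Adj r c) (hrd : ¬ G.Adj r d)
      (hb : r ≠ b) (hc : r ≠ c) (hd : r ≠ d) : IsCons {r, a, b, c, d} {r}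
  | join {A B R S : Finset V} {r s : V} (hA : IsCons A R) (hB : IsCons B S)
      (hd : Disjoint A B) (hr : r ∈ R) (hs : s ∈ S) (hrs : G.Adj r s) (h1 : pe G A B = 1) :
      IsCons (A ∪ B) (R ∪ S)

/-- `A` has a set `D` killing its 4-cycles with `6|D| ≤ m(A)`, so that `ι < (m + 1) / 6`.
The factor `12` appears since `pe G A A` is twice the number of edges. -/
def Str (A : Finset V) : Prop := ∃ D, Kills G A D ∧ 12 * D.card ≤ pe G A A

variable {G}

lemma pe_comm (A B : Finset V) : pe G A B = pe G B A := by
  classical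
  unfold pe
  refine Finset.card_bij' (fun x _ => (x.2, x.1)) (fun x _ => (x.2, x.1)) ?_ ?_ ?_ ?_
  · intro x hx; simp at hx ⊢; exact ⟨⟨hx.1.2, hx.1.1⟩, hx.2.symm⟩
  · intro x hx; simp at hx ⊢; exact ⟨⟨hx.1.2, hx.1.1⟩, hx.2.symm⟩
  · intro x _; rfl
  · intro x _; rfl

open Classical in
lemma pe_eq_sum (A B : Finset V) :
    pe G A B = ∑ a ∈ A, ∑ b ∈ B, if G.Adj a b then 1 else 0 := by
  unfold pe
  rw [Finset.card_filter, Finset.sum_product]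

lemma pe_union_left {A B : Finset V} (h : Disjoint A B) (C : Finset V) :
    pe G (A ∪ B) C = pe G A C + pe G B C := by
  classical
  simp only [pe_eq_sum]; rw [Finset.sum_union h]

lemma pe_union_right {A B : Finset V} (h : Disjoint A B) (C : Finset V) :
    pe G C (A ∪ B) = pe G C A + pe G C B := by
  rw [pe_comm, pe_union_left h, pe_comm A, pe_comm B]

lemma pe_mono {A B A' B' : Finset V} (h : A ⊆ A') (h' : B ⊆ B') : pe G A B ≤ pe G A' B' := by
  classical
  unfold pe
  exact Finset.card_le_card (Finset.filter_subset_filter _ (Finset.product_subset_product h h'))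

lemma pe_ne_zero {A B : Finset V} : pe G A B ≠ 0 ↔ ∃ a ∈ A, ∃ b ∈ B, G.Adj a b := by
  classical
  unfold pe
  rw [Finset.card_ne_zero]
  constructor
  · rintro ⟨x, hx⟩; simp at hx; exact ⟨x.1, hx.1.1, x.2, hx.1.2, hx.2⟩
  · rintro ⟨a, ha, b, hb, h⟩; exact ⟨(a, b), by simp [ha, hb, h]⟩

/-- If at most one edge joins `A` to `B`, then it is determined by its existence. -/
lemma pe_le_one {A B : Finset V} (h : pe G A B ≤ 1) {a b a' b' : V} (ha : a ∈ A) (hb : b ∈ B)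
    (hab : G.Adj a b) (ha' : a' ∈ A) (hb' : b' ∈ B) (hab' : G.Adj a' b') : a = a' ∧ b = b' := by
  classical
  unfold pe at h
  have := Finset.card_le_one.mp h (a, b) (by simp [ha, hb, hab]) (a', b') (by simp [ha', hb', hab'])
  simpa using this

lemma pe_self_union {A B : Finset V} (h : Disjoint A B) :
    pe G (A ∪ B) (A ∪ B) = pe G A A + pe G B B + 2 * pe G A B := by
  rw [pe_union_left h, pe_union_right h, pe_union_right h, pe_comm B A]; ring

lemma pe_self_single (a : V) : pe G {a} {a} = 0 := by
  classical
  simp [pe_eq_sum]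

open Classical in
lemma pe_single (a : V) (B : Finset V) : pe G {a} B = (B.filter (G.Adj a)).card := by
  rw [pe_eq_sum, Finset.card_filter]; simp

lemma pe_even (A : Finset V) : ∃ k, pe G A A = 2 * k := by
  classical
  induction A using Finset.induction_on with
  | empty => exact ⟨0, by simp [pe_eq_sum]⟩
  | insert a s ha ih =>
    obtain ⟨k, hk⟩ := ih
    rw [Finset.insert_eq, pe_self_union (by simpa using ha), pe_self_single, hk]
    exact ⟨k + pe G {a} s, by ring⟩

lemma pe_split {W Y : Finset V} (h : Y ⊆ W) :
    pe G W W = pe G Y Y + pe G (W \ Y) (W \ Y) + 2 * pe G (W \ Y) Y := by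
  conv_lhs => rw [← Finset.union_sdiff_of_subset h]
  rw [pe_self_union Finset.disjoint_sdiff, pe_comm Y (W \ Y)]

lemma pe_split_right {A W Y : Finset V} (h : Y ⊆ W) :
    pe G A W = pe G A Y + pe G A (W \ Y) := by
  conv_lhs => rw [← Finset.union_sdiff_of_subset h]
  rw [pe_union_right Finset.disjoint_sdiff]

lemma Cyc.rot {a b c d : V} (h : Cyc G a b c d) : Cyc G b c d a := by
  obtain ⟨h1, h2, h3, h4, h5, h6⟩ := h
  exact ⟨h2, h3, h4, h1, h6, h5.symm⟩

lemma Dom.mono {D D' : Finset V} (h : D ⊆ D') {u : V} (hu : Dom G D u) : Dom G D' u := by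
  obtain ⟨x, hx, h'⟩ := hu; exact ⟨x, h hx, h'⟩

lemma Kills.mono {A D D' : Finset V} (h : D ⊆ D') (hk : Kills G A D) : Kills G A D' := by
  intro a ha b hb c hc d hd hcyc
  rcases hk a ha b hb c hc d hd hcyc with h1 | h1 | h1 | h1
  · exact Or.inl (h1.mono h)
  · exact Or.inr (Or.inl (h1.mono h))
  · exact Or.inr (Or.inr (Or.inl (h1.mono h)))
  · exact Or.inr (Or.inr (Or.inr (h1.mono h)))

/-- A 4-cycle cannot cross a cut consisting of at most one edge. -/
lemma cyc_split {A B : Finset V} (hd : Disjoint A B) (hp : pe G A B ≤ 1) {a b c d : V}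
    (h : Cyc G a b c d) (ha : a ∈ A ∪ B) (hb : b ∈ A ∪ B) (hc : c ∈ A ∪ B) (hdd : d ∈ A ∪ B) :
    (a ∈ A ∧ b ∈ A ∧ c ∈ A ∧ d ∈ A) ∨ (a ∈ B ∧ b ∈ B ∧ c ∈ B ∧ d ∈ B) := by
  obtain ⟨h1, h2, h3, h4, h5, h6⟩ := h
  have key : ∀ {x y x' y'}, x ∈ A → y ∈ B → G.Adj x y → x' ∈ A → y' ∈ B → G.Adj x' y' →
    x = x' ∧ y = y' := fun hx hy h hx' hy' h' => pe_le_one hp hx hy h hx' hy' h'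
  rw [Finset.mem_union] at ha hb hc hdd
  have n1 := h1.ne; have n2 := h2.ne; have n3 := h3.ne; have n4 := h4.ne
  have s1 := h1.symm; have s2 := h2.symm; have s3 := h3.symm; have s4 := h4.symm
  rcases ha with ha | ha <;> rcases hb with hb | hb <;> rcases hc with hc | hc <;>
    rcases hdd with hdd | hdd
  · tauto
  · exact absurd (key hc hdd h3 ha hdd s4).1 h5.symm
  · exact absurd (key hb hc h2 hdd hc s3).1 h6
  · exact absurd (key hb hc h2 ha hdd s4).1 n1.symm
  · exact absurd (key ha hb h1 hc hb s2).1 h5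
  · exact absurd (key ha hb h1 hc hb s2).1 h5
  · exact absurd (key ha hb h1 hdd hc s3).1 n4.symm
  · exact absurd (key ha hb h1 ha hdd s4).2 h6
  · exact absurd (key hb ha s1 hdd ha h4).1 h6
  · exact absurd (key hb ha s1 hc hdd h3).1 n2
  · exact absurd (key hb ha s1 hdd ha h4).1 h6
  · exact absurd (key hb ha s1 hb hc h2).2 h5
  · exact absurd (key hc hb s2 hdd ha h4).1 n3
  · exact absurd (key hc hb s2 hc hdd h3).2 h6
  · exact absurd (key hdd hc s3 hdd ha h4).2 h5.symm
  · tauto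

lemma kills_union {A B DA DB : Finset V} (hd : Disjoint A B) (hp : pe G A B ≤ 1)
    (hA : Kills G A DA) (hB : Kills G B DB) : Kills G (A ∪ B) (DA ∪ DB) := by
  intro a ha b hb c hc d hdd h
  rcases cyc_split hd hp h ha hb hc hdd with ⟨h1, h2, h3, h4⟩ | ⟨h1, h2, h3, h4⟩
  · exact hA.mono Finset.subset_union_left a h1 b h2 c h3 d h4 h
  · exact hB.mono Finset.subset_union_right a h1 b h2 c h3 d h4 h

lemma Cyc.card {a b c d : V} (h : Cyc G a b c d) : ({a, b, c, d} : Finset V).card = 4 := by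
  obtain ⟨h1, h2, h3, h4, h5, h6⟩ := h
  have n1 := h1.ne; have n2 := h2.ne; have n3 := h3.ne; have n4 := h4.ne.symm
  rw [Finset.card_insert_of_notMem (by simp [*]), Finset.card_insert_of_notMem (by simp [*]),
    Finset.card_pair n3]

lemma IsC4.card {A : Finset V} (h : IsC4 G A) : A.card = 4 := by
  obtain ⟨a, b, c, d, rfl, h, -⟩ := h; exact h.card

/-- A 4-cycle inside a set of at most four vertices passes through all of them. -/
lemma Cyc.mem_of_card {A : Finset V} (hA : A.card ≤ 4) {a b c d : V} (h : Cyc G a b c d)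
    (ha : a ∈ A) (hb : b ∈ A) (hc : c ∈ A) (hd : d ∈ A) {x : V} (hx : x ∈ A) :
    x = a ∨ x = b ∨ x = c ∨ x = d := by
  have : ({a, b, c, d} : Finset V) = A := by
    apply Finset.eq_of_subset_of_card_le
    · intro y hy; simp at hy; rcases hy with rfl | rfl | rfl | rfl <;> assumption
    · rw [h.card]; exact hA
  rw [← this] at hx; simpa using hx

/-- A set dominating some vertex of a set of at most four vertices kills its 4-cycles. -/
lemma kills_of_card {A D : Finset V} (hA : A.card ≤ 4) {x : V} (hx : x ∈ A) (hD : Dom G D x) :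
    Kills G A D := by
  intro a ha b hb c hc d hd h
  rcases h.mem_of_card hA ha hb hc hd hx with rfl | rfl | rfl | rfl <;> tauto

lemma kills_of_card_lt {A D : Finset V} (hA : A.card < 4) : Kills G A D := by
  intro a ha b hb c hc d hd h
  have : ({a, b, c, d} : Finset V) ⊆ A := by
    intro y hy; simp at hy; rcases hy with rfl | rfl | rfl | rfl <;> assumption
  have := Finset.card_le_card this
  rw [h.card] at this; omega

lemma sum_four {a b c d : V} (h : Cyc G a b c d) (f : V → ℕ) :
    ∑ x ∈ ({a, b, c, d} : Finset V), f x = f a + f b + f c + f d := by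
  obtain ⟨h1, h2, h3, h4, h5, h6⟩ := h
  have n1 := h1.ne; have n2 := h2.ne; have n3 := h3.ne; have n4 := h4.ne.symm
  rw [Finset.sum_insert (by simp [*]), Finset.sum_insert (by simp [*]), Finset.sum_pair n3]
  ring

open Classical in
lemma pe_cyc {a b c d : V} (h : Cyc G a b c d) :
    pe G {a, b, c, d} {a, b, c, d} =
      8 + 2 * (if G.Adj a c then 1 else 0) + 2 * (if G.Adj b d then 1 else 0) := by
  have hs := fun f => sum_four h f
  obtain ⟨e1, e2, e3, e4, e5, e6⟩ := h
  rw [pe_eq_sum]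
  simp only [hs, e1, e2, e3, e4, e1.symm, e2.symm, e3.symm, e4.symm, G.adj_comm c a, G.adj_comm d b,
    SimpleGraph.irrefl, if_true, if_false]
  ring

lemma pe_four {a b c d : V} (h : Cyc G a b c d) (h1 : ¬ G.Adj a c) (h2 : ¬ G.Adj b d) :
    pe G {a, b, c, d} {a, b, c, d} = 8 := by
  rw [pe_cyc h]; simp [h1, h2]

lemma pe_dia {a b c d : V} (h : Cyc G a b c d) (h1 : G.Adj a c) (h2 : ¬ G.Adj b d) :
    pe G {a, b, c, d} {a, b, c, d} = 10 := by
  rw [pe_cyc h]; simp [h1, h2]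

lemma pe_K4 {a b c d : V} (h : Cyc G a b c d) (h1 : G.Adj a c) (h2 : G.Adj b d) :
    pe G {a, b, c, d} {a, b, c, d} = 12 := by
  rw [pe_cyc h]; simp [h1, h2]

lemma IsC4.pe_self {A : Finset V} (h : IsC4 G A) : pe G A A = 8 := by
  obtain ⟨a, b, c, d, rfl, h, h1, h2⟩ := h; exact pe_four h h1 h2


/-! ### Extremal graphs and bridges -/

lemma pe_base {r a b c d : V} (h : Cyc G a b c d)
    (hra : G.Adj r a) (hrb : ¬ G.Adj r b) (hrc : ¬ G.Adj r c) (hrd : ¬ G.Adj r d) :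
    pe G {r} {a, b, c, d} = 1 := by
  classical
  rw [pe_eq_sum, Finset.sum_singleton, sum_four h]; simp [*]

lemma base_disj {r a b c d : V} (hra : G.Adj r a) (hb : r ≠ b) (hc : r ≠ c) (hd : r ≠ d) :
    Disjoint ({r} : Finset V) {a, b, c, d} := by
  have := hra.ne
  simp [*]

lemma not_cyc_single {r a b c d : V} (h : Cyc G a b c d) (ha : a ∈ ({r} : Finset V))
    (hc : c ∈ ({r} : Finset V)) : False := by
  simp at ha hc; exact h.2.2.2.2.1 (ha.trans hc.symm)

/-- In `cons(T, C₄)` every vertex belongs to some isolating set with `(m + 1) / 6` elements. -/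
lemma IsCons.exists_mem {A R : Finset V} (h : IsCons G A R) :
    ∀ z ∈ A, ∃ D, z ∈ D ∧ Kills G A D ∧ 12 * D.card ≤ pe G A A + 2 := by
  induction h with
  | @base r a b c d hcy h1 h2 hra hrb hrc hrd hb hc hd =>
    intro z hz
    have hp := pe_base hcy hra hrb hrc hrd
    have hdis := base_disj (G := G) hra hb hc hd
    refine ⟨{z}, by simp, ?_, ?_⟩
    · rw [Finset.insert_eq] at hz ⊢
      intro a' ha' b' hb' c' hc' d' hd' h'
      rcases cyc_split hdis hp.le h' ha' hb' hc' hd' with ⟨i1, i2, i3, i4⟩ | ⟨i1, i2, i3, i4⟩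
      · exact (not_cyc_single h' i1 i3).elim
      · rcases Finset.mem_union.mp hz with hz | hz
        · exact kills_of_card (x := a) hcy.card.le (by simp)
            ⟨z, by simp, by simp at hz; subst hz; exact Or.inr hra⟩ a' i1 b' i2 c' i3 d' i4 h'
        · exact kills_of_card hcy.card.le hz ⟨z, by simp, Or.inl rfl⟩ a' i1 b' i2 c' i3 d' i4 h'
    · rw [Finset.insert_eq, pe_self_union hdis, hp, pe_four hcy h1 h2]; simp
  | @join A B R S r s hA hB hd hr hs hrs h1 ihA ihB =>
    intro z hz
    have hcard := fun D E : Finset V => Finset.card_union_le D E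
    rw [pe_self_union hd, h1]
    have neA : A.Nonempty := by
      by_contra hne; rw [Finset.not_nonempty_iff_eq_empty] at hne
      rw [hne] at h1; simp [pe_eq_sum] at h1
    have neB : B.Nonempty := by
      by_contra hne; rw [Finset.not_nonempty_iff_eq_empty] at hne
      rw [hne] at h1; simp [pe_eq_sum] at h1
    rcases Finset.mem_union.mp hz with hz | hz
    · obtain ⟨D, hD, hk, hc⟩ := ihA z hz
      obtain ⟨y, hy⟩ := neB
      obtain ⟨E, -, hk', hc'⟩ := ihB y hy
      refine ⟨D ∪ E, by simp [hD], kills_union hd h1.le hk hk', ?_⟩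
      have := hcard D E; omega
    · obtain ⟨E, hE, hk', hc'⟩ := ihB z hz
      obtain ⟨y, hy⟩ := neA
      obtain ⟨D, -, hk, hc⟩ := ihA y hy
      refine ⟨D ∪ E, by simp [hE], kills_union hd h1.le hk hk', ?_⟩
      have := hcard D E; omega

/-- Deleting a vertex of one of the 4-cycles of `cons(T, C₄)` makes one vertex of an optimal
isolating set superfluous. -/
lemma IsCons.erase {A R : Finset V} (h : IsCons G A R) :
    ∀ x ∈ A, x ∉ R → ∃ D, Kills G (A.erase x) D ∧ 12 * D.card + 12 ≤ pe G A A + 2 := by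
  induction h with
  | @base r a b c d hcy h1 h2 hra hrb hrc hrd hb hc hd =>
    intro x hx hxr
    have hp := pe_base hcy hra hrb hrc hrd
    have hdis := base_disj (G := G) hra hb hc hd
    refine ⟨∅, ?_, ?_⟩
    · rw [Finset.insert_eq] at hx ⊢
      intro a' ha' b' hb' c' hc' d' hd' h'
      rw [Finset.mem_erase] at ha' hb' hc' hd'
      rcases cyc_split hdis hp.le h' ha'.2 hb'.2 hc'.2 hd'.2 with
        ⟨i1, i2, i3, i4⟩ | ⟨i1, i2, i3, i4⟩
      · exact (not_cyc_single h' i1 i3).elim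
      · have hx' := (Finset.mem_union.mp hx).resolve_left hxr
        rcases h'.mem_of_card hcy.card.le i1 i2 i3 i4 hx' with rfl | rfl | rfl | rfl
        · exact absurd rfl ha'.1
        · exact absurd rfl hb'.1
        · exact absurd rfl hc'.1
        · exact absurd rfl hd'.1
    · rw [Finset.insert_eq, pe_self_union hdis, hp, pe_four hcy h1 h2]; simp
  | @join A B R S r s hA hB hd hr hs hrs h1 ihA ihB =>
    intro x hx hxr
    rw [Finset.mem_union, not_or] at hxr
    have hcard := fun D E : Finset V => Finset.card_union_le D E
    rw [pe_self_union hd, h1]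
    have neA : A.Nonempty := by
      by_contra hne; rw [Finset.not_nonempty_iff_eq_empty] at hne
      rw [hne] at h1; simp [pe_eq_sum] at h1
    have neB : B.Nonempty := by
      by_contra hne; rw [Finset.not_nonempty_iff_eq_empty] at hne
      rw [hne] at h1; simp [pe_eq_sum] at h1
    have hdis : ∀ y, y ∈ A → y ∈ B → False := fun y h h' => Finset.disjoint_left.mp hd h h'
    rcases Finset.mem_union.mp hx with hx | hx
    · obtain ⟨D, hk, hc⟩ := ihA x hx hxr.1
      obtain ⟨y, hy⟩ := neB
      obtain ⟨E, -, hk', hc'⟩ := hB.exists_mem y hy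
      refine ⟨D ∪ E, ?_, ?_⟩
      · have he : (A ∪ B).erase x = A.erase x ∪ B := by
          rw [Finset.erase_union_distrib, Finset.erase_eq_of_notMem (fun h => hdis x hx h)]
        rw [he]
        exact kills_union (hd.mono_left (Finset.erase_subset _ _))
          ((pe_mono (Finset.erase_subset _ _) subset_rfl).trans h1.le) hk hk'
      · have := hcard D E; omega
    · obtain ⟨E, hk', hc'⟩ := ihB x hx hxr.2
      obtain ⟨y, hy⟩ := neA
      obtain ⟨D, -, hk, hc⟩ := hA.exists_mem y hy
      refine ⟨D ∪ E, ?_, ?_⟩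
      · have he : (A ∪ B).erase x = A ∪ B.erase x := by
          rw [Finset.erase_union_distrib, Finset.erase_eq_of_notMem (fun h => hdis x h hx)]
        rw [he]
        exact kills_union (hd.mono_right (Finset.erase_subset _ _))
          ((pe_mono subset_rfl (Finset.erase_subset _ _)).trans h1.le) hk hk'
      · have := hcard D E; omega

lemma IsDia.exists_mem {A : Finset V} (h : IsDia G A) :
    ∀ z ∈ A, ∃ D, z ∈ D ∧ Kills G A D ∧ 12 * D.card ≤ pe G A A + 2 := by
  obtain ⟨a, b, c, d, rfl, h, h1, h2⟩ := h
  intro z hz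
  refine ⟨{z}, by simp, kills_of_card h.card.le hz ⟨z, by simp, Or.inl rfl⟩, ?_⟩
  rw [pe_dia h h1 h2]; simp

lemma IsDia.erase {A : Finset V} (h : IsDia G A) :
    ∀ x ∈ A, ∃ D, Kills G (A.erase x) D ∧ 12 * D.card + 12 ≤ pe G A A + 2 := by
  obtain ⟨a, b, c, d, rfl, h, h1, h2⟩ := h
  intro z hz
  refine ⟨∅, kills_of_card_lt ?_, ?_⟩
  · rw [Finset.card_erase_of_mem hz, h.card]; norm_num
  · rw [pe_dia h h1 h2]; simp

variable (G) in
/-- The two families of graphs attaining the bound `ι ≤ (m + 1) / 6`. -/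
def Tight (A : Finset V) : Prop := IsDia G A ∨ ∃ R, IsCons G A R

lemma Tight.exists_mem {A : Finset V} (h : Tight G A) :
    ∀ z ∈ A, ∃ D, z ∈ D ∧ Kills G A D ∧ 12 * D.card ≤ pe G A A + 2 := by
  rcases h with h | ⟨R, h⟩
  · exact h.exists_mem
  · exact h.exists_mem

lemma bound_of {A : Finset V} (hA : A.Nonempty) (h : Str G A ∨ Tight G A) :
    ∃ D, Kills G A D ∧ 12 * D.card ≤ pe G A A + 2 := by
  rcases h with ⟨D, hk, hc⟩ | h
  · exact ⟨D, hk, by omega⟩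
  · obtain ⟨z, hz⟩ := hA
    obtain ⟨D, -, h⟩ := h.exists_mem z hz
    exact ⟨D, h⟩

/-- If `A` minus `x` can be isolated with one vertex less than the bound for `A` allows, and the
bridge `xz` leads to a tight graph, then `z` may be taken in the isolating set of the other side,
where it also dominates `x`. -/
lemma str_of_erase {A B : Finset V} (hd : Disjoint A B) (h1 : pe G A B = 1) {x z : V}
    (hz : z ∈ B) (hxz : G.Adj x z)
    (hA : ∃ D, Kills G (A.erase x) D ∧ 12 * D.card + 12 ≤ pe G A A + 2) (hB : Tight G B) :
    Str G (A ∪ B) := by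
  obtain ⟨D, hk, hc⟩ := hA
  obtain ⟨E, hzE, hk', hc'⟩ := hB.exists_mem z hz
  refine ⟨D ∪ E, ?_, ?_⟩
  · have hkA : Kills G A (D ∪ E) := by
      have hx : Dom G (D ∪ E) x := ⟨z, by simp [hzE], Or.inr hxz.symm⟩
      intro a ha b hb c hc d hdd h
      by_cases h1 : a = x
      · subst h1; exact Or.inl hx
      by_cases h2 : b = x
      · subst h2; exact Or.inr (Or.inl hx)
      by_cases h3 : c = x
      · subst h3; exact Or.inr (Or.inr (Or.inl hx))
      by_cases h4 : d = x
      · subst h4; exact Or.inr (Or.inr (Or.inr hx))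
      exact (hk.mono Finset.subset_union_left) a (by simp [*]) b (by simp [*]) c (by simp [*]) d
        (by simp [*]) h
    have := kills_union hd h1.le hkA hk'
    exact this.mono (by intro y; simp)
  · have := Finset.card_union_le D E
    rw [pe_self_union hd, h1]; omega

lemma Str.union {A B : Finset V} (hd : Disjoint A B) (h1 : pe G A B = 1) (hA : Str G A)
    (hB : ∃ D, Kills G B D ∧ 12 * D.card ≤ pe G B B + 2) : Str G (A ∪ B) := by
  obtain ⟨D, hk, hc⟩ := hA
  obtain ⟨E, hk', hc'⟩ := hB
  refine ⟨D ∪ E, kills_union hd h1.le hk hk', ?_⟩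
  have := Finset.card_union_le D E
  rw [pe_self_union hd, h1]; omega

/-- The dichotomy passes from the two sides of a bridge to the whole graph. -/
lemma bridge {A B : Finset V} (hd : Disjoint A B) (h1 : pe G A B = 1)
    (hA : Str G A ∨ Tight G A) (hB : Str G B ∨ Tight G B) : Str G (A ∪ B) ∨ Tight G (A ∪ B) := by
  obtain ⟨x, hx, z, hz, hxz⟩ := pe_ne_zero.mp (by rw [h1]; exact one_ne_zero)
  have h1' : pe G B A = 1 := by rw [pe_comm]; exact h1
  rcases hA with hA | hA
  · exact Or.inl (hA.union hd h1 (bound_of ⟨z, hz⟩ hB))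
  rcases hB with hB | hB
  · left; rw [Finset.union_comm]; exact hB.union hd.symm h1' (bound_of ⟨x, hx⟩ (Or.inr hA))
  have hA2 := hA
  rcases hA2 with hA' | ⟨R, hA'⟩
  · exact Or.inl (str_of_erase hd h1 hz hxz (hA'.erase x hx) hB)
  by_cases hxR : x ∈ R
  swap
  · exact Or.inl (str_of_erase hd h1 hz hxz (hA'.erase x hx hxR) hB)
  rcases hB with hB' | ⟨S, hB'⟩
  · left; rw [Finset.union_comm]
    exact str_of_erase hd.symm h1' hx hxz.symm (hB'.erase z hz) hA
  by_cases hzS : z ∈ S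
  swap
  · left; rw [Finset.union_comm]
    exact str_of_erase hd.symm h1' hx hxz.symm (hB'.erase z hz hzS) hA
  exact Or.inr (Or.inr ⟨R ∪ S, hA'.join hB' hd hxR hzS hxz h1⟩)

lemma pe_zero {A B : Finset V} (h : ∀ a ∈ A, ∀ b ∈ B, ¬ G.Adj a b) : pe G A B = 0 := by
  by_contra hne
  obtain ⟨a, ha, b, hb, hab⟩ := pe_ne_zero.mp hne
  exact h a ha b hb hab

/-- Each side of a bridge is connected. -/
lemma conn_side {W A : Finset V} (hW : Conn G W) (hA : A ⊆ W)
    (h1 : pe G A (W \ A) = 1) : Conn G A := by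
  have hne : A.Nonempty := by
    obtain ⟨a, ha, -⟩ := pe_ne_zero.mp (by rw [h1]; exact one_ne_zero)
    exact ⟨a, ha⟩
  refine ⟨hne, ?_⟩
  intro B hB hBn hBA h0
  have e1 : W \ B = (A \ B) ∪ (W \ A) := by
    ext y; simp only [Finset.mem_sdiff, Finset.mem_union]
    have := @hB y; have := @hA y; tauto
  have e2 : W \ (A \ B) = B ∪ (W \ A) := by
    ext y; simp only [Finset.mem_sdiff, Finset.mem_union]
    have := @hB y; have := @hA y; tauto
  have d1 : Disjoint (A \ B) (W \ A) := by
    rw [Finset.disjoint_left]; intro y; simp only [Finset.mem_sdiff]; tauto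
  have d2 : Disjoint B (W \ A) := by
    rw [Finset.disjoint_left]; intro y; simp only [Finset.mem_sdiff]; have := @hB y; tauto
  have hABn : (A \ B).Nonempty := by
    rw [Finset.sdiff_nonempty]; intro h; exact hBA (subset_antisymm hB h)
  have c1 := hW.2 B (hB.trans hA) hBn (by rintro rfl; exact hBA (subset_antisymm hB hA))
  have c2 := hW.2 (A \ B) (Finset.sdiff_subset.trans hA) hABn (by
    intro h
    obtain ⟨b, hb⟩ := hBn
    have : b ∈ A \ B := by rw [h]; exact hA (hB hb)
    simp [hb] at this)
  rw [e1, pe_union_right d1, h0] at c1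
  rw [e2, pe_union_right d2, pe_comm (A \ B) B, h0] at c2
  have e3 : pe G A (W \ A) = pe G B (W \ A) + pe G (A \ B) (W \ A) := by
    conv_lhs => rw [← Finset.union_sdiff_of_subset hB]
    rw [pe_union_left Finset.disjoint_sdiff, Finset.union_sdiff_of_subset hB]
  omega

/-! ### Reduction by one vertex -/

/-- Reduction by one vertex `v`. Suppose the 4-cycles not meeting `N[v]` all avoid `Y`. Suppose that
every component `c` of `W \ Y` has a set `D` which kills it together with `v`, such that
`m(c) + e(c, Y)` exceeds `6|D|` by some `S ≥ e(c, Y) / t`. If the total surplus and the edges inside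
`Y` sum to at least six, they pay for `v`, and the strict bound holds for `W`. -/
lemma reduction {W Y : Finset V} (v : V) (t : ℕ) (hY : Y ⊆ W)
    (h1 : ∀ a ∈ W, ∀ b ∈ W, ∀ c ∈ W, ∀ d ∈ W, Cyc G a b c d → ¬ Dom G {v} a → ¬ Dom G {v} b →
      ¬ Dom G {v} c → ¬ Dom G {v} d → a ∉ Y ∧ b ∉ Y ∧ c ∉ Y ∧ d ∉ Y)
    (hc : ∀ c ⊆ W \ Y, Conn G c → pe G c (W \ c) = pe G c Y → ∃ (D : Finset V) (S : ℕ),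
      Kills G c (insert v D) ∧ 12 * D.card + 2 * S ≤ pe G c c + 2 * pe G c Y ∧
        pe G c Y ≤ t * S)
    (hS : ∀ S, pe G (W \ Y) Y ≤ t * S → 12 ≤ pe G Y Y + 2 * S) : Str G W := by
  -- The surplus is additive over unions of components of `W \ Y`, by splitting along empty cuts.
  have claim : ∀ Z' : Finset V, Z' ⊆ W \ Y → pe G Z' ((W \ Y) \ Z') = 0 →
      ∃ (D : Finset V) (S : ℕ), Kills G Z' (insert v D) ∧
        12 * D.card + 2 * S ≤ pe G Z' Z' + 2 * pe G Z' Y ∧ pe G Z' Y ≤ t * S := by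
    intro Z'
    induction Z' using Finset.strongInduction with
    | H Z' ih =>
    intro hsub h0
    rcases Z'.eq_empty_or_nonempty with rfl | hne
    · exact ⟨∅, 0, by intro a ha; simp at ha, by simp, by simp [pe_eq_sum]⟩
    by_cases hconn : Conn G Z'
    · refine hc Z' hsub hconn ?_
      have : W \ Z' = Y ∪ ((W \ Y) \ Z') := by
        ext y; simp only [Finset.mem_sdiff, Finset.mem_union]
        have := @hsub y; have := @hY y; simp only [Finset.mem_sdiff] at *; tauto
      rw [this, pe_union_right, h0, add_zero]
      rw [Finset.disjoint_left]; intro y; simp only [Finset.mem_sdiff]; tauto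
    · have : ∃ B ⊆ Z', B.Nonempty ∧ B ≠ Z' ∧ pe G B (Z' \ B) = 0 := by
        by_contra hcon; push Not at hcon; exact hconn ⟨hne, hcon⟩
      obtain ⟨B, hB, hBn, hBZ, hB0⟩ := this
      have hz : ∀ a ∈ Z', ∀ b ∈ (W \ Y) \ Z', ¬ G.Adj a b := fun a ha b hb hab =>
        (pe_ne_zero.mpr ⟨a, ha, b, hb, hab⟩) h0
      have hb0 : ∀ a ∈ B, ∀ b ∈ Z' \ B, ¬ G.Adj a b := fun a ha b hb hab =>
        (pe_ne_zero.mpr ⟨a, ha, b, hb, hab⟩) hB0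
      have hss : B ⊂ Z' := lt_of_le_of_ne hB hBZ
      have hss' : Z' \ B ⊂ Z' := Finset.sdiff_ssubset hB hBn
      obtain ⟨D1, S1, k1, l1, m1⟩ := ih B hss (hB.trans hsub) (by
        apply pe_zero; intro a ha b hb
        by_cases hbz : b ∈ Z'
        · exact hb0 a ha b (by simp at hb ⊢; tauto)
        · exact hz a (hB ha) b (by simp at hb ⊢; tauto))
      obtain ⟨D2, S2, k2, l2, m2⟩ := ih (Z' \ B) hss' (Finset.sdiff_subset.trans hsub) (by
        apply pe_zero; intro a ha b hb
        by_cases hbz : b ∈ Z'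
        · intro hab
          exact hb0 b (by simp at hb ⊢; tauto) a ha hab.symm
        · exact hz a (Finset.sdiff_subset ha) b (by simp at hb ⊢; tauto))
      have hun : B ∪ (Z' \ B) = Z' := Finset.union_sdiff_of_subset hB
      have hdis : Disjoint B (Z' \ B) := Finset.disjoint_sdiff
      have hk := kills_union hdis (by rw [hB0]; exact zero_le_one) k1 k2
      have hself := pe_self_union (G := G) hdis
      have hpy := pe_union_left (G := G) hdis Y
      rw [hun] at hk hself hpy
      refine ⟨D1 ∪ D2, S1 + S2, hk.mono (by intro y; simp), ?_, ?_⟩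
      · have := Finset.card_union_le D1 D2
        omega
      · rw [hpy, mul_add]; omega
  obtain ⟨D, S, hk, hcard, hSS⟩ := claim (W \ Y) subset_rfl (by simp [pe_eq_sum])
  refine ⟨insert v D, ?_, ?_⟩
  · intro a ha b hb c hc' d hd h
    have hmono : ∀ {u}, Dom G {v} u → Dom G (insert v D) u := fun h =>
      h.mono (by simp)
    by_cases ea : Dom G {v} a
    · exact Or.inl (hmono ea)
    by_cases eb : Dom G {v} b
    · exact Or.inr (Or.inl (hmono eb))
    by_cases ec : Dom G {v} c
    · exact Or.inr (Or.inr (Or.inl (hmono ec)))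
    by_cases ed : Dom G {v} d
    · exact Or.inr (Or.inr (Or.inr (hmono ed)))
    obtain ⟨y1, y2, y3, y4⟩ := h1 a ha b hb c hc' d hd h ea eb ec ed
    exact hk a (by simp [*]) b (by simp [*]) c (by simp [*]) d (by simp [*]) h
  · have := hS S hSS
    have := Finset.card_insert_le v D
    rw [pe_split hY]
    omega

/-- The surplus of a single component `c`: a copy of `C₄` met by `N[v]` costs nothing, while any
other copy of `C₄` costs one vertex, two more than its four edges pay for. All other components
miss at most one edge. -/
lemma comp_gain {c Y : Finset V} {v : V} {t : ℕ} (ht : 2 ≤ t)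
    (hB : ¬ IsC4 G c → ∃ D, Kills G c D ∧ 12 * D.card ≤ pe G c c + 2)
    (hC4 : IsC4 G c → (∃ x ∈ c, Dom G {v} x) ∨ (t = 3 ∧ 3 ≤ pe G c Y))
    (hn : ¬ IsC4 G c → 2 ≤ pe G c Y) :
    ∃ (D : Finset V) (S : ℕ), Kills G c (insert v D) ∧
      12 * D.card + 2 * S ≤ pe G c c + 2 * pe G c Y ∧ pe G c Y ≤ t * S := by
  by_cases h : IsC4 G c
  · rcases hC4 h with ⟨x, hx, hv⟩ | ⟨rfl, h3⟩
    · refine ⟨∅, pe G c Y, kills_of_card h.card.le hx (hv.mono (by simp)), by simp, ?_⟩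
      nlinarith
    · have h8 := h.pe_self
      have hne : c.Nonempty := by rw [← Finset.card_pos, h.card]; norm_num
      obtain ⟨x, hx⟩ := hne
      refine ⟨{x}, pe G c Y - 2, kills_of_card h.card.le hx ⟨x, by simp, Or.inl rfl⟩, ?_, ?_⟩
      · rw [Finset.card_singleton]; omega
      · omega
  · obtain ⟨D, hk, hc⟩ := hB h
    have := hn h
    refine ⟨D, pe G c Y - 1, hk.mono (by simp), by omega, ?_⟩
    have : 2 * (pe G c Y - 1) ≤ t * (pe G c Y - 1) := Nat.mul_le_mul_right _ ht
    omega

lemma pe_sum_single (A B : Finset V) : pe G A B = ∑ a ∈ A, pe G {a} B := by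
  classical
  simp [pe_eq_sum]

/-- Reduction at a copy `Q` of `C₄` with at most two outgoing edges, one of them leading to `x`:
the vertex `x` destroys `Q`, and the rest of `Q` has at most one further edge to the outside. -/
lemma reduction_Q {W Q : Finset V} {x : V} (hQ : IsC4 G Q) (hQW : Q ⊆ W) (hx : x ∈ W \ Q)
    (hxQ : pe G {x} Q ≠ 0) (h2 : pe G Q (W \ Q) ≤ 2)
    (hB : ∀ c, c ⊂ W → Conn G c → ¬ IsC4 G c → ∃ D, Kills G c D ∧ 12 * D.card ≤ pe G c c + 2)
    (hcc : ∀ c ⊆ W \ (Q ∪ {x}), Conn G c → pe G c (W \ c) = pe G c (Q ∪ {x}) →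
      pe G c {x} ≠ 0 ∧ (¬ IsC4 G c → 2 ≤ pe G c (Q ∪ {x})))
    (hfin : 2 ≤ pe G {x} Q ∨ pe G (W \ (Q ∪ {x})) (Q ∪ {x}) ≠ 0) : Str G W := by
  rw [Finset.mem_sdiff] at hx
  have hYW : Q ∪ {x} ⊆ W := by
    intro y hy
    rcases Finset.mem_union.mp hy with hy | hy
    · exact hQW hy
    · rw [Finset.mem_singleton] at hy; subst hy; exact hx.1
  have hdx : Disjoint Q {x} := by simpa using hx.2
  have hZ : W \ Q = {x} ∪ (W \ (Q ∪ {x})) := by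
    ext y; simp only [Finset.mem_sdiff, Finset.mem_union, Finset.mem_singleton]
    by_cases hy : y = x
    · subst hy; simp [hx]
    · simp [hy]
  have hdZ : Disjoint {x} (W \ (Q ∪ {x})) := by simp
  have hQZ : pe G Q (W \ (Q ∪ {x})) ≤ 1 := by
    rw [hZ, pe_union_right hdZ, pe_comm Q {x}] at h2; omega
  have hdQZ : Disjoint Q (W \ (Q ∪ {x})) := by
    rw [Finset.disjoint_left]; intro y; simp; tauto
  refine reduction (Y := Q ∪ {x}) x 2 hYW ?_ ?_ ?_
  · intro a ha b hb c hc d hd h na nb nc nd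
    have mem : ∀ y ∈ W, ¬ Dom G {x} y → y ∈ Q ∪ (W \ (Q ∪ {x})) := by
      intro y hy hn
      have : y ≠ x := by rintro rfl; exact hn ⟨y, by simp, Or.inl rfl⟩
      simp [*]; tauto
    rcases cyc_split hdQZ hQZ h (mem a ha na) (mem b hb nb) (mem c hc nc) (mem d hd nd) with
      ⟨i1, i2, i3, i4⟩ | ⟨i1, i2, i3, i4⟩
    · obtain ⟨x', hx', q, hq, hadj⟩ := pe_ne_zero.mp hxQ
      simp at hx'; subst hx'
      have := kills_of_card (D := {x'}) hQ.card.le hq ⟨x', by simp, Or.inr hadj⟩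
        a i1 b i2 c i3 d i4 h
      tauto
    · rw [Finset.mem_sdiff] at i1 i2 i3 i4; exact ⟨i1.2, i2.2, i3.2, i4.2⟩
  · intro c hc hconn hpe
    obtain ⟨hcx, hc2⟩ := hcc c hc hconn hpe
    refine comp_gain le_rfl (hB c ?_ hconn) ?_ hc2
    · refine Finset.ssubset_iff_subset_ne.mpr ⟨hc.trans Finset.sdiff_subset, ?_⟩
      rintro rfl
      have := hc hx.1; simp at this
    · intro _
      left
      obtain ⟨y, hy, x', hx', hadj⟩ := pe_ne_zero.mp hcx
      simp at hx'; subst hx'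
      exact ⟨y, hy, x', by simp, Or.inr hadj.symm⟩
  · intro S hS
    rw [pe_self_union hdx, hQ.pe_self, pe_self_single, pe_comm Q {x}]
    omega

/-- An induced 4-cycle with a pendant vertex is `cons(K₁, C₄)`. -/
lemma cons_base {a b c d x : V} (h : Cyc G a b c d) (h1 : ¬ G.Adj a c) (h2 : ¬ G.Adj b d)
    (hx : x ∉ ({a, b, c, d} : Finset V)) (hxa : G.Adj x a)
    (hp : pe G {x} {a, b, c, d} ≤ 1) : Tight G ({x} ∪ {a, b, c, d}) := by
  right
  refine ⟨{x}, ?_⟩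
  simp at hx
  have e := h
  obtain ⟨e1, e2, e3, e4, e5, e6⟩ := e
  have key : ∀ y ∈ ({a, b, c, d} : Finset V), G.Adj x y → a = y := fun y hy hxy =>
    (pe_le_one hp (by simp) (by simp) hxa (by simp) hy hxy).2
  rw [← Finset.insert_eq]
  exact IsCons.base h h1 h2 hxa (fun hh => e1.ne (key _ (by simp) hh))
    (fun hh => e5 (key _ (by simp) hh)) (fun hh => e4.ne.symm (key _ (by simp) hh))
    (by tauto) (by tauto) (by tauto)

lemma perm_rot (a b c d : V) : ({a, b, c, d} : Finset V) = {b, c, d, a} := by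
  ext y; simp; tauto

lemma cons_base' {Q : Finset V} {x q : V} (hQ : IsC4 G Q) (hx : x ∉ Q) (hq : q ∈ Q)
    (hxq : G.Adj x q) (hp : pe G {x} Q ≤ 1) : Tight G ({x} ∪ Q) := by
  obtain ⟨a, b, c, d, rfl, h, h1, h2⟩ := hQ
  have h1' : ¬ G.Adj c a := fun h => h1 h.symm
  have h2' : ¬ G.Adj d b := fun h => h2 h.symm
  have hq' := hq
  simp only [Finset.mem_insert, Finset.mem_singleton] at hq'
  rcases hq' with rfl | rfl | rfl | rfl
  · exact cons_base h h1 h2 hx hxq hp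
  · rw [perm_rot] at *
    exact cons_base h.rot h2 h1' hx hxq hp
  · rw [perm_rot, perm_rot] at *
    exact cons_base h.rot.rot h1' h2' hx hxq hp
  · rw [perm_rot, perm_rot, perm_rot] at *
    exact cons_base h.rot.rot.rot h2' h1 hx hxq hp

/-! ### Bridgeless graphs -/

/-- A connected graph without bridges, which contains a 4-cycle and all of whose induced 4-cycles
have at least three outgoing edges, satisfies the strict bound or is the diamond. -/
lemma two_connected_case {W : Finset V} (hbl : ∀ A ⊆ W, A.Nonempty → A ≠ W → 2 ≤ pe G A (W \ A))
    (h3 : ∀ Q ⊆ W, IsC4 G Q → 3 ≤ pe G Q (W \ Q))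
    (hB : ∀ c, c ⊂ W → Conn G c → ¬ IsC4 G c → ∃ D, Kills G c D ∧ 12 * D.card ≤ pe G c c + 2)
    (hk : ¬ Kills G W ∅) : Str G W ∨ IsDia G W := by
  classical
  have red : ∀ (Y : Finset V) (v : V), Y.Nonempty → Y ⊆ W →
      (∀ a ∈ W, ∀ b ∈ W, ∀ c ∈ W, ∀ d ∈ W, Cyc G a b c d → ¬ Dom G {v} a → ¬ Dom G {v} b →
        ¬ Dom G {v} c → ¬ Dom G {v} d → a ∉ Y ∧ b ∉ Y ∧ c ∉ Y ∧ d ∉ Y) →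
      (∀ S, pe G (W \ Y) Y ≤ 3 * S → 12 ≤ pe G Y Y + 2 * S) → Str G W := by
    intro Y v hYn hY h1 hS
    refine reduction v 3 hY h1 ?_ hS
    intro c hc hconn hpe
    have hcW : c ⊂ W := by
      refine Finset.ssubset_iff_subset_ne.mpr ⟨hc.trans Finset.sdiff_subset, ?_⟩
      rintro rfl
      obtain ⟨y, hy⟩ := hYn
      have := hc (hY hy); simp [hy] at this
    refine comp_gain (by norm_num) (hB c hcW hconn) ?_ ?_
    · intro h4; right; rw [← hpe]; exact ⟨rfl, h3 c hcW.1 h4⟩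
    · intro _; rw [← hpe]; exact hbl c hcW.1 hconn.1 hcW.ne
  have deg2 : ∀ s ∈ W, 2 ≤ pe G {s} W := by
    intro s hs
    by_cases h : ({s} : Finset V) = W
    · exfalso; apply hk
      rw [← h]; exact kills_of_card_lt (by simp)
    · exact (hbl {s} (by simpa using hs) (by simp) h).trans
        (pe_mono subset_rfl Finset.sdiff_subset)
  -- Counting at the closed neighbourhood of `v`: minimum degree two bounds `deg v` by the degree
  -- sum left over inside `N(v)` and towards the outside; the last item is the reduction for `N[v]`.
  have star : ∀ v ∈ W, ∃ N ⊆ W, v ∉ N ∧ (∀ y ∈ W, y ∈ N ↔ G.Adj v y) ∧ N.card = pe G {v} W ∧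
      pe G (insert v N) (insert v N) = 2 * N.card + pe G N N ∧
      N.card ≤ pe G N N + pe G (W \ insert v N) (insert v N) ∧
      ((∀ S, pe G (W \ insert v N) (insert v N) ≤ 3 * S →
        12 ≤ 2 * N.card + pe G N N + 2 * S) → Str G W) := by
    intro v hv
    set N := W.filter (G.Adj v) with hN
    have hNW : N ⊆ W := Finset.filter_subset _ _
    have hvN : v ∉ N := by simp [hN]
    have hY : insert v N ⊆ W := Finset.insert_subset hv hNW
    have hcard : N.card = pe G {v} W := by rw [pe_single]
    have hvNN : pe G {v} N = N.card := by
      rw [pe_single, hN, Finset.filter_filter]; simp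
    have hself : pe G (insert v N) (insert v N) = 2 * N.card + pe G N N := by
      rw [Finset.insert_eq, pe_self_union (by simpa using hvN), pe_self_single, hvNN]; ring
    refine ⟨N, hNW, hvN, by intro y hy; simp [hN, hy], hcard, hself, ?_, ?_⟩
    · have e1 : 2 * N.card ≤ pe G N W := by
        rw [pe_sum_single, mul_comm, ← smul_eq_mul]
        exact Finset.card_nsmul_le_sum _ _ _ (fun s hs => deg2 s (hNW hs))
      have e2 := pe_split_right (G := G) (A := N) hY
      have e3 : pe G N (insert v N) = N.card + pe G N N := by
        rw [Finset.insert_eq, pe_union_right (by simpa using hvN), pe_comm N {v}, hvNN]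
      have e4 : pe G N (W \ insert v N) ≤ pe G (W \ insert v N) (insert v N) := by
        rw [pe_comm]; exact pe_mono subset_rfl (Finset.subset_insert _ _)
      omega
    · intro hS
      refine red (insert v N) v (by simp) hY ?_ (by rw [hself]; exact hS)
      have : ∀ y ∈ W, ¬ Dom G {v} y → y ∉ insert v N := by
        intro y hy hn hmem
        rcases Finset.mem_insert.mp hmem with rfl | h
        · exact hn ⟨y, by simp, Or.inl rfl⟩
        · exact hn ⟨v, by simp, Or.inr (Finset.mem_filter.mp h).2⟩
      intro a ha b hb c hc d hd _ na nb nc nd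
      exact ⟨this a ha na, this b hb nb, this c hc nc, this d hd nd⟩
  by_cases hdeg : ∃ v ∈ W, 4 ≤ pe G {v} W
  · left
    obtain ⟨v, hv, h4⟩ := hdeg
    obtain ⟨N, -, -, -, hcard, -, hsum, hfin⟩ := star v hv
    obtain ⟨k, hk⟩ := pe_even (G := G) N
    apply hfin
    intro S hS
    omega
  push Not at hdeg
  unfold Kills at hk
  push Not at hk
  obtain ⟨a, ha, b, hb, c, hc, d, hd, hcyc, -⟩ := hk
  -- A 4-cycle with a chord `ac`: as `a` has degree at most three, the cycle is `N[a]`.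
  have chord : ∀ a ∈ W, ∀ b ∈ W, ∀ c ∈ W, ∀ d ∈ W, Cyc G a b c d → G.Adj a c →
      Str G W ∨ IsDia G W := by
    intro a ha b hb c hc d hd h hac
    obtain ⟨N, hNW, haN, hmem, hcard, hself, hsum, hfin⟩ := star a ha
    have hN : ({b, c, d} : Finset V) = N := by
      apply Finset.eq_of_subset_of_card_le
      · intro y hy; simp at hy; rcases hy with rfl | rfl | rfl
        · exact (hmem _ hb).mpr h.1
        · exact (hmem _ hc).mpr hac
        · exact (hmem _ hd).mpr h.2.2.2.1.symm
      · have h4 := h.card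
        have := hdeg a ha
        rw [Finset.card_insert_of_notMem] at h4
        · omega
        · simp [h.1.ne, hac.ne, h.2.2.2.1.ne.symm]
    have hQ : ({a, b, c, d} : Finset V) = insert a N := by rw [← hN]
    by_cases hbd : G.Adj b d
    · left; apply hfin
      intro S hS
      rw [← hself, ← hQ, pe_K4 h hac hbd]; omega
    have h10 := pe_dia h hac hbd
    rw [hQ] at h10
    by_cases hz : pe G (W \ insert a N) (insert a N) = 0
    · right
      refine ⟨a, b, c, d, ?_, h, hac, hbd⟩
      by_contra hne
      rw [hQ] at hne
      have := hbl (insert a N) (Finset.insert_subset ha hNW) (by simp) (Ne.symm hne)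
      rw [pe_comm] at this
      omega
    · left; apply hfin
      intro S hS
      rw [← hself, h10]; omega
  by_cases hac : G.Adj a c
  · exact chord a ha b hb c hc d hd hcyc hac
  by_cases hbd : G.Adj b d
  · exact chord b hb c hc d hd a ha hcyc.rot hbd
  left
  -- An induced 4-cycle `Q` in a subcubic graph: `a` is a vertex of `Q` with an outer
  -- neighbour `x`. The only vertex of `Q` outside `N[a]` is `c`, which has at most one neighbour
  -- outside `Q` and hence lies on no 4-cycle avoiding `N[a]`.
  have main : ∀ a b c d, {a, b, c, d} ⊆ W → Cyc G a b c d → ¬ G.Adj a c → ¬ G.Adj b d →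
      ∀ x ∈ W \ {a, b, c, d}, G.Adj a x → Str G W := by
    intro a b c d hQW h hac hbd x hx hax
    have hQ4 : IsC4 G {a, b, c, d} := ⟨a, b, c, d, rfl, h, hac, hbd⟩
    have h3Q := h3 _ hQW hQ4
    rw [pe_comm] at h3Q
    have h8 := hQ4.pe_self
    have hbW := hQW (show b ∈ _ by simp)
    have hcW := hQW (show c ∈ _ by simp)
    have hdW := hQW (show d ∈ _ by simp)
    have hdomb : Dom G {a} b := ⟨a, by simp, Or.inr h.1⟩
    have hdomd : Dom G {a} d := ⟨a, by simp, Or.inr h.2.2.2.1.symm⟩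
    have nocyc : ∀ u ∈ W, ∀ w ∈ W, G.Adj c u → G.Adj c w → u ≠ w → ¬ Dom G {a} u →
        ¬ Dom G {a} w → False := by
      intro u hu w hw hcu hcw huw nu nw
      have := hdeg c hcW
      rw [pe_single] at this
      have hsub : ({b, d, u, w} : Finset V) ⊆ W.filter (G.Adj c) := by
        intro y hy
        simp only [Finset.mem_insert, Finset.mem_singleton] at hy
        rw [Finset.mem_filter]
        rcases hy with rfl | rfl | rfl | rfl
        · exact ⟨hbW, h.2.1.symm⟩
        · exact ⟨hdW, h.2.2.1⟩
        · exact ⟨hu, hcu⟩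
        · exact ⟨hw, hcw⟩
      have hbu : b ≠ u := by rintro rfl; exact nu hdomb
      have hbw : b ≠ w := by rintro rfl; exact nw hdomb
      have hdu : d ≠ u := by rintro rfl; exact nu hdomd
      have hdw : d ≠ w := by rintro rfl; exact nw hdomd
      have hbd' := h.2.2.2.2.2
      have := Finset.card_le_card hsub
      rw [Finset.card_insert_of_notMem (by simp [*]), Finset.card_insert_of_notMem (by simp [*]),
        Finset.card_pair huw] at this
      omega
    have hcond : ∀ a' ∈ W, ∀ b' ∈ W, ∀ c' ∈ W, ∀ d' ∈ W, Cyc G a' b' c' d' →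
        ¬ Dom G {a} a' → ¬ Dom G {a} b' → ¬ Dom G {a} c' → ¬ Dom G {a} d' →
        a' ∉ ({a, b, c, d} : Finset V) ∧ b' ∉ ({a, b, c, d} : Finset V) ∧
        c' ∉ ({a, b, c, d} : Finset V) ∧ d' ∉ ({a, b, c, d} : Finset V) := by
      have one : ∀ y ∈ W, ∀ u ∈ W, ∀ w ∈ W, G.Adj y u → G.Adj w y → u ≠ w →
          ¬ Dom G {a} y → ¬ Dom G {a} u → ¬ Dom G {a} w → y ∉ ({a, b, c, d} : Finset V) := by
        intro y hy u hu w hw hyu hyw huw ny nu nw hmem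
        simp only [Finset.mem_insert, Finset.mem_singleton] at hmem
        rcases hmem with rfl | rfl | rfl | rfl
        · exact ny ⟨y, by simp, Or.inl rfl⟩
        · exact ny hdomb
        · exact nocyc u hu w hw hyu hyw.symm huw nu nw
        · exact ny hdomd
      intro a' ha' b' hb' c' hc' d' hd' h' na nb nc nd
      obtain ⟨f1, f2, f3, f4, f5, f6⟩ := h'
      exact ⟨one a' ha' b' hb' d' hd' f1 f4 f6 na nb nd,
        one b' hb' c' hc' a' ha' f2 f1 f5.symm nb nc na,
        one c' hc' d' hd' b' hb' f3 f2 f6.symm nc nd nb,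
        one d' hd' a' ha' c' hc' f4 f3 f5 nd na nc⟩
    by_cases h4 : 4 ≤ pe G (W \ {a, b, c, d}) {a, b, c, d}
    · exact red {a, b, c, d} a (by simp) hQW hcond (by intro S hS; omega)
    -- With exactly three outgoing edges, a copy of `C₄` outside `Q` receives all of them, so it
    -- contains a neighbour of `a`
    refine reduction a 2 hQW hcond ?_ (by intro S hS; omega)
    intro c' hc' hconn hpe
    have hcW' : c' ⊂ W := by
      refine Finset.ssubset_iff_subset_ne.mpr ⟨hc'.trans Finset.sdiff_subset, ?_⟩
      rintro rfl
      have := hc' hbW; simp at this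
    refine comp_gain le_rfl (hB c' hcW' hconn) ?_ ?_
    · intro hc4
      left
      refine ⟨x, ?_, a, by simp, Or.inr hax⟩
      by_contra hxc
      have h3c := h3 c' hcW'.1 hc4
      have hsub : c' ∪ {x} ⊆ W \ {a, b, c, d} := by
        intro y hy
        rcases Finset.mem_union.mp hy with hy | hy
        · exact hc' hy
        · rw [Finset.mem_singleton] at hy; subst hy; exact hx
      have hle := pe_mono (G := G) hsub (subset_refl ({a, b, c, d} : Finset V))
      rw [pe_union_left (by simpa using hxc)] at hle
      have : pe G {x} {a, b, c, d} ≠ 0 := pe_ne_zero.mpr ⟨x, by simp, a, by simp, hax.symm⟩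
      omega
    · intro _; rw [← hpe]; exact hbl c' hcW'.1 hconn.1 hcW'.ne
  have hQW : ({a, b, c, d} : Finset V) ⊆ W := by
    intro y hy
    simp only [Finset.mem_insert, Finset.mem_singleton] at hy
    rcases hy with rfl | rfl | rfl | rfl <;> assumption
  have hca : ¬ G.Adj c a := fun h => hac h.symm
  have hdb : ¬ G.Adj d b := fun h => hbd h.symm
  have h3Q := h3 _ hQW ⟨a, b, c, d, rfl, hcyc, hac, hbd⟩
  obtain ⟨q, hq, x, hx, hqx⟩ := pe_ne_zero.mp (show pe G {a, b, c, d} (W \ {a, b, c, d}) ≠ 0 by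
    omega)
  simp only [Finset.mem_insert, Finset.mem_singleton] at hq
  rcases hq with rfl | rfl | rfl | rfl
  · exact main _ _ _ _ hQW hcyc hac hbd x hx hqx
  · rw [perm_rot] at hQW hx
    exact main _ _ _ _ hQW hcyc.rot hbd hca x hx hqx
  · rw [perm_rot, perm_rot] at hQW hx
    exact main _ _ _ _ hQW hcyc.rot.rot hca hdb x hx hqx
  · rw [perm_rot, perm_rot, perm_rot] at hQW hx
    exact main _ _ _ _ hQW hcyc.rot.rot.rot hdb hac x hx hqx

/-! ### The dichotomy -/

/-- Every connected graph other than `C₄` satisfies the strict bound or is tight. -/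
theorem dichotomy : ∀ W : Finset V, Conn G W → ¬ IsC4 G W → Str G W ∨ Tight G W := by
  intro W
  induction W using Finset.strongInduction with
  | H W ih =>
  intro hW hW4
  have hB : ∀ c, c ⊂ W → Conn G c → ¬ IsC4 G c →
      ∃ D, Kills G c D ∧ 12 * D.card ≤ pe G c c + 2 :=
    fun c hc h1 h2 => bound_of h1.1 (ih c hc h1 h2)
  by_cases hk : Kills G W ∅
  · exact Or.inl ⟨∅, hk, by simp⟩
  have hssub : ∀ A ⊆ W, pe G A (W \ A) ≠ 0 → A ⊂ W := by
    intro A hA h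
    refine Finset.ssubset_iff_subset_ne.mpr ⟨hA, ?_⟩
    rintro rfl
    obtain ⟨_, _, b, hb, _⟩ := pe_ne_zero.mp h
    simp at hb
  have hcompl : ∀ A ⊆ W, pe G (W \ A) (W \ (W \ A)) = pe G A (W \ A) := by
    intro A hA
    rw [Finset.sdiff_sdiff_eq_self hA, pe_comm]
  by_cases hbr : ∃ A ⊆ W, pe G A (W \ A) = 1 ∧ ¬ IsC4 G A ∧ ¬ IsC4 G (W \ A)
  · obtain ⟨A, hA, h1, hA4, hB4⟩ := hbr
    have h1' := (hcompl A hA).trans h1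
    have r1 := ih A (hssub A hA (by omega)) (conn_side hW hA h1) hA4
    have r2 := ih (W \ A) (hssub _ Finset.sdiff_subset (by omega))
      (conn_side hW Finset.sdiff_subset h1') hB4
    have := bridge Finset.disjoint_sdiff h1 r1 r2
    rwa [Finset.union_sdiff_of_subset hA] at this
  push Not at hbr
  -- The choice of an outer neighbour `x` of a copy `Q` of `C₄`: the edges leaving `Q` end in `x` or
  -- in the remaining part of `W`, which is joined to `Q ∪ {x}` unless it is empty.
  have setup : ∀ Q ⊆ W, IsC4 G Q → pe G Q (W \ Q) ≠ 0 → ∃ x ∈ W \ Q, pe G {x} Q ≠ 0 ∧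
      pe G Q (W \ Q) = pe G {x} Q + pe G (W \ (Q ∪ {x})) Q ∧
      (∃ q ∈ Q, G.Adj x q) ∧ (Q ∪ {x} ≠ W → pe G (W \ (Q ∪ {x})) (Q ∪ {x}) ≠ 0) := by
    intro Q hQ h4 h0
    obtain ⟨q, hq, x, hx, hqx⟩ := pe_ne_zero.mp h0
    refine ⟨x, hx, pe_ne_zero.mpr ⟨x, by simp, q, hq, hqx.symm⟩, ?_, ⟨q, hq, hqx.symm⟩, ?_⟩
    · have e : W \ Q = {x} ∪ (W \ (Q ∪ {x})) := by
        ext y; simp only [Finset.mem_sdiff, Finset.mem_union, Finset.mem_singleton] at hx ⊢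
        by_cases hy : y = x
        · subst hy; simp [hx]
        · simp [hy]
      rw [pe_comm, e, pe_union_left (by simp)]
    · intro hne
      rw [pe_comm]
      refine hW.2 _ ?_ (by simp) hne
      intro y hy
      rcases Finset.mem_union.mp hy with hy | hy
      · exact hQ hy
      · rw [Finset.mem_singleton] at hy; subst hy; exact Finset.sdiff_subset hx
  have hunion : ∀ (Q c : Finset V) (x : V), x ∉ Q →
      pe G c (Q ∪ {x}) = pe G c Q + pe G c {x} := by
    intro Q c x hx
    rw [pe_union_right (by simpa using hx)]
  -- Copies of `C₄` hanging on a bridge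
  by_cases hpend : ∃ Q ⊆ W, IsC4 G Q ∧ pe G Q (W \ Q) = 1
  · obtain ⟨Q, hQ, h4, h1⟩ := hpend
    obtain ⟨x, hx, hxQ, hsum, ⟨q, hq, hxq⟩, hZ⟩ := setup Q hQ h4 (by omega)
    have hx' := (Finset.mem_sdiff.mp hx).2
    by_cases hWY : Q ∪ {x} = W
    · right
      rw [← hWY, Finset.union_comm]
      exact cons_base' h4 hx' hq hxq (by omega)
    left
    refine reduction_Q h4 hQ hx hxQ (by omega) hB ?_ (Or.inr (hZ hWY))
    intro c hc hconn hpe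
    have hcW : c ⊆ W := hc.trans Finset.sdiff_subset
    have hcne : c ≠ W := by
      rintro rfl
      have := hc (Finset.sdiff_subset hx); simp at this
    have hc0 := hW.2 c hcW hconn.1 hcne
    have hcQ : pe G c Q ≤ pe G (W \ (Q ∪ {x})) Q := pe_mono hc subset_rfl
    have hs := hunion Q c x hx'
    refine ⟨by omega, ?_⟩
    intro hc4
    by_contra hlt
    have := (hbr c hcW (by omega) hc4).card
    have hsub : Q ∪ {x} ⊆ W \ c := by
      intro y hy
      rw [Finset.mem_sdiff]
      refine ⟨?_, fun hyc => (Finset.mem_sdiff.mp (hc hyc)).2 hy⟩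
      rcases Finset.mem_union.mp hy with hy | hy
      · exact hQ hy
      · rw [Finset.mem_singleton] at hy; subst hy; exact Finset.sdiff_subset hx
    have h5 := Finset.card_le_card hsub
    rw [Finset.card_union_of_disjoint (by simpa using hx'), h4.card, Finset.card_singleton] at h5
    omega
  push Not at hpend
  have hbl : ∀ A ⊆ W, A.Nonempty → A ≠ W → 2 ≤ pe G A (W \ A) := by
    intro A hA hn hne
    have h0 := hW.2 A hA hn hne
    by_contra hlt
    have h1 : pe G A (W \ A) = 1 := by omega
    by_cases hA4 : IsC4 G A
    · exact hpend A hA hA4 h1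
    · exact hpend (W \ A) Finset.sdiff_subset (hbr A hA h1 hA4) ((hcompl A hA).trans h1)
  have hne4 : ∀ Q, IsC4 G Q → Q.Nonempty ∧ Q ≠ W := by
    intro Q h4
    refine ⟨by rw [← Finset.card_pos, h4.card]; norm_num, ?_⟩
    rintro rfl; exact hW4 h4
  -- From here on, there are no bridges at all.
  by_cases htwo : ∃ Q ⊆ W, IsC4 G Q ∧ pe G Q (W \ Q) = 2
  · left
    obtain ⟨Q, hQ, h4, h2⟩ := htwo
    obtain ⟨x, hx, hxQ, hsum, ⟨q, hq, hxq⟩, hZ⟩ := setup Q hQ h4 (by omega)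
    have hx' := (Finset.mem_sdiff.mp hx).2
    refine reduction_Q h4 hQ hx hxQ (by omega) hB ?_ ?_
    · intro c hc hconn hpe
      have hcW : c ⊆ W := hc.trans Finset.sdiff_subset
      have hcne : c ≠ W := by
        rintro rfl
        have := hc (Finset.sdiff_subset hx); simp at this
      have hc2 := hbl c hcW hconn.1 hcne
      have hcQ : pe G c Q ≤ pe G (W \ (Q ∪ {x})) Q := pe_mono hc subset_rfl
      have hs := hunion Q c x hx'
      exact ⟨by omega, fun _ => by omega⟩
    · by_cases hWY : Q ∪ {x} = W
      · left
        rw [hWY, Finset.sdiff_self] at hsum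
        simp [pe_eq_sum (∅ : Finset V)] at hsum
        omega
      · exact Or.inr (hZ hWY)
  push Not at htwo
  have h3 : ∀ Q ⊆ W, IsC4 G Q → 3 ≤ pe G Q (W \ Q) := by
    intro Q hQ h4
    have := hbl Q hQ (hne4 Q h4).1 (hne4 Q h4).2
    have := htwo Q hQ h4
    omega
  rcases two_connected_case hbl h3 hB hk with h | h
  · exact Or.inl h
  · exact Or.inr (Or.inl h)

end Core

section Final

/-! ### The graphs `cons(T, C₄)` and the isolation number -/

lemma cycleGraph_four_adj (s t : Fin 4) :
    (cycleGraph 4).Adj s t ↔ (s - t = 1 ∨ t - s = 1) := by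
  rw [SimpleGraph.cycleGraph_adj]

lemma cons_inl_inl {α : Type*} (T : SimpleGraph α) (a b : α) :
    (consGraph T 4).Adj (Sum.inl a) (Sum.inl b) ↔ T.Adj a b := by
  simp only [consGraph, SimpleGraph.fromRel_adj]
  constructor
  · rintro ⟨-, h | h⟩
    · exact h
    · exact h.symm
  · intro h; exact ⟨by simpa using h.ne, Or.inl h⟩

lemma cons_inl_inr {α : Type*} (T : SimpleGraph α) (a b : α) (s : Fin 4) :
    (consGraph T 4).Adj (Sum.inl a) (Sum.inr (b, s)) ↔ a = b ∧ s = 0 := by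
  simp only [consGraph, SimpleGraph.fromRel_adj, Fin.ext_iff]
  constructor
  · rintro ⟨-, h | h⟩
    · exact h
    · exact h.elim
  · intro h; exact ⟨Sum.inl_ne_inr, Or.inl h⟩

lemma cons_inr_inr {α : Type*} (T : SimpleGraph α) (a b : α) (s t : Fin 4) :
    (consGraph T 4).Adj (Sum.inr (a, s)) (Sum.inr (b, t)) ↔ a = b ∧ (cycleGraph 4).Adj s t := by
  simp only [consGraph, SimpleGraph.fromRel_adj]
  constructor
  · rintro ⟨-, h | h⟩
    · exact h
    · exact ⟨h.1.symm, h.2.symm⟩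
  · intro h; exact ⟨by have := h.2.ne; simp [this], Or.inl h⟩

lemma cons_inr_inl {α : Type*} (T : SimpleGraph α) (a b : α) (s : Fin 4) :
    (consGraph T 4).Adj (Sum.inr (b, s)) (Sum.inl a) ↔ a = b ∧ s = 0 := by
  rw [SimpleGraph.adj_comm, cons_inl_inr]

/-- The index in `T` of the part of `cons(T, C₄)` containing a given vertex. -/
def blk {α : Type*} : α ⊕ α × Fin 4 → α
  | Sum.inl a => a
  | Sum.inr p => p.1

lemma blk_adj_inr {α : Type*} (T : SimpleGraph α) {x : α ⊕ α × Fin 4} {i : α} {s : Fin 4}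
    (h : (consGraph T 4).Adj x (Sum.inr (i, s))) : blk x = i := by
  rcases x with a | ⟨a, t⟩
  · exact ((cons_inl_inr T a i s).mp h).1
  · exact ((cons_inr_inr T a i t s).mp h).1

lemma blk_adj {α : Type*} (T : SimpleGraph α) {x y : α ⊕ α × Fin 4}
    (h : (consGraph T 4).Adj x y) : T.Reachable (blk x) (blk y) := by
  rcases y with b | ⟨b, t⟩
  · rcases x with a | ⟨a, s⟩
    · exact ((cons_inl_inl T a b).mp h).reachable
    · have := ((cons_inr_inl T b a s).mp h).1; subst this; exact .rfl
  · have := blk_adj_inr T h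
    rw [this]; exact .rfl

lemma connected_of_cons {α : Type*} [Nonempty α] (T : SimpleGraph α)
    (h : (consGraph T 4).Connected) : T.Connected := by
  have key : ∀ x y, (consGraph T 4).Reachable x y → T.Reachable (blk x) (blk y) := by
    rintro x y ⟨w⟩
    induction w with
    | nil => exact .rfl
    | cons hadj _ ih => exact (blk_adj T hadj).trans ih
  exact ⟨fun a b => key (Sum.inl a) (Sum.inl b) (h.preconnected _ _)⟩

variable {V : Type*} [Fintype V] [DecidableEq V] {G : SimpleGraph V}

lemma pe_univ (G : SimpleGraph V) [DecidableRel G.Adj] :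
    pe G Finset.univ Finset.univ = 2 * G.edgeFinset.card := by
  rw [← SimpleGraph.sum_degrees_eq_twice_card_edges, pe_sum_single]
  refine Finset.sum_congr rfl fun v _ => ?_
  rw [pe_single, ← SimpleGraph.card_neighborFinset_eq_degree]
  congr 1
  ext w; simp

lemma pe_iso {W : Type*} [Fintype W] [DecidableEq W] {H : SimpleGraph W} (f : G ≃g H) :
    pe G Finset.univ Finset.univ = pe H Finset.univ Finset.univ := by
  classical
  simp only [pe_eq_sum]
  rw [← Equiv.sum_comp f.toEquiv]
  refine Finset.sum_congr rfl fun a _ => ?_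
  rw [← Equiv.sum_comp f.toEquiv]
  refine Finset.sum_congr rfl fun b _ => ?_
  have : H.Adj (f.toEquiv a) (f.toEquiv b) ↔ G.Adj a b := f.map_adj_iff
  simp only [this]

lemma pe_consGraph {α : Type*} [Fintype α] [DecidableEq α] (T : SimpleGraph α) :
    pe (consGraph T 4) Finset.univ Finset.univ =
      pe T Finset.univ Finset.univ + 10 * Fintype.card α := by
  classical
  have h8 : ∀ s t : Fin 4, ((cycleGraph 4).Adj s t) = (s - t = 1 ∨ t - s = 1) :=
    fun s t => propext (cycleGraph_four_adj s t)
  have hc : ∀ a : α, (∑ s : Fin 4, ∑ b : α, ∑ t : Fin 4,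
      if a = b ∧ (cycleGraph 4).Adj s t then 1 else 0) = 8 := by
    intro a
    simp only [ite_and, h8]
    simp [Fin.sum_univ_four, Finset.sum_add_distrib]
    decide
  have h1 : ∀ a : α, (∑ b : α, ∑ s : Fin 4, if a = b ∧ s = 0 then 1 else 0) = 1 := by
    intro a
    simp [ite_and]
  have h2 : ∀ a : α, (∑ s : Fin 4, ∑ b : α, if b = a ∧ s = 0 then 1 else 0) = 1 := by
    intro a
    simp [ite_and]
  simp only [pe_eq_sum, Fintype.sum_sum_type, Fintype.sum_prod_type, cons_inl_inl, cons_inl_inr,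
    cons_inr_inl, cons_inr_inr, Finset.sum_add_distrib, hc, h1, h2]
  simp
  ring

/-- Isolating sets in terms of 4-cycles given by their consecutive vertices. -/
lemma isolating_iff {D : Set V} : IsIsolating G (cycleGraph 4) D ↔
    ∀ a b c d, Cyc G a b c d → a ∈ closedNbhd G D ∨ b ∈ closedNbhd G D ∨ c ∈ closedNbhd G D ∨
      d ∈ closedNbhd G D := by
  unfold IsIsolating HasCopy
  constructor
  · intro h a b c d hc
    by_contra hcon
    push Not at hcon
    obtain ⟨ha, hb, hcc, hd⟩ := hcon
    have n1 := hc.1.ne; have n2 := hc.2.1.ne; have n3 := hc.2.2.1.ne; have n4 := hc.2.2.2.1.ne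
    obtain ⟨e1, e2, e3, e4, e5, e6⟩ := hc
    refine h ⟨⟨![⟨a, ha⟩, ⟨b, hb⟩, ⟨c, hcc⟩, ⟨d, hd⟩], ?_⟩, ?_⟩
    · intro s t hst
      rw [cycleGraph_four_adj] at hst
      fin_cases s <;> fin_cases t <;>
        first
          | (exfalso; revert hst; decide)
          | simp [e1, e2, e3, e4, e1.symm, e2.symm, e3.symm, e4.symm]
    · intro s t hst
      fin_cases s <;> fin_cases t <;> simp_all
  · rintro h ⟨f, hf⟩
    have hadj : ∀ s t : Fin 4, (s - t = 1 ∨ t - s = 1) → G.Adj (f s).1 (f t).1 := by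
      intro s t hst
      have := f.map_rel ((cycleGraph_four_adj s t).mpr hst)
      simpa using this
    have hne : ∀ s t : Fin 4, s ≠ t → (f s).1 ≠ (f t).1 := fun s t hst he =>
      hst (hf (Subtype.ext he))
    rcases h (f 0).1 (f 1).1 (f 2).1 (f 3).1 ⟨hadj _ _ (by decide), hadj _ _ (by decide),
      hadj _ _ (by decide), hadj _ _ (by decide), hne _ _ (by decide), hne _ _ (by decide)⟩ with
      h | h | h | h
    · exact (f 0).2 h
    · exact (f 1).2 h
    · exact (f 2).2 h
    · exact (f 3).2 h

lemma isolNum_le {D : Finset V} (h : Kills G Finset.univ D) :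
    isolNum G (cycleGraph 4) ≤ D.card := by
  refine Nat.sInf_le ⟨D, ?_, Set.ncard_coe_finset D⟩
  rw [isolating_iff]
  have : ∀ u, Dom G D u → u ∈ closedNbhd G D := by
    rintro u ⟨x, hx, rfl | h⟩
    · exact Or.inl hx
    · exact Or.inr ⟨x, hx, h⟩
  intro a b c d hc
  exact (h a (by simp) b (by simp) c (by simp) d (by simp) hc).imp (this a)
    (Or.imp (this b) (Or.imp (this c) (this d)))

lemma le_isolNum {k : ℕ} (h : ∀ D : Set V, IsIsolating G (cycleGraph 4) D → k ≤ D.ncard) :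
    k ≤ isolNum G (cycleGraph 4) := by
  have hne : {n | ∃ D : Set V, IsIsolating G (cycleGraph 4) D ∧ D.ncard = n}.Nonempty := by
    refine ⟨_, Set.univ, ?_, rfl⟩
    rw [isolating_iff]
    intro a _ _ _ _
    exact Or.inl (Or.inl trivial)
  obtain ⟨D, hD, he⟩ := Nat.sInf_mem hne
  unfold isolNum
  rw [← he]; exact h D hD

/-- The closed neighbourhood of the 4-cycle with index `i` consists of vertices with index `i`, so an
isolating set contains a vertex of each index. -/
lemma card_le_isolNum {n : ℕ} {T : SimpleGraph (Fin n)} (f : G ≃g consGraph T 4) :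
    n ≤ isolNum G (cycleGraph 4) := by
  apply le_isolNum
  intro D hD
  rw [isolating_iff] at hD
  have hsurj : Set.image (fun u => blk (f u)) D = Set.univ := by
    rw [Set.eq_univ_iff_forall]
    intro i
    have hadj : ∀ s t : Fin 4, (s - t = 1 ∨ t - s = 1) →
        G.Adj (f.symm (Sum.inr (i, s))) (f.symm (Sum.inr (i, t))) := by
      intro s t hst
      rw [f.symm.map_adj_iff, cons_inr_inr, cycleGraph_four_adj]
      exact ⟨rfl, hst⟩
    have hne : ∀ s t : Fin 4, s ≠ t →
        f.symm (Sum.inr (i, s)) ≠ f.symm (Sum.inr (i, t)) := by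
      intro s t hst he
      have := f.symm.injective he
      simp at this; exact hst this
    have hmem : ∀ s : Fin 4, f.symm (Sum.inr (i, s)) ∈ closedNbhd G D →
        i ∈ Set.image (fun u => blk (f u)) D := by
      rintro s (h | ⟨u, hu, h⟩)
      · exact ⟨_, h, by simp [blk]⟩
      · refine ⟨u, hu, ?_⟩
        apply blk_adj_inr T (s := s)
        rw [← f.map_adj_iff] at h
        simpa using h
    rcases hD _ _ _ _ ⟨hadj 0 1 (by decide), hadj 1 2 (by decide), hadj 2 3 (by decide),
      hadj 3 0 (by decide), hne 0 2 (by decide), hne 1 3 (by decide)⟩ with h | h | h | h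
    · exact hmem _ h
    · exact hmem _ h
    · exact hmem _ h
    · exact hmem _ h
  have := Set.ncard_image_le (s := D) (f := fun u => blk (f u)) (Set.toFinite D)
  rw [hsurj, Set.ncard_univ, Nat.card_eq_fintype_card, Fintype.card_fin] at this
  exact this

lemma conn_univ (h : G.Connected) : Conn G Finset.univ := by
  have := h.nonempty
  refine ⟨Finset.univ_nonempty, ?_⟩
  intro B _ hBn hB
  obtain ⟨u, hu⟩ := hBn
  obtain ⟨v, hv⟩ : ∃ v, v ∉ B := by
    by_contra hcon; push Not at hcon; exact hB (Finset.eq_univ_iff_forall.mpr hcon)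
  obtain ⟨w⟩ := h.preconnected u v
  obtain ⟨d, -, h1, h2⟩ := w.exists_boundary_dart (B : Set V) hu hv
  exact pe_ne_zero.mpr ⟨d.fst, h1, d.snd, by simpa using h2, d.adj⟩

/-! ### From vertex sets to isomorphism classes -/

lemma iso_of_four {H : SimpleGraph (Fin 4)} {a b c d : V} (hun : Finset.univ = ({a, b, c, d} : Finset V))
    (hcyc : Cyc G a b c d) (x : Fin 4 → V) (hx : Function.Injective x)
    (hadj : ∀ s t, G.Adj (x s) (x t) ↔ H.Adj s t) : Nonempty (G ≃g H) := by
  have hcard : Fintype.card (Fin 4) = Fintype.card V := by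
    rw [← Finset.card_univ (α := V), hun, hcyc.card]; simp
  have hb : Function.Bijective x := (Fintype.bijective_iff_injective_and_card x).mpr ⟨hx, hcard⟩
  exact ⟨(⟨Equiv.ofBijective x hb, by intro s t; simpa using hadj s t⟩ : H ≃g G).symm⟩

lemma iso_of_isC4 (h : IsC4 G Finset.univ) : Nonempty (G ≃g cycleGraph 4) := by
  obtain ⟨a, b, c, d, hun, hc, h1, h2⟩ := h
  have n1 := hc.1.ne; have n2 := hc.2.1.ne; have n3 := hc.2.2.1.ne; have n4 := hc.2.2.2.1.ne
  have hc' := hc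
  obtain ⟨e1, e2, e3, e4, e5, e6⟩ := hc
  have h1' : ¬ G.Adj c a := fun h => h1 h.symm
  have h2' : ¬ G.Adj d b := fun h => h2 h.symm
  refine iso_of_four hun hc' ![a, b, c, d] ?_ ?_
  · intro s t hst
    fin_cases s <;> fin_cases t <;> simp_all
  · intro s t
    rw [cycleGraph_four_adj]
    fin_cases s <;> fin_cases t <;>
      simp [e1, e2, e3, e4, e1.symm, e2.symm, e3.symm, e4.symm, h1, h2, h1', h2'] <;> decide

lemma diamond_adj (s t : Fin 4) : diamondGraph.Adj s t ↔
    s ≠ t ∧ ¬ (s = 0 ∧ t = 1) ∧ ¬ (s = 1 ∧ t = 0) := by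
  simp [diamondGraph, SimpleGraph.deleteEdges_adj]

lemma iso_of_isDia (h : IsDia G Finset.univ) : Nonempty (G ≃g diamondGraph) := by
  obtain ⟨a, b, c, d, hun, hc, h1, h2⟩ := h
  have n1 := hc.1.ne; have n2 := hc.2.1.ne; have n3 := hc.2.2.1.ne; have n4 := hc.2.2.2.1.ne
  have hc' := hc
  obtain ⟨e1, e2, e3, e4, e5, e6⟩ := hc
  have h2' : ¬ G.Adj d b := fun h => h2 h.symm
  refine iso_of_four hun hc' ![b, d, a, c] ?_ ?_
  · intro s t hst
    fin_cases s <;> fin_cases t <;> simp_all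
  · intro s t
    rw [diamond_adj]
    fin_cases s <;> fin_cases t <;>
      simp [e1, e2, e3, e4, e1.symm, e2.symm, e3.symm, e4.symm, h1, h2, h1.symm, h2']

lemma pe_diamond : pe diamondGraph Finset.univ Finset.univ = 10 := by
  classical
  simp only [pe_eq_sum, diamond_adj]
  decide

lemma one_le_isolNum_of_diamond (f : G ≃g diamondGraph) : 1 ≤ isolNum G (cycleGraph 4) := by
  apply le_isolNum
  intro D hD
  by_contra hlt
  have h0 : D.ncard = 0 := by omega
  rw [Set.ncard_eq_zero (Set.toFinite D)] at h0
  subst h0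
  rw [isolating_iff] at hD
  have hadj : ∀ s t : Fin 4, (s ≠ t ∧ ¬ (s = 0 ∧ t = 1) ∧ ¬ (s = 1 ∧ t = 0)) →
      G.Adj (f.symm s) (f.symm t) := by
    intro s t h
    rw [f.symm.map_adj_iff, diamond_adj]; exact h
  have hne : ∀ s t : Fin 4, s ≠ t → f.symm s ≠ f.symm t := fun s t h he => h (f.symm.injective he)
  have := hD _ _ _ _ ⟨hadj 0 2 (by decide), hadj 2 1 (by decide), hadj 1 3 (by decide),
    hadj 3 0 (by decide), hne 0 1 (by decide), hne 2 3 (by decide)⟩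
  simp [closedNbhd] at this

/-- The vertices of a set built by `IsCons`, split into tree vertices `ρ i` and the vertices
`q i s` of their 4-cycles. The last item says that `m + 1 = 6 |T|`. -/
lemma IsCons.labelling {V : Type*} [DecidableEq V] {G : SimpleGraph V} {A R : Finset V}
    (h : IsCons G A R) : ∃ (T : Type) (_ : Fintype T) (_ : Nonempty T) (ρ : T → V)
      (q : T → Fin 4 → V),
      (∀ i j, ρ i = ρ j → i = j) ∧ (∀ i s j t, q i s = q j t → i = j ∧ s = t) ∧
      (∀ i j s, ρ i ≠ q j s) ∧ (∀ x, x ∈ A ↔ (∃ i, ρ i = x) ∨ ∃ i s, q i s = x) ∧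
      (∀ x, x ∈ R ↔ ∃ i, ρ i = x) ∧ (∀ i j s, G.Adj (ρ i) (q j s) ↔ i = j ∧ s = 0) ∧
      (∀ i s j t, G.Adj (q i s) (q j t) ↔ i = j ∧ (cycleGraph 4).Adj s t) ∧
      pe G A A + 2 = 12 * Fintype.card T := by
  induction h with
  | @base r a b c d hcy h1 h2 hra hrb hrc hrd hb hc hd =>
    have hp := pe_base hcy hra hrb hrc hrd
    have hdis := base_disj (G := G) hra hb hc hd
    have h1' : ¬ G.Adj c a := fun h => h1 h.symm
    have h2' : ¬ G.Adj d b := fun h => h2 h.symm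
    have h8 := pe_four hcy h1 h2
    obtain ⟨e1, e2, e3, e4, e5, e6⟩ := hcy
    have n0 := hra.ne
    have n1 := e1.ne; have n2 := e2.ne; have n3 := e3.ne; have n4 := e4.ne
    refine ⟨Unit, inferInstance, inferInstance, fun _ => r, fun _ => ![a, b, c, d], ?_, ?_, ?_, ?_,
      ?_, ?_, ?_, ?_⟩
    · intro i j _; rfl
    · intro i s j t hst
      refine ⟨rfl, ?_⟩
      fin_cases s <;> fin_cases t <;> simp_all
    · intro i j s
      fin_cases s <;> simp_all
    · intro x
      simp [Fin.exists_fin_succ, eq_comm]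
    · intro x; simp [eq_comm]
    · intro i j s
      fin_cases s <;> simp [*]
    · intro i s j t
      rw [cycleGraph_four_adj]
      fin_cases s <;> fin_cases t <;>
        simp [e1, e2, e3, e4, e1.symm, e2.symm, e3.symm, e4.symm, h1, h2, h1', h2'] <;> decide
    · rw [Finset.insert_eq, pe_self_union hdis, hp, h8, pe_self_single]; simp
  | @join A B R S r s hA hB hd hr hs hrs h1 ihA ihB =>
    obtain ⟨T, iT, nT, ρ, q, a1, a2, a3, a4, a5, a6, a7, a8⟩ := ihA
    obtain ⟨T', iT', nT', ρ', q', b1, b2, b3, b4, b5, b6, b7, b8⟩ := ihB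
    have mρ : ∀ i, ρ i ∈ A := fun i => (a4 _).mpr (Or.inl ⟨i, rfl⟩)
    have mq : ∀ i s, q i s ∈ A := fun i s => (a4 _).mpr (Or.inr ⟨i, s, rfl⟩)
    have mρ' : ∀ i, ρ' i ∈ B := fun i => (b4 _).mpr (Or.inl ⟨i, rfl⟩)
    have mq' : ∀ i s, q' i s ∈ B := fun i s => (b4 _).mpr (Or.inr ⟨i, s, rfl⟩)
    have hAB : ∀ {x y}, x ∈ A → y ∈ B → x ≠ y := fun hx hy he =>
      Finset.disjoint_left.mp hd hx (he ▸ hy)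
    obtain ⟨i0, rfl⟩ := (a5 r).mp hr
    obtain ⟨j0, rfl⟩ := (b5 s).mp hs
    have key : ∀ {x y}, x ∈ A → y ∈ B → G.Adj x y → ρ i0 = x ∧ ρ' j0 = y := fun hx hy hxy =>
      pe_le_one h1.le (mρ i0) (mρ' j0) hrs hx hy hxy
    refine ⟨T ⊕ T', inferInstance, inferInstance, Sum.elim ρ ρ', Sum.elim q q', ?_, ?_, ?_, ?_,
      ?_, ?_, ?_, ?_⟩
    · rintro (i | i) (j | j) h
      · simpa using a1 i j h
      · exact absurd h (hAB (mρ i) (mρ' j))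
      · exact absurd h.symm (hAB (mρ j) (mρ' i))
      · simpa using b1 i j h
    · rintro (i | i) s (j | j) t h
      · simpa using a2 i s j t h
      · exact absurd h (hAB (mq i s) (mq' j t))
      · exact absurd h.symm (hAB (mq j t) (mq' i s))
      · simpa using b2 i s j t h
    · rintro (i | i) (j | j) s
      · exact a3 i j s
      · exact hAB (mρ i) (mq' j s)
      · exact (hAB (mq j s) (mρ' i)).symm
      · exact b3 i j s
    · intro x
      rw [Finset.mem_union, a4, b4]
      simp only [Sum.exists, Sum.elim_inl, Sum.elim_inr]
      exact or_or_or_comm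
    · intro x
      rw [Finset.mem_union, a5, b5]
      simp only [Sum.exists, Sum.elim_inl, Sum.elim_inr]
    · rintro (i | i) (j | j) s
      · simpa using a6 i j s
      · simp only [Sum.elim_inl, Sum.elim_inr, reduceCtorEq, false_and, iff_false]
        intro h; exact b3 _ _ _ (key (mρ i) (mq' j s) h).2
      · simp only [Sum.elim_inl, Sum.elim_inr, reduceCtorEq, false_and, iff_false]
        intro h; exact a3 _ _ _ (key (mq j s) (mρ' i) h.symm).1
      · simpa using b6 i j s
    · rintro (i | i) s (j | j) t
      · simpa using a7 i s j t
      · simp only [Sum.elim_inl, Sum.elim_inr, reduceCtorEq, false_and, iff_false]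
        intro h; exact b3 _ _ _ (key (mq i s) (mq' j t) h).2
      · simp only [Sum.elim_inl, Sum.elim_inr, reduceCtorEq, false_and, iff_false]
        intro h; exact a3 _ _ _ (key (mq j t) (mq' i s) h.symm).1
      · simpa using b7 i s j t
    · rw [pe_self_union hd, h1, Fintype.card_sum]; omega

/-- A connected graph on `n` vertices with `n - 1` edges is a tree. -/
lemma isTree_of_pe {n : ℕ} (T : SimpleGraph (Fin n)) (hT : T.Connected)
    (h : pe T Finset.univ Finset.univ + 2 = 2 * n) : T.IsTree := by
  classical
  rw [SimpleGraph.isTree_iff_connected_and_card]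
  refine ⟨hT, ?_⟩
  rw [pe_univ] at h
  rw [Nat.card_eq_fintype_card, ← SimpleGraph.edgeFinset_card, Nat.card_eq_fintype_card,
    Fintype.card_fin]
  omega

lemma memG_of_isCons {R : Finset V} (hG : G.Connected) (h : IsCons G Finset.univ R) :
    MemG G 4 := by
  obtain ⟨T, iT, nT, ρ, q, a1, a2, a3, a4, -, a6, a7, a8⟩ := h.labelling
  let σ := (Fintype.equivFin T).symm
  have : Nonempty (Fin (Fintype.card T)) := ⟨σ.symm (Classical.arbitrary T)⟩
  let H : SimpleGraph (Fin (Fintype.card T)) := G.comap (fun i => ρ (σ i))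
  let ψ : Fin (Fintype.card T) ⊕ Fin (Fintype.card T) × Fin 4 → V :=
    Sum.elim (fun i => ρ (σ i)) (fun p => q (σ p.1) p.2)
  have hinj : Function.Injective ψ := by
    rintro (i | ⟨i, s⟩) (j | ⟨j, t⟩) h
    · simpa using a1 _ _ h
    · exact absurd h (a3 _ _ _)
    · exact absurd h.symm (a3 _ _ _)
    · simpa using a2 _ _ _ _ h
  have hsurj : Function.Surjective ψ := by
    intro x
    rcases (a4 x).mp (Finset.mem_univ x) with ⟨i, rfl⟩ | ⟨i, s, rfl⟩
    · exact ⟨Sum.inl (σ.symm i), by simp [ψ]⟩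
    · exact ⟨Sum.inr (σ.symm i, s), by simp [ψ]⟩
  have hadj : ∀ x y, G.Adj (ψ x) (ψ y) ↔ (consGraph H 4).Adj x y := by
    rintro (i | ⟨i, s⟩) (j | ⟨j, t⟩)
    · rw [cons_inl_inl]; rfl
    · rw [cons_inl_inr]; simpa [ψ] using a6 (σ i) (σ j) t
    · rw [cons_inr_inl, SimpleGraph.adj_comm]; simpa [ψ] using a6 (σ j) (σ i) s
    · rw [cons_inr_inr]; simpa [ψ] using a7 (σ i) s (σ j) t
  let e : consGraph H 4 ≃g G := ⟨Equiv.ofBijective ψ ⟨hinj, hsurj⟩, by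
    intro x y; exact hadj x y⟩
  refine ⟨Fintype.card T, H, isTree_of_pe H ?_ ?_, ⟨e.symm⟩⟩
  · exact connected_of_cons H (e.connected_iff.mpr hG)
  · have h1 := pe_iso e
    rw [pe_consGraph, Fintype.card_fin] at h1
    omega

end Final

end C4Iso

open C4Iso

theorem stmt1 {V : Type*} [Fintype V] (G : SimpleGraph V) [DecidableRel G.Adj]
    (hconn : G.Connected) (hne : ¬ Nonempty (G ≃g cycleGraph 4)) (m : ℕ)
    (hm : m = G.edgeFinset.card) :
    (isolNum G (cycleGraph 4) : ℚ) = (m + 1) / 6 ↔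
      Nonempty (G ≃g diamondGraph) ∨ MemG G 4 := by
  classical
  have hq : (isolNum G (cycleGraph 4) : ℚ) = (m + 1) / 6 ↔
      6 * isolNum G (cycleGraph 4) = m + 1 := by
    rw [eq_div_iff (by norm_num), mul_comm]
    exact_mod_cast Iff.rfl
  rw [hq]
  have hpe : pe G Finset.univ Finset.univ = 2 * m := by rw [hm]; exact pe_univ G
  have hC := conn_univ hconn
  have hd := dichotomy Finset.univ hC (fun h => hne (iso_of_isC4 h))
  have hle : 6 * isolNum G (cycleGraph 4) ≤ m + 1 := by
    obtain ⟨D, hk, hc⟩ := bound_of hC.1 hd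
    have := isolNum_le hk
    omega
  constructor
  · intro heq
    rcases hd with ⟨D, hk, hc⟩ | h | ⟨R, h⟩
    · have := isolNum_le hk
      omega
    · exact Or.inl (iso_of_isDia h)
    · exact Or.inr (memG_of_isCons hconn h)
  · rintro (⟨⟨f⟩⟩ | ⟨n, T, hT, ⟨f⟩⟩)
    · have h1 := pe_iso f
      have h2 := one_le_isolNum_of_diamond f
      rw [pe_diamond] at h1
      omega
    · have h1 := pe_iso f
      have h2 := card_le_isolNum f
      have h3 := (SimpleGraph.isTree_iff_connected_and_card.mp hT).2
      rw [Nat.card_eq_fintype_card, ← SimpleGraph.edgeFinset_card, Nat.card_eq_fintype_card,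
        Fintype.card_fin] at h3
      rw [pe_consGraph, pe_univ T, Fintype.card_fin] at h1
      omega
end

section
/- For any integer k ≥ 3, if G ∈ 𝒢_k (i.e., G is isomorphic to cons(T, C_k) for some tree T) and G has m edges, then ι(G, C_k) = (m + 1)/(k + 2). -/
/-!
Write `n` for the order of the tree `T`. Counting edges of `cons(T, C_k)` by degrees gives
`(n - 1) + n + n * k = n * (k + 2) - 1` (`card_edgeFinset_consGraph`), so the claim is that the
isolation number equals `n`. The vertices of `T` form an isolating set, because what they leave
uncovered is a disjoint union of paths with `k - 1` vertices each
(`isIsolating_range_inl`). Conversely, the closed neighbourhood of the cycle attached to a tree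
vertex `a` lies in the block formed by `a` and that cycle, so an isolating set has to meet each
of the `n` disjoint blocks (`le_ncard_of_isIsolating`).
-/

open SimpleGraph

/-- Isolating sets are carried to isolating sets by graph isomorphisms. -/
lemma IsIsolating.image_iso {V V' W : Type*} {G : SimpleGraph V} {G' : SimpleGraph V'}
    {H : SimpleGraph W} (e : G ≃g G') {D : Set V} (hD : IsIsolating G H D) :
    IsIsolating G' H (e '' D) := by
  rintro ⟨f, hf⟩
  refine hD ⟨⟨fun w => ⟨e.symm (f w).1, ?_⟩, ?_⟩, ?_⟩
  · intro h
    apply (f w).2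
    rcases h with h | ⟨u, hu, h⟩
    · exact Or.inl ⟨_, h, e.apply_symm_apply _⟩
    · refine Or.inr ⟨e u, ⟨u, hu, rfl⟩, ?_⟩
      simpa using e.map_adj_iff.2 h
  · intro a b hab
    exact e.symm.map_adj_iff.2 (f.map_adj hab)
  · intro a b hab
    apply hf
    apply Subtype.ext
    exact e.symm.injective (congrArg Subtype.val hab)

lemma degree_eq_sum_ite {β : Type*} [Fintype β] (H : SimpleGraph β) [DecidableRel H.Adj]
    (x : β) :
    H.degree x = ∑ y, if H.Adj x y then 1 else 0 := by
  rw [← card_neighborFinset_eq_degree, neighborFinset_eq_filter, Finset.card_filter]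

section consGraph

variable {α : Type*} {T : SimpleGraph α} {k : ℕ}

@[simp] lemma consGraph_adj_inl_inl (a b : α) :
    (consGraph T k).Adj (Sum.inl a) (Sum.inl b) ↔ T.Adj a b := by
  simp only [consGraph, SimpleGraph.fromRel_adj, T.adj_comm b a, or_self, ne_eq,
    Sum.inl.injEq, and_iff_right_iff_imp]
  exact fun h => h.ne

@[simp] lemma consGraph_adj_inl_inr (a : α) (p : α × Fin k) :
    (consGraph T k).Adj (Sum.inl a) (Sum.inr p) ↔ a = p.1 ∧ p.2.val = 0 := by
  simp [consGraph]

@[simp] lemma consGraph_adj_inr_inl (p : α × Fin k) (a : α) :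
    (consGraph T k).Adj (Sum.inr p) (Sum.inl a) ↔ a = p.1 ∧ p.2.val = 0 := by
  simp [consGraph]

@[simp] lemma consGraph_adj_inr_inr (p q : α × Fin k) :
    (consGraph T k).Adj (Sum.inr p) (Sum.inr q) ↔
      p.1 = q.1 ∧ (cycleGraph k).Adj p.2 q.2 := by
  simp only [consGraph, SimpleGraph.fromRel_adj, (cycleGraph k).adj_comm q.2 p.2,
    eq_comm (a := q.1), or_self, ne_eq, Sum.inr.injEq, and_iff_right_iff_imp]
  rintro ⟨-, h⟩ rfl
  exact h.ne rfl

/-- A copy of `C_k` avoiding `N[V(T)]` would be a copy inside one attached cycle, hence would use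
all `k` of its vertices, including the one joined to `T`. -/
lemma isIsolating_range_inl (hk : 3 ≤ k) :
    IsIsolating (consGraph T k) (cycleGraph k) (Set.range Sum.inl) := by
  rintro ⟨f, hf⟩
  have hout : ∀ i, ∃ p : α × Fin k, (f i).1 = Sum.inr p ∧ p.2.val ≠ 0 := by
    intro i
    have h := (f i).2
    rcases hx : (f i).1 with a | p
    · exact absurd (Or.inl ⟨a, hx.symm⟩) h
    · refine ⟨p, rfl, fun h0 => h (Or.inr ⟨Sum.inl p.1, ⟨_, rfl⟩, ?_⟩)⟩
      rw [hx]
      simp [h0]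
  choose g hg hg0 using hout
  have hadj : ∀ i j, (cycleGraph k).Adj i j → (g i).1 = (g j).1 := by
    intro i j hij
    have h : (consGraph T k).Adj (f i).1 (f j).1 := f.map_adj hij
    rw [hg, hg, consGraph_adj_inr_inr] at h
    exact h.1
  have hconst : ∀ i j, (g i).1 = (g j).1 := by
    intro i j
    obtain ⟨w⟩ := cycleGraph_preconnected i j
    induction w with
    | nil => rfl
    | cons h _ ih => exact (hadj _ _ h).trans ih
  have hinj : Function.Injective fun i => (g i).2 := by
    intro i j hij
    apply hf
    apply Subtype.ext
    rw [hg, hg, Prod.ext (hconst i j) hij]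
  obtain ⟨i, hi⟩ := Finite.surjective_of_injective hinj ⟨0, by omega⟩
  exact hg0 i (congrArg Fin.val hi)

/-- The tree vertex whose block (itself together with its attached cycle) contains `x`. -/
def blockOf : α ⊕ α × Fin k → α := Sum.elim id Prod.fst

lemma exists_mem_blockOf_eq {D : Set (α ⊕ α × Fin k)}
    (hD : IsIsolating (consGraph T k) (cycleGraph k) D) (a : α) : ∃ x ∈ D, blockOf x = a := by
  by_contra! hno
  refine hD ⟨⟨fun i => ⟨Sum.inr (a, i), ?_⟩, ?_⟩, ?_⟩
  · rintro (h | ⟨b | p, hu, h⟩)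
    · exact hno _ h rfl
    · exact hno _ hu ((consGraph_adj_inl_inr _ _).1 h).1
    · exact hno _ hu ((consGraph_adj_inr_inr _ _).1 h).1
  · intro i j hij
    exact (consGraph_adj_inr_inr (T := T) (a, i) (a, j)).2 ⟨rfl, hij⟩
  · intro i j hij
    exact congrArg Prod.snd (Sum.inr_injective (congrArg Subtype.val hij))

lemma le_ncard_of_isIsolating [Finite α] {D : Set (α ⊕ α × Fin k)}
    (hD : IsIsolating (consGraph T k) (cycleGraph k) D) : Nat.card α ≤ D.ncard := by
  have h : blockOf '' D = Set.univ :=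
    Set.eq_univ_of_forall fun a => exists_mem_blockOf_eq hD a
  rw [← Set.ncard_univ, ← h]
  exact Set.ncard_image_le D.toFinite

open Classical in
/-- The handshake lemma with degrees `deg_T a + 1` on the tree and `2`, plus `1` for the
attaching vertex, on the cycles. -/
lemma card_edgeFinset_consGraph [Fintype α] (hT : T.IsTree) (hk : 3 ≤ k) :
    (consGraph T k).edgeFinset.card + 1 = Fintype.card α * (k + 2) := by
  obtain ⟨l, rfl⟩ : ∃ l, k = l + 3 := ⟨k - 3, by omega⟩
  have h1 := hT.card_edgeFinset
  have h2 := T.sum_degrees_eq_twice_card_edges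
  have h3 := (consGraph T (l + 3)).sum_degrees_eq_twice_card_edges
  have hval : ∀ i : Fin (l + 3), i.val = 0 ↔ i = 0 := fun i => Fin.val_eq_zero_iff
  have hl : ∀ a, (consGraph T (l + 3)).degree (Sum.inl a) = T.degree a + 1 := by
    intro a
    rw [degree_eq_sum_ite, Fintype.sum_sum_type, degree_eq_sum_ite T, Fintype.sum_prod_type]
    simp [hval, ite_and]
  have hr : ∀ (a : α) (i : Fin (l + 3)),
      (consGraph T (l + 3)).degree (Sum.inr (a, i)) = (if i = 0 then 1 else 0) + 2 := by
    intro a i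
    have hc : (cycleGraph (l + 3)).degree i = 2 := by
      convert cycleGraph_degree_three_le (n := l) (v := i)
    rw [degree_eq_sum_ite] at hc
    rw [degree_eq_sum_ite, Fintype.sum_sum_type, Fintype.sum_prod_type]
    simp only [consGraph_adj_inr_inl, consGraph_adj_inr_inr, hval, ite_and,
      Finset.sum_ite_eq', Finset.mem_univ, if_true]
    congr 1
    rw [Finset.sum_comm]
    simpa using hc
  rw [Fintype.sum_sum_type, Fintype.sum_prod_type] at h3
  simp only [hl, hr, Finset.sum_add_distrib, h2, Finset.sum_ite_eq', Finset.sum_const,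
    Finset.card_univ, Fintype.card_fin, Finset.mem_univ, if_true, smul_eq_mul] at h3
  nlinarith

end consGraph

theorem stmt2 {V : Type*} [Fintype V] (G : SimpleGraph V) [DecidableRel G.Adj]
    (k : ℕ) (hk : 3 ≤ k) (hG : MemG G k) (m : ℕ) (hm : m = G.edgeFinset.card) :
    (isolNum G (cycleGraph k) : ℚ) = (m + 1) / (k + 2) := by
  classical
  obtain ⟨n, T, hT, ⟨e⟩⟩ := hG
  have hiso : isolNum G (cycleGraph k) = n := by
    have hup : ∃ D : Set V, IsIsolating G (cycleGraph k) D ∧ D.ncard = n := by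
      refine ⟨_, (isIsolating_range_inl (T := T) hk).image_iso e.symm, ?_⟩
      rw [Set.ncard_image_of_injective _ e.symm.injective, ← Set.image_univ,
        Set.ncard_image_of_injective _ Sum.inl_injective, Set.ncard_univ, Nat.card_fin]
    refine le_antisymm (Nat.sInf_le hup) (le_csInf ⟨n, hup⟩ ?_)
    rintro _ ⟨D, hD, rfl⟩
    have h := le_ncard_of_isIsolating (hD.image_iso e)
    rwa [Nat.card_fin, Set.ncard_image_of_injective _ e.injective] at h
  have hedges : m + 1 = n * (k + 2) := by
    have h := card_edgeFinset_consGraph hT hk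
    rw [Fintype.card_fin] at h
    rw [hm, ← h]
    congr 1
    convert e.card_edgeFinset_eq
  rw [hiso, eq_div_iff (by positivity)]
  exact_mod_cast hedges.symm
end

section
/- Let G be a graph and S ⊆ V(G). Suppose the induced subgraph G[S] has a C_4-isolating set D such that for every connected component H of G[S] − N[D] (closed neighbourhood taken in G[S]), the number of edges of G with one endpoint in V(H) and the other endpoint in V(G) ∖ S is at most 1. Then ι(G, C_4) ≤ |D| + ι(G − S, C_4), where G − S is the subgraph induced on V(G) ∖ S. -/
/-!
Let `D'` be an optimal `C₄`-isolating set of `G - S`; then `D ∪ D'` is `C₄`-isolating in `G`.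
A `4`-cycle avoiding `N[D ∪ D']` cannot lie inside `S` (as `D` isolates `G[S]`), nor outside `S`
(as `D'` isolates `G - S`). So, going around the cycle, some maximal run of consecutive vertices
lies in `S` and is entered and left through vertices outside `S`. The run lies in a single
component of `G[S] - N[D]`, and the entering and leaving edges are two different edges from that
component to `V(G) ∖ S`: for a run with one vertex they have different outer ends, and otherwise
different inner ends. This contradicts the hypothesis on components.
-/

open SimpleGraph

/-- A copy of `C₄` is the same thing as four distinct, cyclically adjacent vertices. -/
lemma hasCopy_C4_iff {V : Type*} (G : SimpleGraph V) :
    HasCopy (cycleGraph 4) G ↔ ∃ f : Fin 4 → V, Function.Injective f ∧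
      G.Adj (f 0) (f 1) ∧ G.Adj (f 1) (f 2) ∧ G.Adj (f 2) (f 3) ∧ G.Adj (f 3) (f 0) := by
  constructor
  · rintro ⟨f, hf⟩
    exact ⟨f, hf, f.map_adj (by decide), f.map_adj (by decide), f.map_adj (by decide),
      f.map_adj (by decide)⟩
  · rintro ⟨f, hf, h01, h12, h23, h30⟩
    refine ⟨⟨f, ?_⟩, hf⟩
    intro i j hij
    fin_cases i <;> fin_cases j <;>
      first
      | exact absurd hij (by decide)
      | assumption
      | (apply SimpleGraph.Adj.symm; assumption)

lemma isIsolating_univ {V W : Type*} [Nonempty W] (G : SimpleGraph V) (H : SimpleGraph W) :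
    IsIsolating G H Set.univ := by
  rintro ⟨f, -⟩
  obtain ⟨w⟩ := ‹Nonempty W›
  exact (f w).2 (Or.inl trivial)

lemma isolNum_le_s3 {V W : Type*} {G : SimpleGraph V} {H : SimpleGraph W} {D : Set V}
    (h : IsIsolating G H D) : isolNum G H ≤ D.ncard :=
  Nat.sInf_le ⟨D, h, rfl⟩

lemma exists_isIsolating_ncard {V W : Type*} [Nonempty W] (G : SimpleGraph V)
    (H : SimpleGraph W) : ∃ D : Set V, IsIsolating G H D ∧ D.ncard = isolNum G H :=
  Nat.sInf_mem (s := {n | ∃ D : Set V, IsIsolating G H D ∧ D.ncard = n})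
    ⟨_, Set.univ, isIsolating_univ G H, rfl⟩

/-- If every component of `G[T]` sends at most one edge to the complement of `S`, then two such
edges whose inner ends are connected within `T` coincide. -/
lemma crossing_edge_unique {V : Type*} [Fintype V] {G : SimpleGraph V} {S T : Set V}
    (hcomp : ∀ c : (G.induce T).ConnectedComponent,
      {p : V × V | p.1 ∈ Subtype.val '' c.supp ∧ p.2 ∈ Sᶜ ∧ G.Adj p.1 p.2}.ncard ≤ 1)
    {x y x' y' : V} (hx : x ∈ T) (hy : y ∈ T)
    (hr : (G.induce T).Reachable ⟨x, hx⟩ ⟨y, hy⟩)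
    (hx' : x' ∉ S) (hy' : y' ∉ S) (hxx : G.Adj x x') (hyy : G.Adj y y') :
    x = y ∧ x' = y' := by
  have h := (Set.ncard_le_one (Set.toFinite _)).1
    (hcomp ((G.induce T).connectedComponentMk ⟨y, hy⟩)) (x, x')
    ⟨⟨⟨x, hx⟩, ConnectedComponent.eq.2 hr, rfl⟩, hx', hxx⟩ (y, y')
    ⟨⟨⟨y, hy⟩, rfl, rfl⟩, hy', hyy⟩
  exact Prod.ext_iff.1 h

/-- If every component of `G[T]` sends at most one edge to the complement of `S`, then a closed
walk `a b c d a` whose vertices in `S` lie in `T` cannot step from `d` outside `S` to `a` in `S`,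
provided the opposite vertices of the walk are different. -/
lemma no_crossing {V : Type*} [Fintype V] {G : SimpleGraph V} {S T : Set V}
    (hcomp : ∀ c : (G.induce T).ConnectedComponent,
      {p : V × V | p.1 ∈ Subtype.val '' c.supp ∧ p.2 ∈ Sᶜ ∧ G.Adj p.1 p.2}.ncard ≤ 1)
    {a b c d : V} (hab : G.Adj a b) (hbc : G.Adj b c) (hcd : G.Adj c d) (hda : G.Adj d a)
    (hac : a ≠ c) (hbd : b ≠ d)
    (hTa : a ∈ S → a ∈ T) (hTb : b ∈ S → b ∈ T) (hTc : c ∈ S → c ∈ T)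
    (ha : a ∈ S) (hd : d ∉ S) : False := by
  by_cases hb : b ∈ S
  · have rab : (G.induce T).Reachable ⟨a, hTa ha⟩ ⟨b, hTb hb⟩ :=
      SimpleGraph.Adj.reachable (by simpa using hab)
    by_cases hc : c ∈ S
    · have rbc : (G.induce T).Reachable ⟨b, hTb hb⟩ ⟨c, hTc hc⟩ :=
        SimpleGraph.Adj.reachable (by simpa using hbc)
      exact hac (crossing_edge_unique hcomp _ _ (rab.trans rbc) hd hd hda.symm hcd).1
    · exact hab.ne (crossing_edge_unique hcomp _ _ rab hd hc hda.symm hbc).1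
  · exact hbd (crossing_edge_unique hcomp (hTa ha) (hTa ha) (Reachable.refl _) hb hd hab
      hda.symm).2

theorem stmt3 {V : Type*} [Fintype V] (G : SimpleGraph V) (S D : Set V) (hDS : D ⊆ S)
    (hiso : IsIsolating (G.induce S) (cycleGraph 4) (Subtype.val ⁻¹' D))
    (hcomp : ∀ c : (G.induce (S \ Subtype.val '' closedNbhd (G.induce S)
        (Subtype.val ⁻¹' D))).ConnectedComponent,
      {p : V × V | p.1 ∈ Subtype.val '' c.supp ∧ p.2 ∈ Sᶜ ∧ G.Adj p.1 p.2}.ncard ≤ 1) :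
    isolNum G (cycleGraph 4) ≤ D.ncard + isolNum (G.induce Sᶜ) (cycleGraph 4) := by
  classical
  obtain ⟨D', hD', hcard⟩ := exists_isIsolating_ncard (G.induce Sᶜ) (cycleGraph 4)
  suffices h : IsIsolating G (cycleGraph 4) (D ∪ Subtype.val '' D') by
    refine (isolNum_le_s3 h).trans ((Set.ncard_union_le _ _).trans ?_)
    rw [← hcard, Set.ncard_image_of_injective _ Subtype.val_injective]
  intro hcopy
  obtain ⟨f, hf, h01, h12, h23, h30⟩ := (hasCopy_C4_iff _).1 hcopy
  simp only [SimpleGraph.comap_adj, Function.Embedding.subtype_apply] at h01 h12 h23 h30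
  have hne : ∀ {i j}, i ≠ j → (f i : V) ≠ f j := fun hij h => hij (hf (Subtype.ext h))
  have hin : ∀ i (hi : (f i : V) ∈ S),
      (⟨f i, hi⟩ : S) ∉ closedNbhd (G.induce S) (Subtype.val ⁻¹' D) := by
    rintro i hi (h | ⟨u, hu, huv⟩)
    · exact (f i).2 (Or.inl (Or.inl h))
    · exact (f i).2 (Or.inr ⟨u, Or.inl hu, huv⟩)
  have hout : ∀ i (hi : (f i : V) ∈ Sᶜ),
      (⟨f i, hi⟩ : ↥Sᶜ) ∉ closedNbhd (G.induce Sᶜ) D' := by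
    rintro i hi (h | ⟨u, hu, huv⟩)
    · exact (f i).2 (Or.inl (Or.inr ⟨_, h, rfl⟩))
    · exact (f i).2 (Or.inr ⟨u, Or.inr ⟨u, hu, rfl⟩, huv⟩)
  have hT : ∀ i, (f i : V) ∈ S → (f i : V) ∈ S \ Subtype.val '' closedNbhd (G.induce S)
      (Subtype.val ⁻¹' D) := by
    refine fun i hi => ⟨hi, ?_⟩
    rintro ⟨u, hu, huv⟩
    have hfu : u = ⟨f i, hi⟩ := Subtype.ext huv
    exact hin i hi (hfu ▸ hu)
  -- No step of the cycle enters `S`, so membership in `S` is constant along the cycle.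
  have n0 := no_crossing hcomp h01 h12 h23 h30 (hne (by decide)) (hne (by decide))
    (hT 0) (hT 1) (hT 2)
  have n1 := no_crossing hcomp h12 h23 h30 h01 (hne (by decide)) (hne (by decide))
    (hT 1) (hT 2) (hT 3)
  have n2 := no_crossing hcomp h23 h30 h01 h12 (hne (by decide)) (hne (by decide))
    (hT 2) (hT 3) (hT 0)
  have n3 := no_crossing hcomp h30 h01 h12 h23 (hne (by decide)) (hne (by decide))
    (hT 3) (hT 0) (hT 1)
  by_cases h0 : (f 0 : V) ∈ S
  · have hS : ∀ i, (f i : V) ∈ S := by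
      intro i; fin_cases i <;> simp only [Fin.zero_eta, Fin.mk_one, Fin.reduceFinMk] <;> tauto
    exact hiso ((hasCopy_C4_iff _).2 ⟨fun i => ⟨⟨f i, hS i⟩, hin i (hS i)⟩,
      fun i j hij => by
        by_contra hc
        exact hne hc (congrArg (fun z => (z.1 : V)) hij), h01, h12, h23, h30⟩)
  · have hS : ∀ i, (f i : V) ∈ Sᶜ := by
      intro i
      rw [Set.mem_compl_iff]
      fin_cases i <;> simp only [Fin.zero_eta, Fin.mk_one, Fin.reduceFinMk] <;> tauto
    exact hD' ((hasCopy_C4_iff _).2 ⟨fun i => ⟨⟨f i, hS i⟩, hout i (hS i)⟩,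
      fun i j hij => by
        by_contra hc
        exact hne hc (congrArg (fun z => (z.1 : V)) hij), h01, h12, h23, h30⟩)
end
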